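/- arXiv:1802.00085 — 3 statements merged into one kernel-verified Lean document; each statement's English description precedes it below -/
import Mathlib

section
/- Let q ≥ 3 be an integer and let a be an integer coprime to q. Let c > 0 and X ≥ 14735 be real numbers such that c·φ(q) < 1 and such that |π(x;q,a) − Li(x)/φ(q)| < c·x/(log x)² holds for all real x ≥ X. Then for all real x > X, x/(φ(q)·log x) < π(x;q,a) < (x/(φ(q)·log x))·(1 + 5/(2·log x)). -/
/-- `π(x;q,a) = #{p ≤ x : p prime, p ≡ a (mod q)}`. -/
noncomputable def primesPi (x : ℝ) (q : ℕ) (a : ℤ) : ℕ :=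
  ((Finset.Icc 1 ⌊x⌋₊).filter (fun p : ℕ => p.Prime ∧ (p : ZMod q) = (a : ZMod q))).card

/-- `Li(x) = ∫₂ˣ dt / log t`, the logarithmic integral. -/
noncomputable def Li (x : ℝ) : ℝ := ∫ t in (2 : ℝ)..x, 1 / Real.log t

open Real

theorem hasDerivAt_Li {x : ℝ} (hx : 2 ≤ x) : HasDerivAt Li (1 / log x) x := by
  have hcont : ∀ t : ℝ, 2 ≤ t → ContinuousAt (fun t : ℝ => 1 / log t) t := fun t ht =>
    continuousAt_const.div (continuousAt_log (by linarith)) (log_pos (by linarith)).ne'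
  refine intervalIntegral.integral_hasDerivAt_right ?_ ?_ (hcont x hx)
  · refine ContinuousOn.intervalIntegrable fun t ht => (hcont t ?_).continuousWithinAt
    rw [Set.uIcc_of_le hx] at ht
    exact ht.1
  · exact (measurable_const.div measurable_log).stronglyMeasurable.stronglyMeasurableAtFilter

theorem hasDerivAt_div_log {x : ℝ} (hx : 2 ≤ x) :
    HasDerivAt (fun t : ℝ => t / log t) (1 / log x - 1 / log x ^ 2) x := by
  have hl : log x ≠ 0 := (log_pos (by linarith)).ne'
  have hx0 : x ≠ 0 := by linarith
  refine ((hasDerivAt_id x).div (hasDerivAt_log hx0) hl).congr_deriv ?_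
  simp only [id]
  field_simp

theorem hasDerivAt_div_log_sq {x : ℝ} (hx : 2 ≤ x) :
    HasDerivAt (fun t : ℝ => t / log t ^ 2) (1 / log x ^ 2 - 2 / log x ^ 3) x := by
  have hl : log x ≠ 0 := (log_pos (by linarith)).ne'
  have hx0 : x ≠ 0 := by linarith
  refine ((hasDerivAt_id x).div ((hasDerivAt_log hx0).pow 2) (pow_ne_zero 2 hl)).congr_deriv ?_
  simp only [id, Pi.pow_apply]
  field_simp
  push_cast
  ring

/-- A lower bound for the derivative gives a lower bound for the increment. -/
theorem mul_sub_le_sub_of_hasDerivAt {f f' : ℝ → ℝ} {a b C : ℝ} (hab : a ≤ b)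
    (hf : ∀ t, a ≤ t → HasDerivAt f (f' t) t) (hC : ∀ t, a ≤ t → t ≤ b → C ≤ f' t) :
    C * (b - a) ≤ f b - f a := by
  refine (convex_Icc a b).mul_sub_le_image_sub_of_le_deriv
    (fun t ht => (hf t ht.1).continuousAt.continuousWithinAt)
    (fun t ht => ?_) (fun t ht => ?_) a ⟨le_rfl, hab⟩ b ⟨hab, le_rfl⟩ hab
  · exact (hf t (interior_subset ht).1).differentiableAt.differentiableWithinAt
  · rw [(hf t (interior_subset ht).1).deriv]
    exact hC t (interior_subset ht).1 (interior_subset ht).2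

theorem log_14735_le : log 14735 ≤ 10 := by
  have h : log 14735 ≤ log ((2 : ℝ) ^ 14) := log_le_log (by norm_num) (by norm_num)
  rw [log_pow] at h
  have := log_two_lt_d9
  push_cast at h
  linarith

theorem div_log_add_le_Li {x : ℝ} (hx : 14735 ≤ x) :
    x / log x + x / log x ^ 2 ≤ Li x := by
  set D : ℝ → ℝ := fun t => Li t - (t / log t + t / log t ^ 2) with hD
  have hderiv : ∀ t : ℝ, 2 ≤ t → HasDerivAt D (2 / log t ^ 3) t := fun t ht => by
    refine ((hasDerivAt_Li ht).sub
      ((hasDerivAt_div_log ht).add (hasDerivAt_div_log_sq ht))).congr_deriv ?_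
    ring
  have h1 : 2 / 10 ^ 3 * (14735 - 2) ≤ D 14735 - D 2 := by
    refine mul_sub_le_sub_of_hasDerivAt (by norm_num) hderiv fun t ht1 ht2 => ?_
    have hl : 0 < log t := log_pos (by linarith)
    have hl' : log t ≤ 10 := (log_le_log (by linarith) ht2).trans log_14735_le
    gcongr
  have h2 : 0 * (x - 14735) ≤ D x - D 14735 := by
    refine mul_sub_le_sub_of_hasDerivAt hx (fun t ht => hderiv t (by linarith)) fun t ht1 _ => ?_
    have hl : 0 < log t := log_pos (by linarith)
    positivity
  have h3 : -9 ≤ D 2 := by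
    have hlog := log_two_gt_d9
    have e1 : 2 / log 2 ≤ 2 / 0.69 := by gcongr; linarith
    have e2 : 2 / log 2 ^ 2 ≤ 2 / 0.69 ^ 2 := by gcongr; linarith
    simp only [hD, Li, intervalIntegral.integral_same]
    norm_num at e1 e2 ⊢
    linarith
  have h4 : 0 ≤ D x := by linarith
  simp only [hD] at h4
  linarith

/-- The bound of `1 / (2 L ^ 2) - 3 / L ^ 3` from below by its value at a smaller point. -/
theorem half_div_sq_sub_three_div_cube_le {m L : ℝ} (hm : 0 < m) (hmL : m ≤ L) (hm' : m ≤ 8.5)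
    (hL : L ≤ 9.1) : 1 / 2 / m ^ 2 - 3 / m ^ 3 ≤ 1 / 2 / L ^ 2 - 3 / L ^ 3 := by
  have hLpos : 0 < L := hm.trans_le hmL
  have hu : 1 / 9.1 ≤ L⁻¹ := by rw [one_div]; gcongr
  have hv : 1 / 8.5 ≤ m⁻¹ := by rw [one_div]; gcongr
  have huv : L⁻¹ ≤ m⁻¹ := by gcongr
  simp only [div_eq_mul_inv _ (_ ^ _), ← inv_pow]
  generalize L⁻¹ = u at *
  generalize m⁻¹ = v at *
  have hs : 2 / 9 ≤ u + v := by norm_num at hu hv; linarith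
  have : 0 ≤ 3 * (u ^ 2 + u * v + v ^ 2) - 1 / 2 * (u + v) := by
    nlinarith [sq_nonneg (u - v), mul_nonneg (sub_nonneg.2 hs) (by linarith : 0 ≤ u + v)]
  nlinarith [mul_nonneg (sub_nonneg.2 huv) this]

theorem Li_le_div_log_add {x : ℝ} (hx : 14735 ≤ x) :
    Li x ≤ x / log x + 3 / 2 * (x / log x ^ 2) := by
  set E : ℝ → ℝ := fun t => t / log t + 3 / 2 * (t / log t ^ 2) - Li t with hE
  have hderiv : ∀ t : ℝ, 2 ≤ t → HasDerivAt E (1 / 2 / log t ^ 2 - 3 / log t ^ 3) t :=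
    fun t ht => by
      refine (((hasDerivAt_div_log ht).add ((hasDerivAt_div_log_sq ht).const_mul (3 / 2))).sub
        (hasDerivAt_Li ht)).congr_deriv ?_
      ring
  have hl1 := log_two_gt_d9
  have hl2 := log_two_lt_d9
  have dyadic : ∀ k : ℕ, 1 ≤ k → k ≤ 12 →
      (1 / 2 / k ^ 2 * (log 2)⁻¹ ^ 2 - 3 / k ^ 3 * (log 2)⁻¹ ^ 3) * 2 ^ k ≤ E (2 ^ (k + 1)) - E (2 ^ k) := by
    intro k hk1 hk2
    have hk1' : (1 : ℝ) ≤ k := by exact_mod_cast hk1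
    have hk2' : (k : ℝ) ≤ 12 := by exact_mod_cast hk2
    have h2k : (2 : ℝ) ≤ 2 ^ k := by simpa using pow_le_pow_right₀ (one_le_two (α := ℝ)) hk1
    have h := mul_sub_le_sub_of_hasDerivAt (f := E) (a := 2 ^ k) (b := 2 ^ (k + 1))
      (C := 1 / 2 / (k * log 2) ^ 2 - 3 / (k * log 2) ^ 3) (by gcongr <;> norm_num)
      (fun t ht => hderiv t (h2k.trans ht)) (fun t ht1 ht2 => ?_)
    · convert h using 1
      field_simp
      ring
    · have e1 := log_le_log (by positivity) ht1
      have e2 := log_le_log (by linarith) ht2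
      rw [log_pow] at e1 e2
      push_cast at e2
      refine half_div_sq_sub_three_div_cube_le (by positivity) e1 ?_ ?_
      · norm_num; nlinarith
      · norm_num; nlinarith
  have hlast : 2 / 1000 * (14735 - 2 ^ 13) ≤ E 14735 - E (2 ^ 13) := by
    refine mul_sub_le_sub_of_hasDerivAt (by norm_num)
      (fun t ht => hderiv t (by norm_num at ht; linarith)) fun t ht1 ht2 => ?_
    have e1 := log_le_log (by norm_num) ht1
    rw [log_pow] at e1
    push_cast at e1
    have e2 : log t ≤ 10 := by
      refine (log_le_log ?_ ht2).trans log_14735_le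
      norm_num at ht1
      linarith
    have hpos : 0 < log t := by linarith
    have hu : 1 / 10 ≤ (log t)⁻¹ := by rw [one_div]; gcongr
    have hv : (log t)⁻¹ ≤ 1 / 9 := by rw [one_div]; gcongr; linarith
    simp only [div_eq_mul_inv _ (_ ^ _), ← inv_pow]
    generalize (log t)⁻¹ = u at *
    nlinarith [mul_nonneg (sub_nonneg.2 hu) (sub_nonneg.2 hv),
      mul_nonneg (mul_nonneg (sub_nonneg.2 hu) (sub_nonneg.2 hv)) (by linarith : 0 ≤ u)]
  have htail : 0 * (x - 14735) ≤ E x - E 14735 := by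
    refine mul_sub_le_sub_of_hasDerivAt hx (fun t ht => hderiv t (by linarith)) fun t ht1 _ => ?_
    have e1 : log ((2 : ℝ) ^ 13) ≤ log t := log_le_log (by norm_num) (by norm_num; linarith)
    rw [log_pow] at e1
    push_cast at e1
    have hpos : 0 < log t := by linarith
    rw [show 1 / 2 / log t ^ 2 - 3 / log t ^ 3 = (log t - 6) / (2 * log t ^ 3) by
      field_simp; norm_num]
    exact div_nonneg (by linarith) (by positivity)
  have hstart : E 2 = 2 * (log 2)⁻¹ + 3 * (log 2)⁻¹ ^ 2 := by
    simp only [hE, Li, intervalIntegral.integral_same]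
    field_simp
    ring
  have hmain : 0 ≤ E 14735 := by
    have hu : 1.442 ≤ (log 2)⁻¹ := by
      rw [le_inv_comm₀ (by norm_num) (by linarith)]; norm_num; linarith
    have hv : (log 2)⁻¹ ≤ 1.443 := by
      rw [inv_le_comm₀ (by linarith) (by norm_num)]; norm_num; linarith
    have s1 := dyadic 1 (by norm_num) (by norm_num)
    have s2 := dyadic 2 (by norm_num) (by norm_num)
    have s3 := dyadic 3 (by norm_num) (by norm_num)
    have s4 := dyadic 4 (by norm_num) (by norm_num)
    have s5 := dyadic 5 (by norm_num) (by norm_num)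
    have s6 := dyadic 6 (by norm_num) (by norm_num)
    have s7 := dyadic 7 (by norm_num) (by norm_num)
    have s8 := dyadic 8 (by norm_num) (by norm_num)
    have s9 := dyadic 9 (by norm_num) (by norm_num)
    have s10 := dyadic 10 (by norm_num) (by norm_num)
    have s11 := dyadic 11 (by norm_num) (by norm_num)
    have s12 := dyadic 12 (by norm_num) (by norm_num)
    clear_value E
    generalize (log 2)⁻¹ = u at *
    have hu2 : 1.442 ^ 2 ≤ u ^ 2 := by gcongr
    have hu3 : u ^ 3 ≤ 1.443 ^ 3 := by gcongr
    norm_num at s1 s2 s3 s4 s5 s6 s7 s8 s9 s10 s11 s12 hu2 hu3 hu hlast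
    linarith
  have hfinal : 0 ≤ E x := by linarith
  simp only [hE] at hfinal
  linarith

theorem pi_sandwich (q : ℕ) (hq : 3 ≤ q) (a : ℤ) (ha : Int.gcd a q = 1)
    (c X : ℝ) (hc : 0 < c) (hX : 14735 ≤ X)
    (hcphi : c * (Nat.totient q : ℝ) < 1)
    (hbound : ∀ x : ℝ, X ≤ x →
      |(primesPi x q a : ℝ) - Li x / (Nat.totient q : ℝ)| < c * x / Real.log x ^ 2)
    (x : ℝ) (hx : X < x) :
    x / ((Nat.totient q : ℝ) * Real.log x) < (primesPi x q a : ℝ) ∧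
      (primesPi x q a : ℝ) <
        x / ((Nat.totient q : ℝ) * Real.log x) * (1 + 5 / (2 * Real.log x)) := by
  have hφ : (0 : ℝ) < Nat.totient q := by exact_mod_cast Nat.totient_pos.2 (by omega)
  have hx' : 14735 ≤ x := by linarith
  have hlog : 0 < log x := log_pos (by linarith)
  have hlow := div_log_add_le_Li hx'
  have hupp := Li_le_div_log_add hx'
  obtain ⟨h1, h2⟩ := abs_lt.1 (hbound x hx.le)
  generalize (primesPi x q a : ℝ) = P at *
  generalize (Nat.totient q : ℝ) = f at *
  have hw : 0 < x / log x ^ 2 := div_pos (by linarith) (by positivity)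
  have herr : c * x / log x ^ 2 < x / log x ^ 2 / f := by
    rw [lt_div_iff₀ hφ, mul_div_assoc]
    nlinarith
  have hlow' : (x / log x + x / log x ^ 2) / f ≤ Li x / f := by gcongr
  have hupp' : Li x / f ≤ (x / log x + 3 / 2 * (x / log x ^ 2)) / f := by gcongr
  constructor
  · have e : x / (f * log x) = (x / log x + x / log x ^ 2) / f - x / log x ^ 2 / f := by
      field_simp
      ring
    rw [e]
    linarith
  · have e : x / (f * log x) * (1 + 5 / (2 * log x)) =
        (x / log x + 3 / 2 * (x / log x ^ 2)) / f + x / log x ^ 2 / f := by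
      field_simp
      ring
    rw [e]
    linarith
end

section
/- Let q ≥ 3 be an integer and let χ be a nontrivial quadratic Dirichlet character modulo q. If β > 0 is a real number for which L(β,χ) = 0, then β ≤ 1 − 40/(√q·(log q)²). -/
section

open Real

/-- The theta-type sum `∑_{m ≥ 1} exp (-π m² P)`. -/
noncomputable def psi (P : ℝ) : ℝ := ∑' m : ℕ+, exp (-π * P * (m : ℝ) ^ 2)

theorem summable_exp_neg_mul_pnat {a : ℝ} (ha : 0 < a) :
    Summable fun m : ℕ+ => exp (-a * (m : ℝ)) := by
  have h : Summable fun m : ℕ => exp (m * (-a)) := Real.summable_exp_nat_mul_iff.2 (by linarith)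
  have := h.comp_injective PNat.coe_injective
  refine this.congr fun m => ?_
  simp [Function.comp, mul_comm]

theorem one_le_pnat_cast (m : ℕ+) : (1 : ℝ) ≤ (m : ℝ) := by exact_mod_cast m.pos

theorem pnat_cast_le_sq (m : ℕ+) : (m : ℝ) ≤ (m : ℝ) ^ 2 := by
  nlinarith [one_le_pnat_cast m]

theorem summable_exp_neg_mul_pnat_sq {a : ℝ} (ha : 0 < a) :
    Summable fun m : ℕ+ => exp (-a * (m : ℝ) ^ 2) := by
  refine Summable.of_nonneg_of_le (fun _ => (exp_pos _).le) (fun m => ?_)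
    (summable_exp_neg_mul_pnat ha)
  exact exp_le_exp.2 (by nlinarith [pnat_cast_le_sq m])

theorem summable_psi {P : ℝ} (hP : 0 < P) :
    Summable fun m : ℕ+ => exp (-π * P * (m : ℝ) ^ 2) := by
  refine (summable_exp_neg_mul_pnat_sq (mul_pos pi_pos hP)).congr fun m => ?_
  ring_nf

theorem psi_nonneg (P : ℝ) : 0 ≤ psi P := tsum_nonneg fun _ => (exp_pos _).le

theorem tsum_int_eq_one_add_two_mul_psi {P : ℝ} (hP : 0 < P) :
    ∑' n : ℤ, exp (-π * P * (n : ℝ) ^ 2) = 1 + 2 * psi P := by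
  have hs : Summable fun n : ℤ => exp (-π * P * (n : ℝ) ^ 2) := by
    refine (summable_pow_mul_jacobiTheta₂_term_bound 0 hP 0).congr fun n => ?_
    simp; ring_nf
  rw [tsum_int_eq_zero_add_two_mul_tsum_pnat (fun n => by simp) hs]
  simp [psi]

/-- The functional equation of `psi`, coming from Poisson summation. -/
theorem psi_functional_equation {P : ℝ} (hP : 0 < P) :
    1 + 2 * psi P = (√P)⁻¹ * (1 + 2 * psi (1 / P)) := by
  rw [← tsum_int_eq_one_add_two_mul_psi hP, ← tsum_int_eq_one_add_two_mul_psi (by positivity),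
    Real.tsum_exp_neg_mul_int_sq hP, sqrt_eq_rpow, one_div (P ^ _)]
  congr 2; ext n; congr 2; ring

theorem psi_le {P : ℝ} (hP : 1 ≤ P) : psi P ≤ 1.001 * exp (-π * P) := by
  have hr : exp (-π * P) ≤ 0.05 := by
    have h3 := exp_one_gt_d9
    have : exp (-3:ℝ) ≤ 0.05 := by
      rw [show (-3:ℝ) = -(3 * 1) by norm_num, exp_neg, show (3:ℝ) * 1 = ((3:ℕ):ℝ) * 1 by norm_num,
        exp_nat_mul]
      rw [inv_le_comm₀ (by positivity) (by norm_num)]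
      have : (2.718:ℝ)^3 ≤ exp 1 ^ 3 := by gcongr; linarith
      norm_num at this ⊢; linarith
    refine le_trans (exp_le_exp.2 ?_) this
    nlinarith [pi_gt_three]
  set r := exp (-π * P) with hrdef
  have hr0 : 0 < r := exp_pos _
  have hpt : ∀ m : ℕ, exp (-π * P * ((m.succPNat : ℕ+) : ℝ) ^ 2) ≤ r * (r ^ 3) ^ m := by
    intro m
    rw [hrdef, ← exp_nat_mul, ← exp_nat_mul, ← exp_add]
    refine exp_le_exp.2 ?_
    have : ((m.succPNat : ℕ+) : ℝ) = m + 1 := by simp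
    rw [this]
    have hm : (m:ℝ) ≤ m^2 := by exact_mod_cast Nat.le_self_pow two_ne_zero m
    have h4 : 0 < π * P := by positivity
    push_cast
    nlinarith
  have hg : HasSum (fun m : ℕ => r * (r ^ 3) ^ m) (r * (1 - r ^ 3)⁻¹) :=
    (hasSum_geometric_of_lt_one (by positivity)
      (by nlinarith [pow_le_pow_left₀ hr0.le hr 3])).mul_left _
  have he : psi P = ∑' m : ℕ, exp (-π * P * ((m.succPNat : ℕ+) : ℝ) ^ 2) :=
    (Equiv.pnatEquivNat.symm.tsum_eq (fun m : ℕ+ => exp (-π * P * (m : ℝ) ^ 2))).symm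
  rw [he]
  have hsum := (Equiv.pnatEquivNat.symm.summable_iff).2 (summable_psi (lt_of_lt_of_le one_pos hP))
  refine (hsum.tsum_le_tsum hpt hg.summable).trans ?_
  rw [hg.tsum_eq, mul_comm]
  gcongr
  have : r ^ 3 ≤ 0.05 ^ 3 := pow_le_pow_left₀ hr0.le hr 3
  rw [inv_le_comm₀ (by linarith) (by norm_num)]
  norm_num at this ⊢; linarith

end

section

open Real

theorem hasSum_pnat_inv_sq : HasSum (fun j : ℕ+ => 1 / (j : ℝ) ^ 2) (π ^ 2 / 6) := by
  have h := hasSum_zeta_two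
  exact (hasSum_subtype_iff_of_support_subset (f := fun n : ℕ => 1 / (n : ℝ) ^ 2)
    (s := {n : ℕ | 0 < n}) (by
      intro n hn
      have : n ≠ 0 := by rintro rfl; simp at hn
      exact Nat.pos_of_ne_zero this)).2 h

theorem summable_exp_div_sq {x : ℝ} (hx : 0 < x) :
    Summable fun j : ℕ+ => exp (-π * x * (j : ℝ) ^ 2) / (j : ℝ) ^ 2 := by
  refine Summable.of_nonneg_of_le (fun _ => by positivity) (fun j => ?_) hasSum_pnat_inv_sq.summable
  gcongr
  refine exp_le_one_iff.2 ?_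
  have : 0 ≤ π * x * (j : ℝ) ^ 2 := by positivity
  linarith

theorem tsum_exp_div_sq_le_zeta_two {x : ℝ} (hx : 0 < x) :
    ∑' j : ℕ+, exp (-π * x * (j : ℝ) ^ 2) / (j : ℝ) ^ 2 ≤ π ^ 2 / 6 := by
  rw [← hasSum_pnat_inv_sq.tsum_eq]
  refine (summable_exp_div_sq hx).tsum_le_tsum (fun j => ?_) hasSum_pnat_inv_sq.summable
  gcongr
  refine exp_le_one_iff.2 ?_
  have : 0 ≤ π * x * (j : ℝ) ^ 2 := by positivity
  linarith

theorem tsum_exp_div_sq_le {x u : ℝ} (hx : 0 < x) (hu : exp (-π * x) ≤ u) :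
    ∑' j : ℕ+, exp (-π * x * (j : ℝ) ^ 2) / (j : ℝ) ^ 2
      ≤ u + u ^ 4 / 4 + 0.395 * u ^ 9 := by
  have hu0 : 0 ≤ u := (exp_pos _).le.trans hu
  have hf := summable_exp_div_sq hx
  have hz := hasSum_pnat_inv_sq
  have hpow : ∀ k : ℕ, exp (-π * x * k) ≤ u ^ k := fun k => by
    rw [mul_comm, exp_nat_mul]; exact pow_le_pow_left₀ (exp_pos _).le hu k
  have h12 : (1 : ℕ+) ∉ ({2} : Finset ℕ+) := by decide
  rw [← hf.sum_add_tsum_compl (s := {1, 2})]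
  have hz' := hz.summable.sum_add_tsum_compl (s := {1, 2})
  rw [hz.tsum_eq] at hz'
  rw [Finset.sum_insert h12, Finset.sum_singleton] at hz' ⊢
  have ht : ∑' j : ↑((({1, 2} : Finset ℕ+) : Set ℕ+)ᶜ),
      exp (-π * x * ((j : ℕ+) : ℝ) ^ 2) / ((j : ℕ+) : ℝ) ^ 2
      ≤ u ^ 9 * ∑' j : ↑((({1, 2} : Finset ℕ+) : Set ℕ+)ᶜ), 1 / ((j : ℕ+) : ℝ) ^ 2 := by
    rw [← tsum_mul_left]
    refine Summable.tsum_le_tsum (fun j => ?_) (hf.subtype _)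
      ((hz.summable.subtype _).mul_left _)
    rw [mul_one_div]
    gcongr
    refine le_trans (exp_le_exp.2 ?_) (hpow 9)
    obtain ⟨j, hj⟩ := j
    have h3 : (3 : ℝ) ≤ (j : ℝ) := by
      simp only [Finset.coe_insert, Finset.coe_singleton, Set.mem_compl_iff,
        Set.mem_insert_iff, Set.mem_singleton_iff, not_or] at hj
      have h1 : (j : ℕ) ≠ 1 := fun h => hj.1 (PNat.eq (by simpa using h))
      have h2 : (j : ℕ) ≠ 2 := fun h => hj.2 (PNat.eq (by simpa using h))
      have := j.pos
      exact_mod_cast (by omega : 3 ≤ (j : ℕ))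
    have h0 : 0 < π * x := by positivity
    have h9 : (9 : ℝ) ≤ (j : ℝ) ^ 2 := by nlinarith
    have := mul_le_mul_of_nonneg_left h9 h0.le
    push_cast
    linarith
  have hpi : π ^ 2 / 6 ≤ 1.645 := by nlinarith [pi_lt_d4, pi_pos]
  have h1 := hpow 1
  have h4 := hpow 4
  have ht' : ∑' j : ↑((({1, 2} : Finset ℕ+) : Set ℕ+)ᶜ), 1 / ((j : ℕ+) : ℝ) ^ 2 ≤ 0.395 := by
    norm_num at hz' ⊢; linarith
  have := mul_le_mul_of_nonneg_left ht' (pow_nonneg hu0 9)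
  norm_num at h1 h4 ht this ⊢
  linarith

theorem exp_neg_le_inv_cubic {a b : ℝ} (ha : 0 ≤ a) (h : a ≤ b) :
    exp (-b) ≤ (1 + a + a ^ 2 / 2 + a ^ 3 / 6)⁻¹ := by
  rw [exp_neg]
  have := Real.sum_le_exp_of_nonneg ha 4
  simp only [Finset.sum_range_succ, Finset.sum_range_zero, Nat.factorial] at this
  norm_num at this
  gcongr
  exact this.trans (exp_le_exp.2 h)

theorem exp_two_add_le {a : ℝ} (h0 : 0 ≤ a) (h1 : a ≤ 1) :
    exp (2 + a) ≤ 2.7183 ^ 2 *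
      (∑ m ∈ Finset.range 5, a ^ m / m.factorial + a ^ 5 * (5 + 1) / (120 * 5)) := by
  have h := Real.exp_bound' h0 h1 (n := 5) (by norm_num)
  have h2 : exp 2 ≤ 2.7183 ^ 2 := by
    rw [show (2 : ℝ) = ((2 : ℕ) : ℝ) * 1 by norm_num, exp_nat_mul]
    gcongr
    linarith [exp_one_lt_d9]
  rw [exp_add]
  refine mul_le_mul h2 (h.trans_eq ?_) (exp_pos _).le (by norm_num)
  norm_num [Nat.factorial]

theorem half_sub_le_psi_sub {x : ℝ} (hx : 0 < x) :
    1 / 2 - 2 * √(1 / (2 * x)) * psi (1 / (2 * x)) ≤ psi (x / 2) - 2 * psi (2 * x) := by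
  have h1 := psi_functional_equation (P := x / 2) (by positivity)
  have h2 := psi_functional_equation (P := 2 * x) (by positivity)
  have h3 : (√(x / 2))⁻¹ = 2 * √(1 / (2 * x)) := by
    rw [← sqrt_inv, show (x / 2)⁻¹ = 2 ^ 2 * (1 / (2 * x)) by field_simp,
      sqrt_mul (by norm_num), sqrt_sq (by norm_num)]
  have h4 : (√(2 * x))⁻¹ = √(1 / (2 * x)) := by rw [← sqrt_inv, one_div]
  rw [h3] at h1
  rw [h4] at h2
  have := mul_nonneg (sqrt_nonneg (1 / (2 * x))) (psi_nonneg (1 / (x / 2)))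
  nlinarith

theorem sqrt_mul_psi_le {P P₀ : ℝ} (hP₀ : 1 ≤ P₀) (hP : P₀ ≤ P) :
    2 * √P * psi P ≤ 2.002 * exp (-(1 + 2.14 * P₀)) := by
  have h1 : √P ≤ exp (P - 1) := by
    have : √P ≤ P := by
      rw [sqrt_le_left (by linarith)]; nlinarith
    linarith [add_one_le_exp (P - 1)]
  calc 2 * √P * psi P ≤ 2 * exp (P - 1) * (1.001 * exp (-π * P)) := by
        gcongr
        · exact psi_nonneg P
        · exact psi_le (hP₀.trans hP)
    _ = 2.002 * exp (P - 1 + -π * P) := by rw [exp_add]; ring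
    _ ≤ _ := by gcongr; nlinarith [pi_gt_d2]

/-- A weighted comparison of theta sums. -/
theorem two_psi_add_le_psi_of_lt {x B : ℝ} (hx : 0 < x) (hx2 : x ≤ 1 / 2) (hB : B ≤ 0.26)
    (hB' : x ≤ 0.22 → B ≤ 5 * x / log (2 / x) ^ 2) :
    2 * psi (2 * x) + 2 * B / (π * x) * (∑' j : ℕ+, exp (-π * x * (j : ℝ) ^ 2) / (j : ℝ) ^ 2)
      ≤ psi (x / 2) := by
  have hmain := half_sub_le_psi_sub hx
  have hpi := pi_gt_d2
  set S := ∑' j : ℕ+, exp (-π * x * (j : ℝ) ^ 2) / (j : ℝ) ^ 2 with hS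
  have hS0 : 0 ≤ S := tsum_nonneg fun _ => by positivity
  have he1 := exp_one_gt_d9
  rcases le_or_gt x 0.22 with h | h
  · have hP := sqrt_mul_psi_le (P := 1 / (2 * x)) (P₀ := 2) (by norm_num)
      (by rw [le_div_iff₀ (by positivity)]; linarith)
    have he5 : exp (-(1 + 2.14 * 2)) ≤ 0.0068 := by
      refine le_trans (exp_le_exp.2 (show _ ≤ -(((5:ℕ):ℝ) * 1) by norm_num)) ?_
      rw [exp_neg, exp_nat_mul, inv_le_comm₀ (by positivity) (by norm_num)]
      have : (2.718:ℝ)^5 ≤ exp 1 ^ 5 := by gcongr; linarith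
      norm_num at this ⊢; linarith
    suffices hs : ∀ l s : ℝ, 0 < l → exp l ≤ 2 / x → S ≤ s → 10 * s ≤ 0.486 * (3.14 * l ^ 2) →
        2 * B / (π * x) * S ≤ 0.486 by
      suffices 2 * B / (π * x) * S ≤ 0.486 by linarith
      rcases le_or_gt x 0.06 with h6 | h6
      · refine hs 3.5 1.645 (by norm_num) ?_ ((tsum_exp_div_sq_le_zeta_two hx).trans ?_)
          (by norm_num)
        · refine le_trans (b := 33.3) ?_ ?_
          · rw [show (3.5 : ℝ) = ((7:ℕ):ℝ) * 1 / 2 by norm_num, exp_half, exp_nat_mul]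
            refine sqrt_le_iff.2 ⟨by norm_num, ?_⟩
            have : exp 1 ^ 7 ≤ (2.7183:ℝ)^7 := by gcongr; linarith [exp_one_lt_d9]
            norm_num at this ⊢; linarith
          · rw [le_div_iff₀ hx]; linarith
        · nlinarith [pi_lt_d4, pi_pos]
      rcases le_or_gt x 0.14 with h14 | h14
      · refine hs (2 + 0.65) 1.02 (by norm_num) ?_ ((tsum_exp_div_sq_le hx (u := 0.8287) ?_).trans ?_)
          (by norm_num)
        · refine le_trans (b := 14.2) ?_ ?_
          · exact (exp_two_add_le (by norm_num) (by norm_num)).trans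
              (by norm_num [Finset.sum_range_succ, Nat.factorial])
          · rw [le_div_iff₀ hx]; linarith
        · rw [neg_mul]
          refine (exp_neg_le_inv_cubic (a := 0.1884) (by norm_num) (by nlinarith)).trans ?_
          norm_num
        · norm_num
      · refine hs (2 + 0.2) 0.6975 (by norm_num) ?_ ((tsum_exp_div_sq_le hx (u := 0.6455) ?_).trans ?_)
          (by norm_num)
        · refine le_trans (b := 9.09) ?_ ?_
          · exact (exp_two_add_le (by norm_num) (by norm_num)).trans
              (by norm_num [Finset.sum_range_succ, Nat.factorial])
          · rw [le_div_iff₀ hx]; linarith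
        · rw [neg_mul]
          refine (exp_neg_le_inv_cubic (a := 0.4396) (by norm_num) (by nlinarith)).trans ?_
          norm_num
        · norm_num
    intro l s hl hexp hSs hnum
    have hlog : l ≤ log (2 / x) := by rwa [le_log_iff_exp_le (by positivity)]
    have hB1 : B ≤ 5 * x / l ^ 2 := (hB' h).trans (by gcongr)
    calc 2 * B / (π * x) * S ≤ 2 * (5 * x / l ^ 2) / (3.14 * x) * S := by
          rcases le_or_gt B 0 with h0 | h0
          · exact (mul_nonpos_of_nonpos_of_nonneg
              (div_nonpos_of_nonpos_of_nonneg (by linarith) (by positivity)) hS0).trans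
              (by positivity)
          · gcongr
      _ = 10 * S / (3.14 * l ^ 2) := by field_simp; ring
      _ ≤ _ := by rw [div_le_iff₀ (by positivity)]; linarith
  · have hP := sqrt_mul_psi_le (P := 1 / (2 * x)) (P₀ := 1) le_rfl
      (by rw [le_div_iff₀ (by positivity)]; linarith)
    have he3 : exp (-(1 + 2.14 * 1)) ≤ 0.0443 := by
      refine le_trans (exp_le_exp.2 (show _ ≤ -(((3:ℕ):ℝ) * 1 + 0.14) by norm_num)) ?_
      rw [exp_neg, exp_add, exp_nat_mul, inv_le_comm₀ (by positivity) (by norm_num)]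
      have h2 : (1.14:ℝ) ≤ exp 0.14 := by linarith [add_one_le_exp (0.14:ℝ)]
      have : (2.718:ℝ)^3 * 1.14 ≤ exp 1 ^ 3 * exp 0.14 := by gcongr; linarith
      norm_num at this ⊢; linarith
    have hSle : S ≤ 0.523 := by
      refine (tsum_exp_div_sq_le hx (u := 0.505) ?_).trans (by norm_num)
      rw [neg_mul]
      refine (exp_neg_le_inv_cubic (a := 0.6908) (by norm_num) (by nlinarith)).trans ?_
      norm_num
    have : 2 * B / (π * x) * S ≤ 2 * 0.26 / (3.14 * 0.22) * 0.523 := by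
      rcases le_or_gt B 0 with h0 | h0
      · exact (mul_nonpos_of_nonpos_of_nonneg
              (div_nonpos_of_nonpos_of_nonneg (by linarith) (by positivity)) hS0).trans
              (by norm_num)
      · gcongr
    norm_num at this
    linarith

theorem two_exp_add_le_exp {x B : ℝ} (hx : 1 / 2 ≤ x) (hB : B ≤ 0.26) :
    2 * exp (-π * (2 * x)) + 2 * B / (π * x) * exp (-π * x) ≤ exp (-π * (x / 2)) := by
  have hpi := pi_gt_d2
  set y := exp (-π * (x / 2)) with hy
  have h2 : exp (-π * x) = y ^ 2 := by rw [hy, ← exp_nat_mul]; push_cast; ring_nf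
  have h4 : exp (-π * (2 * x)) = y ^ 4 := by rw [hy, ← exp_nat_mul]; push_cast; ring_nf
  have hy0 : 0 < y := exp_pos _
  have hy1 : y ≤ 0.5 := by
    rw [hy, neg_mul]
    exact (exp_neg_le_inv_cubic (a := 0.78) (by norm_num) (by nlinarith)).trans (by norm_num)
  have hb : 2 * B / (π * x) ≤ 0.4 := by
    rw [div_le_iff₀ (by positivity)]; nlinarith
  rw [h2, h4]
  have h3 : y ^ 3 ≤ 0.5 ^ 3 := pow_le_pow_left₀ hy0.le hy1 3
  have : 2 * B / (π * x) * y ^ 2 ≤ 0.4 * y ^ 2 := by gcongr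
  nlinarith

theorem summable_comparison_term {x : ℝ} (hx : 0 < x) (B : ℝ) :
    Summable fun j : ℕ+ => 2 * exp (-π * (2 * x) * (j : ℝ) ^ 2) +
      2 * B / (π * x) * (exp (-π * x * (j : ℝ) ^ 2) / (j : ℝ) ^ 2) :=
  ((summable_psi (by positivity)).mul_left 2).add ((summable_exp_div_sq hx).mul_left _)

theorem tsum_comparison_le_psi {x B : ℝ} (hx : 0 < x) (hB : B ≤ 0.26)
    (hB' : x ≤ 0.22 → B ≤ 5 * x / log (2 / x) ^ 2) :
    ∑' j : ℕ+, (2 * exp (-π * (2 * x) * (j : ℝ) ^ 2) +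
      2 * B / (π * x) * (exp (-π * x * (j : ℝ) ^ 2) / (j : ℝ) ^ 2)) ≤ psi (x / 2) := by
  rcases le_or_gt x (1 / 2) with h | h
  · rw [((summable_psi (by positivity)).mul_left 2).tsum_add ((summable_exp_div_sq hx).mul_left _),
      tsum_mul_left, tsum_mul_left]
    exact two_psi_add_le_psi_of_lt hx h hB hB'
  · refine (summable_comparison_term hx B).tsum_le_tsum (fun j => ?_) (summable_psi (by positivity))
    have hj := one_le_pnat_cast j
    have := two_exp_add_le_exp (x := x * (j : ℝ) ^ 2) (B := B) (by nlinarith) hB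
    rw [show 2 * B / (π * (x * (j : ℝ) ^ 2)) = 2 * B / (π * x) / (j : ℝ) ^ 2 by field_simp,
      show -π * (2 * (x * (j : ℝ) ^ 2)) = -π * (2 * x) * (j : ℝ) ^ 2 by ring,
      show -π * (x * (j : ℝ) ^ 2) = -π * x * (j : ℝ) ^ 2 by ring,
      show -π * (x * (j : ℝ) ^ 2 / 2) = -π * (x / 2) * (j : ℝ) ^ 2 by ring,
      div_mul_eq_mul_div, ← mul_div_assoc'] at this
    exact this

end

section

open Real
open scoped ArithmeticFunction.zeta

/-- The indicator of the squarefree numbers. -/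
noncomputable def squarefreeIndicator : ArithmeticFunction ℝ :=
  ⟨fun n => if Squarefree n then 1 else 0, by simp⟩

/-- The indicator of the positive squares. -/
noncomputable def squareIndicator : ArithmeticFunction ℝ :=
  ⟨fun n => if n ≠ 0 ∧ IsSquare n then 1 else 0, by simp⟩

theorem squarefreeIndicator_apply (n : ℕ) :
    squarefreeIndicator n = if Squarefree n then 1 else 0 := rfl

theorem squareIndicator_apply (n : ℕ) :
    squareIndicator n = if n ≠ 0 ∧ IsSquare n then 1 else 0 := rfl

theorem squarefreeIndicator_isMultiplicative : squarefreeIndicator.IsMultiplicative := by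
  refine ⟨by simp [squarefreeIndicator_apply], fun {m n} h => ?_⟩
  simp only [squarefreeIndicator_apply, Nat.squarefree_mul h]
  by_cases hm : Squarefree m <;> by_cases hn : Squarefree n <;> simp [hm, hn]

theorem sq_mul_squarefree_unique {a b j k : ℕ} (ha : Squarefree a) (hb : Squarefree b)
    (hj : j ≠ 0) (hk : k ≠ 0) (h : j ^ 2 * a = k ^ 2 * b) : a = b := by
  refine Nat.eq_of_factorization_eq ha.ne_zero hb.ne_zero fun p => ?_
  have h' := congrArg (fun n => n.factorization p) h
  simp only [Nat.factorization_mul (pow_ne_zero 2 hj) ha.ne_zero,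
    Nat.factorization_mul (pow_ne_zero 2 hk) hb.ne_zero, Nat.factorization_pow,
    Finsupp.add_apply, Finsupp.smul_apply, smul_eq_mul] at h'
  have := ha.natFactorization_le_one p
  have := hb.natFactorization_le_one p
  omega

theorem squareIndicator_mul_squarefreeIndicator :
    squareIndicator * squarefreeIndicator = (ζ : ArithmeticFunction ℝ) := by
  ext n
  rcases eq_or_ne n 0 with rfl | hn
  · simp
  obtain ⟨a, j, hja, ha⟩ := Nat.sq_mul_squarefree n
  have hj : j ≠ 0 := by rintro rfl; simp at hja; exact hn hja.symm
  rw [ArithmeticFunction.mul_apply, Finset.sum_eq_single (j ^ 2, a)]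
  · simp [squareIndicator_apply, squarefreeIndicator_apply, ha, hj, hn, IsSquare.sq]
  · rintro ⟨x, b⟩ hx hne
    rw [Nat.mem_divisorsAntidiagonal] at hx
    by_contra hcon
    rw [mul_eq_zero, not_or] at hcon
    simp only [squareIndicator_apply, squarefreeIndicator_apply, ne_eq, ite_eq_right_iff,
      one_ne_zero, imp_false, not_not] at hcon
    obtain ⟨⟨hx0, k, rfl⟩, hb⟩ := hcon
    have hk : k ≠ 0 := by rintro rfl; simp at hx0
    have hab := sq_mul_squarefree_unique ha hb hj hk (by rw [hja, ← hx.1]; ring)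
    subst hab
    refine hne (Prod.ext ?_ rfl)
    exact Nat.eq_of_mul_eq_mul_right (Nat.pos_of_ne_zero ha.ne_zero) (hx.1.trans hja.symm)
  · intro h
    exact absurd (Nat.mem_divisorsAntidiagonal.2 ⟨hja, hn⟩) h

theorem squarefreeIndicator_mul_nonneg {f : ArithmeticFunction ℝ} (hf1 : f 1 = 1)
    (hfm : ∀ m n, f (m * n) = f m * f n) (hfv : ∀ n, f n = 0 ∨ f n = 1 ∨ f n = -1) (n : ℕ) :
    0 ≤ (squarefreeIndicator * f) n := by
  have hm : (squarefreeIndicator * f).IsMultiplicative :=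
    squarefreeIndicator_isMultiplicative.mul ⟨hf1, fun {m n} _ => hfm m n⟩
  rcases eq_or_ne n 0 with rfl | hn
  · simp
  rw [hm.multiplicative_factorization _ hn]
  refine Finset.prod_nonneg fun p hp => ?_
  have hp' : p.Prime := Nat.prime_of_mem_primeFactors hp
  have hpow : ∀ k, f (p ^ k) = f p ^ k := fun k => by
    induction k with
    | zero => simpa using hf1
    | succ k ih => rw [pow_succ, hfm, ih, pow_succ]
  have hk : n.factorization p ≠ 0 := Finsupp.mem_support_iff.1 hp
  obtain ⟨k, hk⟩ := Nat.exists_eq_succ_of_ne_zero hk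
  simp only
  rw [hk, ArithmeticFunction.mul_apply,
    Nat.sum_divisorsAntidiagonal (fun a b => squarefreeIndicator a * f b),
    Nat.sum_divisors_prime_pow hp', Finset.sum_range_succ', Finset.sum_range_succ',
    Finset.sum_eq_zero]
  · have h1 : p ^ (k + 1) / p ^ 1 = p ^ k := by
      rw [Nat.pow_div (by omega) hp'.pos]; rfl
    simp only [zero_add, pow_one, pow_zero, Nat.div_one] at h1 ⊢
    rw [h1, hpow, hpow, squarefreeIndicator_apply, squarefreeIndicator_apply,
      if_pos hp'.prime.squarefree, if_pos squarefree_one, pow_succ]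
    rcases hfv p with h | h | h <;> rw [h]
    · rcases k with _ | k <;> simp
    · norm_num
    · ring_nf; simp
  · intro i _
    rw [squarefreeIndicator_apply, if_neg, zero_mul]
    rw [Nat.squarefree_pow_iff hp'.ne_one (by omega)]
    omega

theorem tsum_pnat_prod_eq_tsum_convolution {f g : ArithmeticFunction ℝ} {φ : ℕ → ℝ}
    (h : Summable fun p : ℕ+ × ℕ+ => f p.1 * g p.2 * φ (p.1 * p.2)) :
    HasSum (fun N : ℕ+ => (f * g) N * φ N)
      (∑' p : ℕ+ × ℕ+, f p.1 * g p.2 * φ (p.1 * p.2)) := by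
  have h' := (sigmaAntidiagonalEquivProd.summable_iff.2 h)
  rw [← sigmaAntidiagonalEquivProd.tsum_eq]
  have := h'.hasSum.sigma (g := fun N : ℕ+ => (f * g) N * φ N) fun N => ?_
  · exact this
  · have hN : ((f * g) N * φ N) = ∑ x : ((N : ℕ).divisorsAntidiagonal),
        (f (x : ℕ × ℕ).1 * g (x : ℕ × ℕ).2 * φ N) := by
      rw [ArithmeticFunction.mul_apply, Finset.sum_mul,
        ← Finset.sum_coe_sort]
    rw [hN]
    have hx := hasSum_fintype fun x : ((N : ℕ).divisorsAntidiagonal) =>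
        (f (x : ℕ × ℕ).1 * g (x : ℕ × ℕ).2 * φ N)
    refine hx.congr_fun fun x => ?_
    have := (Nat.mem_divisorsAntidiagonal.1 x.2).1
    simp [sigmaAntidiagonalEquivProd, divisorsAntidiagonalFactors, this]

theorem ennreal_tsum_convolution {f g : ArithmeticFunction ℝ} (hf : ∀ n, 0 ≤ f n)
    (hg : ∀ n, 0 ≤ g n) (φ : ℕ → ENNReal) :
    ∑' N : ℕ+, ENNReal.ofReal ((f * g) N) * φ N =
      ∑' (b : ℕ+) (a : ℕ+), ENNReal.ofReal (f a) * ENNReal.ofReal (g b) * φ (a * b) := by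
  rw [ENNReal.tsum_comm, ← ENNReal.tsum_prod
      (f := fun a b : ℕ+ => ENNReal.ofReal (f a) * ENNReal.ofReal (g b) * φ (a * b)),
    ← sigmaAntidiagonalEquivProd.tsum_eq, ENNReal.tsum_sigma']
  refine tsum_congr fun N => ?_
  rw [ArithmeticFunction.mul_apply, ENNReal.ofReal_sum_of_nonneg
    (fun _ _ => mul_nonneg (hf _) (hg _)), Finset.sum_mul, ← Finset.sum_coe_sort, tsum_fintype]
  refine Finset.sum_congr rfl fun x _ => ?_
  have := (Nat.mem_divisorsAntidiagonal.1 x.2).1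
  simp [sigmaAntidiagonalEquivProd, divisorsAntidiagonalFactors, this, ENNReal.ofReal_mul, hf]

theorem tsum_squareIndicator_mul (φ : ℕ → ENNReal) :
    ∑' a : ℕ+, ENNReal.ofReal (squareIndicator a) * φ a = ∑' j : ℕ+, φ (j ^ 2) := by
  have hinj : Function.Injective fun j : ℕ+ => j ^ 2 := fun a b h => by
    have : (a : ℕ) ^ 2 = (b : ℕ) ^ 2 := by exact_mod_cast congrArg PNat.val h
    exact PNat.eq (Nat.pow_left_injective two_ne_zero this)
  rw [← hinj.tsum_eq (f := fun a : ℕ+ => ENNReal.ofReal (squareIndicator a) * φ a)]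
  · refine tsum_congr fun j => ?_
    simp [squareIndicator_apply, IsSquare.sq]
  · intro a ha
    simp only [Function.mem_support, squareIndicator_apply, ne_eq, mul_eq_zero, not_or] at ha
    obtain ⟨k, hk⟩ : IsSquare (a : ℕ) := by
      by_contra h; simp [h] at ha
    have hk0 : 0 < k := Nat.pos_of_ne_zero (by rintro rfl; simp at hk)
    exact ⟨Nat.toPNat k hk0, PNat.eq (by rw [hk, ← sq]; exact PNat.pow_coe _ 2)⟩

/-- Rearrangement of a double sum twisted by a quadratic completely multiplicative function
into a sum with nonnegative coefficients grouped along squares. -/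
theorem ofReal_tsum_twisted {f : ArithmeticFunction ℝ} (hf1 : f 1 = 1)
    (hfm : ∀ m n, f (m * n) = f m * f n) (hfv : ∀ n, f n = 0 ∨ f n = 1 ∨ f n = -1)
    {φ : ℕ → ℝ} (hφ : ∀ n, 0 ≤ φ n) (hs : Summable fun p : ℕ+ × ℕ+ => φ (p.1 * p.2)) :
    0 ≤ ∑' p : ℕ+ × ℕ+, f p.2 * φ (p.1 * p.2) ∧
    ENNReal.ofReal (∑' p : ℕ+ × ℕ+, f p.2 * φ (p.1 * p.2)) =
      ∑' (a : ℕ+) (j : ℕ+), ENNReal.ofReal ((squarefreeIndicator * f) a) *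
        ENNReal.ofReal (φ (j ^ 2 * a)) := by
  have hpos := squarefreeIndicator_mul_nonneg hf1 hfm hfv
  have hsq : ∀ n, 0 ≤ squareIndicator n := fun n => by
    rw [squareIndicator_apply]; split_ifs <;> norm_num
  have habs : ∀ n, |f n| ≤ 1 := fun n => by rcases hfv n with h | h | h <;> simp [h]
  have hs' : Summable fun p : ℕ+ × ℕ+ =>
      (ζ : ArithmeticFunction ℝ) p.1 * f p.2 * φ (p.1 * p.2) := by
    refine Summable.of_norm_bounded hs fun p => ?_
    simp only [norm_mul, norm_eq_abs, abs_of_nonneg (hφ _)]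
    have : |(ζ : ArithmeticFunction ℝ) p.1| = 1 := by simp
    rw [this, one_mul]
    exact mul_le_of_le_one_left (hφ _) (habs _)
  have hsum := tsum_pnat_prod_eq_tsum_convolution hs'
  have he : ∑' p : ℕ+ × ℕ+, f p.2 * φ (p.1 * p.2) = ∑' p : ℕ+ × ℕ+,
      (ζ : ArithmeticFunction ℝ) p.1 * f p.2 * φ (p.1 * p.2) := by
    refine tsum_congr fun p => ?_
    simp
  rw [he, ← hsum.tsum_eq, ← squareIndicator_mul_squarefreeIndicator, mul_assoc]
  have hnn : ∀ n, 0 ≤ (squareIndicator * (squarefreeIndicator * f)) n := fun n => by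
    rw [ArithmeticFunction.mul_apply]
    exact Finset.sum_nonneg fun _ _ => mul_nonneg (hsq _) (hpos _)
  refine ⟨tsum_nonneg fun N => mul_nonneg (hnn _) (hφ _), ?_⟩
  rw [ENNReal.ofReal_tsum_of_nonneg (fun N => mul_nonneg (hnn _) (hφ _))]
  · simp_rw [ENNReal.ofReal_mul (hnn _)]
    rw [ennreal_tsum_convolution hsq hpos (fun n => ENNReal.ofReal (φ n))]
    refine tsum_congr fun b => ?_
    rw [ENNReal.tsum_mul_left, ← tsum_squareIndicator_mul
      (fun n => ENNReal.ofReal (φ (n * b))), ← ENNReal.tsum_mul_left]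
    refine tsum_congr fun a => ?_
    ring
  · rw [← mul_assoc, squareIndicator_mul_squarefreeIndicator]
    exact hsum.summable

end

section

open Real MeasureTheory Set

theorem lintegral_Ioi_exp_neg_mul_exp {s : ℝ} (hs : 0 < s) :
    ∫⁻ w in Ioi (0 : ℝ), ENNReal.ofReal (exp (-s * exp w)) * ENNReal.ofReal (exp w)
      = ENNReal.ofReal (exp (-s) / s) := by
  have hd : ∀ w ∈ Ici (0 : ℝ), HasDerivAt (fun w => -(exp (-s * exp w)) / s)
      (exp (-s * exp w) * exp w) w := fun w _ => by
    have h := (((hasDerivAt_exp w).const_mul (-s)).exp.neg).div_const s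
    convert! h using 1
    field_simp
  have hlim : Filter.Tendsto (fun w => -(exp (-s * exp w)) / s) Filter.atTop (nhds 0) := by
    have h1 : Filter.Tendsto (fun w => -s * exp w) Filter.atTop Filter.atBot :=
      tendsto_exp_atTop.const_mul_atTop_of_neg (by linarith)
    simpa using ((tendsto_exp_atBot.comp h1).neg).div_const s
  have hInt := integrableOn_Ioi_deriv_of_nonneg' hd (fun w _ => by positivity) hlim
  have hval := integral_Ioi_of_hasDerivAt_of_nonneg' hd (fun w _ => by positivity) hlim
  simp_rw [← ENNReal.ofReal_mul (exp_pos _).le]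
  rw [← ofReal_integral_eq_lintegral_ofReal hInt
    (Filter.Eventually.of_forall fun w => by positivity), hval]
  simp [neg_div]

/-- The sum `∑_{a, j ≥ 1} ρ a * exp (-c a j² t)`, as an extended nonnegative real. -/
noncomputable def squareSum (ρ : ℕ → ℝ) (c t : ℝ) : ENNReal :=
  ∑' (a : ℕ+) (j : ℕ+), ENNReal.ofReal (ρ a) *
    ENNReal.ofReal (exp (-(c * ((j ^ 2 * a : ℕ) : ℝ)) * t))

theorem measurable_squareSum (ρ : ℕ → ℝ) (c : ℝ) : Measurable (squareSum ρ c) := by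
  unfold squareSum
  refine Measurable.tsum fun a => Measurable.tsum fun j => ?_
  fun_prop

theorem lintegral_squareSum_mul_exp (ρ : ℕ → ℝ) {c t : ℝ} (hc : 0 < c) (ht : 0 < t) :
    ∫⁻ w in Ioi (0 : ℝ), squareSum ρ c (exp w * t) * ENNReal.ofReal (exp w) =
      ∑' (a : ℕ+) (j : ℕ+), ENNReal.ofReal (ρ a) *
        ENNReal.ofReal (exp (-(c * ((j ^ 2 * a : ℕ) : ℝ)) * t) /
          (c * ((j ^ 2 * a : ℕ) : ℝ) * t)) := by
  unfold squareSum
  simp_rw [← ENNReal.tsum_mul_right]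
  rw [lintegral_tsum fun a => (Measurable.tsum fun j => by fun_prop).aemeasurable]
  refine tsum_congr fun a => ?_
  rw [lintegral_tsum fun j => (by fun_prop)]
  refine tsum_congr fun j => ?_
  simp_rw [mul_assoc (ENNReal.ofReal (ρ a))]
  rw [lintegral_const_mul _ (by fun_prop)]
  congr 1
  have hs : 0 < c * ((j ^ 2 * a : ℕ) : ℝ) * t := by
    have : 0 < ((j ^ 2 * a : ℕ) : ℝ) := by positivity
    positivity
  rw [neg_mul, ← lintegral_Ioi_exp_neg_mul_exp hs]
  refine lintegral_congr fun w => ?_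
  ring_nf

theorem squareSum_comparison (ρ : ℕ → ℝ) {Q t B : ℝ} (hQ : 0 < Q) (ht : 1 ≤ t) (hB0 : 0 ≤ B)
    (hB : B ≤ 0.26) (hB' : ∀ x, 2 / Q ≤ x → x ≤ 0.22 → B ≤ 5 * x / log (2 / x) ^ 2) :
    2 * squareSum ρ (2 * π / Q) (2 * t) + ENNReal.ofReal (2 * B) *
      ∫⁻ w in Ioi (0 : ℝ), squareSum ρ (2 * π / Q) (exp w * t) * ENNReal.ofReal (exp w)
      ≤ squareSum ρ (2 * π / Q) (t / 2) := by
  have ht0 : 0 < t := one_pos.trans_le ht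
  rw [lintegral_squareSum_mul_exp ρ (by positivity) ht0]
  unfold squareSum
  rw [← ENNReal.tsum_mul_left, ← ENNReal.tsum_mul_left, ← ENNReal.tsum_add]
  refine ENNReal.tsum_le_tsum fun a => ?_
  simp_rw [ENNReal.tsum_mul_left, mul_left_comm _ (ENNReal.ofReal (ρ a)), ← mul_add]
  gcongr
  rw [← ENNReal.tsum_mul_left, ← ENNReal.tsum_mul_left, ← ENNReal.tsum_add]
  set x := 2 * a * t / Q with hx
  have ha := one_le_pnat_cast a
  have hx0 : 0 < x := by positivity
  have hx1 : 2 / Q ≤ x := by rw [hx]; gcongr; nlinarith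
  have key := tsum_comparison_le_psi hx0 hB (hB' x hx1)
  have h0 : ∀ j : ℕ+, 0 ≤ 2 * exp (-π * (2 * x) * (j : ℝ) ^ 2) +
      2 * B / (π * x) * (exp (-π * x * (j : ℝ) ^ 2) / (j : ℝ) ^ 2) := fun j => by positivity
  have key' := ENNReal.ofReal_le_ofReal key
  rw [ENNReal.ofReal_tsum_of_nonneg h0 (summable_comparison_term hx0 B), psi,
    ENNReal.ofReal_tsum_of_nonneg (fun _ => (exp_pos _).le) (summable_psi (by positivity))] at key'
  convert! key' using 1
  · refine tsum_congr fun j => ?_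
    rw [ENNReal.ofReal_add (by positivity) (by positivity),
      ENNReal.ofReal_mul (q := exp _) (by norm_num)]
    have h1 : -(2 * π / Q * ((j ^ 2 * a : ℕ) : ℝ)) * (2 * t) = -π * (2 * x) * (j : ℝ) ^ 2 := by
      rw [hx]; push_cast; ring
    have h2 : -(2 * π / Q * ((j ^ 2 * a : ℕ) : ℝ)) * t = -π * x * (j : ℝ) ^ 2 := by
      rw [hx]; push_cast; ring
    have h3 : 2 * π / Q * ((j ^ 2 * a : ℕ) : ℝ) * t = π * x * (j : ℝ) ^ 2 := by
      rw [hx]; push_cast; ring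
    rw [h1, h2, h3]
    rw [show ENNReal.ofReal 2 = 2 by norm_num,
      ← ENNReal.ofReal_mul (p := 2 * B) (by positivity)]
    congr 2
    field_simp
  · refine tsum_congr fun j => ?_
    congr 2; rw [hx]; push_cast; ring

theorem squareSum_comparison_self (ρ : ℕ → ℝ) {c t B : ℝ} (hc : 0 < c) (ht : 1 ≤ t)
    (hB0 : 0 ≤ B) (hB : B ≤ c) :
    ENNReal.ofReal B *
      ∫⁻ w in Ioi (0 : ℝ), squareSum ρ c (exp w * t) * ENNReal.ofReal (exp w)
      ≤ squareSum ρ c t := by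
  have ht0 : 0 < t := one_pos.trans_le ht
  rw [lintegral_squareSum_mul_exp ρ hc ht0, ← ENNReal.tsum_mul_left]
  refine ENNReal.tsum_le_tsum fun a => ?_
  rw [← ENNReal.tsum_mul_left]
  refine ENNReal.tsum_le_tsum fun j => ?_
  rw [mul_left_comm, ← ENNReal.ofReal_mul hB0]
  gcongr
  have h1 : (1 : ℝ) ≤ ((j ^ 2 * a : ℕ) : ℝ) := by
    exact Nat.one_le_cast.2 (Nat.mul_pos (pow_pos j.pos 2) a.pos)
  have h2 : B ≤ c * ((j ^ 2 * a : ℕ) : ℝ) * t := by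
    calc B ≤ c * 1 * 1 := by linarith
      _ ≤ _ := by gcongr
  rw [mul_div_assoc', div_le_iff₀ (by positivity), mul_comm]
  gcongr

/-- The average of `squareSum` along `cosh`. -/
noncomputable def squareSumAverage (ν : Measure ℝ) (ρ : ℕ → ℝ) (c w : ℝ) : ENNReal :=
  ∫⁻ v, squareSum ρ c (exp w * cosh v) ∂ν

theorem measurable_squareSumAverage (ν : Measure ℝ) [SFinite ν] (ρ : ℕ → ℝ) (c : ℝ) :
    Measurable (squareSumAverage ν ρ c) := by
  refine Measurable.lintegral_prod_right' (f := fun p : ℝ × ℝ => squareSum ρ c (exp p.1 * cosh p.2)) ?_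
  exact (measurable_squareSum ρ c).comp (by fun_prop)

theorem lintegral_squareSumAverage (ν : Measure ℝ) [SFinite ν] (ρ : ℕ → ℝ) (c : ℝ) :
    ∫⁻ w in Ioi (0 : ℝ), squareSumAverage ν ρ c w * ENNReal.ofReal (exp w) =
      ∫⁻ v, (∫⁻ w in Ioi (0 : ℝ), squareSum ρ c (exp w * cosh v) * ENNReal.ofReal (exp w)) ∂ν := by
  have hm : Measurable fun p : ℝ × ℝ => squareSum ρ c (exp p.1 * cosh p.2) :=
    (measurable_squareSum ρ c).comp (by fun_prop)
  have hm2 : Measurable fun p : ℝ × ℝ =>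
      squareSum ρ c (exp p.1 * cosh p.2) * ENNReal.ofReal (exp p.1) := hm.mul (by fun_prop)
  rw [← lintegral_lintegral_swap hm2.aemeasurable]
  refine lintegral_congr fun w => ?_
  exact (lintegral_mul_const _ (hm.comp (by fun_prop : Measurable fun v => (w, v)))).symm

theorem squareSumAverage_comparison (ν : Measure ℝ) [SFinite ν] (ρ : ℕ → ℝ) {Q B : ℝ} (hQ : 0 < Q)
    (hB0 : 0 ≤ B) (hB : B ≤ 0.26)
    (hB' : ∀ x, 2 / Q ≤ x → x ≤ 0.22 → B ≤ 5 * x / log (2 / x) ^ 2) :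
    2 * squareSumAverage ν ρ (2 * π / Q) (log 2) + ENNReal.ofReal (2 * B) *
      ∫⁻ w in Ioi (0 : ℝ), squareSumAverage ν ρ (2 * π / Q) w * ENNReal.ofReal (exp w)
      ≤ squareSumAverage ν ρ (2 * π / Q) (-log 2) := by
  rw [lintegral_squareSumAverage]
  unfold squareSumAverage
  have hm : ∀ w, Measurable fun v => squareSum ρ (2 * π / Q) (exp w * cosh v) := fun w =>
    (measurable_squareSum ρ _).comp (by fun_prop)
  rw [← lintegral_const_mul _ (hm _), ← lintegral_const_mul', ← lintegral_add_left]
  · refine lintegral_mono fun v => ?_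
    have := squareSum_comparison ρ hQ (one_le_cosh v) hB0 hB hB'
    rw [exp_neg, exp_log two_pos]
    convert! this using 2
    ring
  · exact (hm _).const_mul _
  · exact ENNReal.ofReal_ne_top

theorem squareSumAverage_comparison_self (ν : Measure ℝ) [SFinite ν] (ρ : ℕ → ℝ) {c B : ℝ}
    (hc : 0 < c) (hB0 : 0 ≤ B) (hB : B ≤ c) :
    ENNReal.ofReal B *
      ∫⁻ w in Ioi (0 : ℝ), squareSumAverage ν ρ c w * ENNReal.ofReal (exp w)
      ≤ squareSumAverage ν ρ c 0 := by
  rw [lintegral_squareSumAverage]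
  unfold squareSumAverage
  rw [← lintegral_const_mul' _ _ ENNReal.ofReal_ne_top]
  refine lintegral_mono fun v => ?_
  simpa using squareSum_comparison_self ρ hc (one_le_cosh v) hB0 hB

end

section

open Real MeasureTheory Set

theorem psi_le_inv {P : ℝ} (hP : 0 < P) : psi P ≤ P⁻¹ := by
  have h : psi P ≤ ∑' m : ℕ+, (π * P)⁻¹ * (1 / (m : ℝ) ^ 2) := by
    refine (summable_psi hP).tsum_le_tsum (fun m => ?_) (hasSum_pnat_inv_sq.summable.mul_left _)
    have hm := one_le_pnat_cast m
    have h0 : 0 < π * P * (m : ℝ) ^ 2 := by positivity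
    rw [show (π * P)⁻¹ * (1 / (m : ℝ) ^ 2) = (π * P * (m : ℝ) ^ 2)⁻¹ by field_simp,
      show -π * P * (m : ℝ) ^ 2 = -(π * P * (m : ℝ) ^ 2) by ring, exp_neg]
    gcongr
    linarith [add_one_le_exp (π * P * (m : ℝ) ^ 2)]
  refine h.trans ?_
  rw [tsum_mul_left, hasSum_pnat_inv_sq.tsum_eq, mul_inv, mul_comm π⁻¹, mul_assoc]
  refine mul_le_of_le_one_right (by positivity) ?_
  rw [inv_mul_le_iff₀ pi_pos]
  nlinarith [pi_pos, pi_lt_d2]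

theorem antitone_psi_exp : Antitone fun p : ℝ => psi (exp p) := by
  intro a b hab
  refine (summable_psi (exp_pos _)).tsum_le_tsum (fun m => ?_) (summable_psi (exp_pos _))
  refine exp_le_exp.2 ?_
  have : π * exp a * (m : ℝ) ^ 2 ≤ π * exp b * (m : ℝ) ^ 2 := by gcongr
  linarith

theorem measurable_psi_exp : Measurable fun p : ℝ => psi (exp p) := antitone_psi_exp.measurable

theorem psi_exp_neg (p : ℝ) :
    psi (exp (-p)) = exp (p / 2) * psi (exp p) + (exp (p / 2) - 1) / 2 := by
  have h := psi_functional_equation (exp_pos (-p))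
  rw [← exp_half, ← exp_neg, show -(-p / 2) = p / 2 by ring, one_div, ← exp_neg, neg_neg] at h
  linarith

theorem psi_exp_le (p : ℝ) : psi (exp p) ≤ exp (-p) := by
  rw [exp_neg]; exact psi_le_inv (exp_pos p)

/-- The theta function with its polar part at `p → -∞` removed, in logarithmic coordinates. -/
noncomputable def thetaTail (β p : ℝ) : ℝ := (psi (exp p) - exp (-p / 2) / 2) * exp (β / 2 * p)

theorem integrable_exp_neg_mul_abs' {δ : ℝ} (hδ : 0 < δ) :
    Integrable fun p : ℝ => exp (-δ * |p|) := by
  have h1 : IntegrableOn (fun p : ℝ => exp (-δ * |p|)) (Ioi 0) :=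
    (integrableOn_exp_mul_Ioi (neg_lt_zero.2 hδ) 0).congr_fun
      (fun p hp => by rw [abs_of_pos hp]) measurableSet_Ioi
  have h2 : IntegrableOn (fun p : ℝ => exp (-δ * |p|)) (Iic 0) :=
    (integrableOn_exp_mul_Iic hδ 0).congr_fun
      (fun p hp => by simp only [abs_of_nonpos (mem_Iic.1 hp)]; ring_nf) measurableSet_Iic
  simpa using h2.union h1

theorem abs_thetaTail_le {β δ : ℝ} (h0 : 2 * δ ≤ β) (h1 : 2 * δ ≤ 1 - β) (p : ℝ) :
    |thetaTail β p| ≤ 2 * exp (-δ * |p|) := by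
  rcases le_total 0 p with hp | hp
  · rw [abs_of_nonneg hp, thetaTail, abs_mul, abs_of_pos (exp_pos (β / 2 * p))]
    have h2 : |psi (exp p) - exp (-p / 2) / 2| ≤ 2 * exp (-p / 2) := by
      have h3 : exp (-p) ≤ exp (-p / 2) := exp_le_exp.2 (by linarith)
      have := psi_exp_le p
      have := psi_nonneg (exp p)
      have := exp_pos (-p / 2)
      rw [abs_le]; constructor <;> linarith
    calc _ ≤ 2 * exp (-p / 2) * exp (β / 2 * p) := by gcongr
      _ = 2 * exp (-p / 2 + β / 2 * p) := by rw [exp_add]; ring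
      _ ≤ _ := by gcongr; nlinarith
  · rw [abs_of_nonpos hp, thetaTail, abs_mul, abs_of_pos (exp_pos (β / 2 * p))]
    have h2 : |psi (exp p) - exp (-p / 2) / 2| ≤ 2 := by
      have h := psi_exp_neg (-p)
      rw [neg_neg] at h
      have h4 := psi_exp_le (-p)
      have h5 : exp (-p / 2) * psi (exp (-p)) ≤ 1 := by
        calc exp (-p / 2) * psi (exp (-p)) ≤ exp (-p / 2) * exp (- -p) := by gcongr
          _ ≤ 1 := by rw [← exp_add]; exact exp_le_one_iff.2 (by linarith)
      have h6 := mul_nonneg (exp_pos (-p / 2)).le (psi_nonneg (exp (-p)))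
      rw [h, abs_le]; constructor <;> linarith
    calc _ ≤ 2 * exp (β / 2 * p) := by gcongr
      _ ≤ _ := by gcongr 2 * exp ?_; nlinarith

theorem integrable_thetaTail {β : ℝ} (h0 : 0 < β) (h1 : β < 1) : Integrable (thetaTail β) := by
  obtain ⟨δ, hδ, hδ0, hδ1⟩ : ∃ δ : ℝ, 0 < δ ∧ 2 * δ ≤ β ∧ 2 * δ ≤ 1 - β :=
    ⟨min β (1 - β) / 2, by have := lt_min h0 (sub_pos.2 h1); positivity,
      by linarith [min_le_left β (1 - β)], by linarith [min_le_right β (1 - β)]⟩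
  refine Integrable.mono' ((integrable_exp_neg_mul_abs' hδ).const_mul 2) ?_
    (Filter.Eventually.of_forall (abs_thetaTail_le hδ0 hδ1))
  refine Measurable.aestronglyMeasurable ?_
  unfold thetaTail
  exact (measurable_psi_exp.sub (by fun_prop)).mul (by fun_prop)

/-- A function with the symmetry and decay of a twisted theta function in logarithmic
coordinates. -/
structure TwistedTheta (g : ℝ → ℝ) (W : ℝ) : Prop where
  sign : W = 1 ∨ W = -1
  integrable_mul_exp : ∀ σ : ℝ, Integrable fun p => g p * exp (σ * p)
  symm : ∀ p, g (-p) = W * exp (p / 2) * g p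

/-- The product kernel of the theta function and a twisted theta function. -/
noncomputable def productKernel (g : ℝ → ℝ) (w : ℝ) : ℝ :=
  ∫ v, psi (exp (w + v)) * g (w - v)

/-- The residue constant attached to a twisted theta function. -/
noncomputable def residueConst (g : ℝ → ℝ) : ℝ := (∫ p, g p * exp (1 / 2 * p)) / 2

namespace TwistedTheta

variable {g : ℝ → ℝ} {W β : ℝ}

theorem integrable (h : TwistedTheta g W) : Integrable g := by
  simpa using h.integrable_mul_exp 0

theorem integrable_productKernel (h : TwistedTheta g W) (w : ℝ) :
    Integrable fun v => psi (exp (w + v)) * g (w - v) := by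
  have hi := ((h.integrable_mul_exp 1).comp_sub_left w).norm.const_mul (exp (-2 * w))
  refine Integrable.mono' hi ?_ (Filter.Eventually.of_forall fun v => ?_)
  · exact ((measurable_psi_exp.comp (by fun_prop : Measurable fun v => w + v)).aestronglyMeasurable).mul
      (h.integrable.comp_sub_left w).aestronglyMeasurable
  · rw [norm_mul, norm_mul, norm_of_nonneg (psi_nonneg _), norm_of_nonneg (exp_pos _).le]
    calc psi (exp (w + v)) * ‖g (w - v)‖ ≤ exp (-(w + v)) * ‖g (w - v)‖ := by
          gcongr; exact psi_exp_le _
      _ = exp (-2 * w + 1 * (w - v)) * ‖g (w - v)‖ := by ring_nf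
      _ = _ := by rw [exp_add]; ring

theorem integral_eq (h : TwistedTheta g W) : ∫ p, g p = 2 * W * residueConst g := by
  have h1 : ∫ p, g p = ∫ p, g (-p) := (integral_neg_eq_self g volume).symm
  rw [h1, residueConst, show 2 * W * ((∫ p, g p * exp (1 / 2 * p)) / 2) =
    W * ∫ p, g p * exp (1 / 2 * p) by ring, ← integral_const_mul]
  refine integral_congr_ae (Filter.Eventually.of_forall fun p => ?_)
  simp only [h.symm]
  ring_nf

theorem productKernel_neg (h : TwistedTheta g W) (w : ℝ) :
    productKernel g (-w) = W * exp w * productKernel g w + residueConst g * exp w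
      - W * residueConst g := by
  have hW : W * W = 1 := by rcases h.sign with rfl | rfl <;> norm_num
  have h1 : productKernel g (-w) = ∫ v, psi (exp (-(w + v))) * g (-(w - v)) := by
    rw [productKernel, ← integral_neg_eq_self]
    refine integral_congr_ae (Filter.Eventually.of_forall fun v => ?_)
    ring_nf
  have h2 : ∀ v, psi (exp (-(w + v))) * g (-(w - v)) =
      W * exp w * (psi (exp (w + v)) * g (w - v)) + W * exp w / 2 * g (w - v)
        - W / 2 * (g (w - v) * exp (1 / 2 * (w - v))) := by
    intro v
    rw [psi_exp_neg, h.symm]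
    have he : exp ((w + v) / 2) * exp ((w - v) / 2) = exp w := by rw [← exp_add]; ring_nf
    have he' : exp (1 / 2 * (w - v)) = exp ((w - v) / 2) := by ring_nf
    rw [he', ← he]
    ring
  have i1 := (h.integrable_productKernel w).const_mul (W * exp w)
  have i2 := (h.integrable.comp_sub_left w).const_mul (W * exp w / 2)
  have i3 := ((h.integrable_mul_exp (1 / 2)).comp_sub_left w).const_mul (W / 2)
  rw [h1]
  simp_rw [h2]
  rw [integral_sub (by exact i1.add i2) i3, integral_add i1 i2, integral_const_mul, integral_const_mul,
    integral_const_mul, integral_sub_left_eq_self g volume w,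
    integral_sub_left_eq_self (fun p => g p * exp (1 / 2 * p)) volume w, h.integral_eq,
    productKernel, residueConst]
  linear_combination exp w * ((∫ p, g p * exp (1 / 2 * p)) / 2) * hW

/-- The product kernel with its polar part removed, weighted by `exp (β w)`. -/
noncomputable def reducedKernel (g : ℝ → ℝ) (β w : ℝ) : ℝ :=
  (productKernel g w - residueConst g * exp (-w)) * exp (β * w)

theorem reducedKernel_eq_convolution (h : TwistedTheta g W) (β w : ℝ) :
    reducedKernel g β w = convolution (thetaTail β) (fun p => g p * exp (β / 2 * p))
      (ContinuousLinearMap.mul ℝ ℝ) volume (2 * w) := by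
  have i1 := h.integrable_productKernel w
  have i2 := ((h.integrable_mul_exp (1 / 2)).comp_sub_left w).const_mul (exp (-w) / 2)
  rw [convolution_def, ← integral_add_left_eq_self _ w, reducedKernel, residueConst,
    ← integral_sub_left_eq_self (fun p => g p * exp (1 / 2 * p)) volume w, productKernel,
    div_mul_eq_mul_div, mul_div_assoc, mul_comm _ (exp (-w) / 2), ← integral_const_mul,
    ← integral_sub i1 i2, ← integral_mul_const]
  refine integral_congr_ae (Filter.Eventually.of_forall fun v => ?_)
  have e1 : exp (-w) / 2 * (g (w - v) * exp (1 / 2 * (w - v))) =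
      exp (-(w + v) / 2) / 2 * g (w - v) := by
    have : exp (-(w + v) / 2) = exp (-w) * exp (1 / 2 * (w - v)) := by rw [← exp_add]; ring_nf
    rw [this]; ring
  have e2 : exp (β * w) = exp (β / 2 * (w + v)) * exp (β / 2 * (w - v)) := by
    rw [← exp_add]; ring_nf
  simp only [ContinuousLinearMap.mul_apply', thetaTail]
  rw [show 2 * w - (w + v) = w - v by ring, e1, e2]
  ring

theorem integrable_reducedKernel (h : TwistedTheta g W) (h0 : 0 < β) (h1 : β < 1) :
    Integrable (reducedKernel g β) := by
  have := (integrable_thetaTail h0 h1).integrable_convolution (ContinuousLinearMap.mul ℝ ℝ)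
    (h.integrable_mul_exp (β / 2))
  have h2 := this.comp_mul_left' (two_ne_zero : (2 : ℝ) ≠ 0)
  refine h2.congr (Filter.Eventually.of_forall fun w => ?_)
  exact (h.reducedKernel_eq_convolution β w).symm

theorem integral_reducedKernel (h : TwistedTheta g W) (h0 : 0 < β) (h1 : β < 1)
    (hz : ∫ p, g p * exp (β / 2 * p) = 0) : ∫ w, reducedKernel g β w = 0 := by
  have := integral_convolution (μ := volume) (ContinuousLinearMap.mul ℝ ℝ)
    (integrable_thetaTail h0 h1) (h.integrable_mul_exp (β / 2))
  rw [hz] at this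
  simp_rw [h.reducedKernel_eq_convolution β]
  rw [Measure.integral_comp_mul_left (convolution (thetaTail β) (fun p => g p * exp (β / 2 * p))
      (ContinuousLinearMap.mul ℝ ℝ) volume) 2, this]
  simp

theorem integral_productKernel (h : TwistedTheta g W) (h0 : 0 < β) (h1 : β < 1)
    (hz : ∫ p, g p * exp (β / 2 * p) = 0)
    (hk : IntegrableOn (fun w => productKernel g w * exp w) (Ioi 0))
    (hkm : Measurable (productKernel g)) :
    ∫ w in Ioi (0 : ℝ), productKernel g w * (exp (β * w) + W * exp ((1 - β) * w)) =
      residueConst g / (1 - β) + W * residueConst g / β := by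
  have hH := h.integrable_reducedKernel h0 h1
  have hsplit : ∫ w in Ioi (0 : ℝ), (reducedKernel g β w + reducedKernel g β (-w)) = 0 := by
    rw [integral_add hH.integrableOn hH.comp_neg.integrableOn, integral_comp_neg_Ioi, neg_zero,
      ← h.integral_reducedKernel h0 h1 hz, add_comm,
      intervalIntegral.integral_Iic_add_Ioi hH.integrableOn hH.integrableOn]
  have hkint : ∀ s : ℝ, s ≤ 1 →
      IntegrableOn (fun w => productKernel g w * exp (s * w)) (Ioi 0) := fun s hs => by
    refine Integrable.mono hk (hkm.mul (by fun_prop)).aestronglyMeasurable ?_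
    filter_upwards [ae_restrict_mem measurableSet_Ioi] with w hw
    rw [norm_mul, norm_mul, norm_of_nonneg (exp_pos _).le, norm_of_nonneg (exp_pos _).le]
    gcongr
    nlinarith [mem_Ioi.1 hw]
  have hexp : ∀ s : ℝ, 0 < s → IntegrableOn (fun w => exp (-s * w)) (Ioi 0) := fun s hs =>
    integrableOn_exp_mul_Ioi (by linarith) 0
  have hval : ∀ s : ℝ, 0 < s → ∫ w in Ioi (0 : ℝ), exp (-s * w) = 1 / s := fun s hs => by
    rw [integral_exp_mul_Ioi (by linarith) 0]; simp
  have hpt : ∀ w, reducedKernel g β w + reducedKernel g β (-w) =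
      productKernel g w * (exp (β * w) + W * exp ((1 - β) * w)) -
      (residueConst g * exp (-(1 - β) * w) + W * residueConst g * exp (-β * w)) := by
    intro w
    rw [reducedKernel, reducedKernel, h.productKernel_neg, neg_neg]
    have e1 : exp (-(1 - β) * w) = exp (-w) * exp (β * w) := by rw [← exp_add]; ring_nf
    have e2 : exp ((1 - β) * w) = exp w * exp (-β * w) := by rw [← exp_add]; ring_nf
    rw [e1, e2, show β * -w = -β * w by ring]
    ring
  simp_rw [hpt] at hsplit
  have i1 : IntegrableOn (fun w => productKernel g w * (exp (β * w) + W * exp ((1 - β) * w)))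
      (Ioi 0) := by
    refine ((hkint β h1.le).add ((hkint (1 - β) (by linarith)).const_mul W)).congr
      (Filter.Eventually.of_forall fun w => ?_)
    simp only [Pi.add_apply]
    ring
  have j1 := (hexp (1 - β) (by linarith)).const_mul (residueConst g)
  have j2 := (hexp β h0).const_mul (W * residueConst g)
  rw [integral_sub i1 (by exact j1.add j2), integral_add j1 j2, integral_const_mul, integral_const_mul,
    hval _ (by linarith), hval _ h0] at hsplit
  rw [sub_eq_zero] at hsplit
  rw [hsplit]
  ring

theorem productKernel_sub_le (h : TwistedTheta g 1) (h0 : 0 < β) (h1 : β < 1)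
    (hz : ∫ p, g p * exp (β / 2 * p) = 0)
    (hk : IntegrableOn (fun w => productKernel g w * exp w) (Ioi 0))
    (hkm : Measurable (productKernel g)) (hk0 : ∀ w, 0 ≤ productKernel g w) :
    productKernel g (-log 2) - 2 * productKernel g (log 2) ≤
      2 * (β * (1 - β)) * ∫ w in Ioi (0 : ℝ), productKernel g w * exp w := by
  have hA := h.productKernel_neg (log 2)
  rw [exp_log two_pos] at hA
  have hI := h.integral_productKernel h0 h1 hz hk hkm
  have hle : ∫ w in Ioi (0 : ℝ), productKernel g w * (exp (β * w) + 1 * exp ((1 - β) * w)) ≤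
      ∫ w in Ioi (0 : ℝ), 2 * (productKernel g w * exp w) := by
    refine integral_mono_of_nonneg (Filter.Eventually.of_forall fun w => ?_) (hk.const_mul 2) ?_
    · exact mul_nonneg (hk0 w) (by positivity)
    · filter_upwards [ae_restrict_mem measurableSet_Ioi] with w hw
      have hw' : 0 < w := hw
      have e1 : exp (β * w) ≤ exp w := exp_le_exp.2 (by nlinarith)
      have e2 : exp ((1 - β) * w) ≤ exp w := exp_le_exp.2 (by nlinarith)
      nlinarith [hk0 w]
  rw [hI, integral_const_mul] at hle
  have hb : 0 < β * (1 - β) := mul_pos h0 (by linarith)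
  have hA2 : residueConst g = β * (1 - β) *
      (residueConst g / (1 - β) + 1 * residueConst g / β) := by
    have : 1 - β ≠ 0 := by linarith
    field_simp; ring
  have := mul_le_mul_of_nonneg_left hle hb.le
  linarith

theorem exp_sub_exp_le {w : ℝ} (hβ : 1 / 2 ≤ β) (h1 : β < 1) (hw : 0 ≤ w) :
    exp (β * w) - exp ((1 - β) * w) ≤ (2 * β - 1) * exp w := by
  have hb : 0 < β := by linarith
  have hderiv : ∀ x, HasDerivAt
      (fun x => (2 * β - 1) * exp x - (exp (β * x) - exp ((1 - β) * x)))
      ((2 * β - 1) * exp x - (exp (β * x) * β - exp ((1 - β) * x) * (1 - β))) x := fun x => by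
    have e1 := ((hasDerivAt_id x).const_mul β).exp
    have e2 := ((hasDerivAt_id x).const_mul (1 - β)).exp
    simp only [id, mul_one] at e1 e2
    exact ((hasDerivAt_exp x).const_mul _).sub (e1.sub e2)
  have hpos : ∀ x, 0 ≤ (2 * β - 1) * exp x - (exp (β * x) * β - exp ((1 - β) * x) * (1 - β)) := by
    intro x
    have h2 := convexOn_exp.2 (mem_univ x) (mem_univ ((1 - β) * x))
      (div_nonneg (by linarith) hb.le : 0 ≤ (2 * β - 1) / β)
      (div_nonneg (by linarith) hb.le : 0 ≤ (1 - β) / β)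
      (by field_simp; ring)
    simp only [smul_eq_mul] at h2
    have h3 : (2 * β - 1) / β * x + (1 - β) / β * ((1 - β) * x) = β * x := by field_simp; ring
    rw [h3] at h2
    have h4 := mul_le_mul_of_nonneg_left h2 hb.le
    have h5 : β * ((2 * β - 1) / β * exp x + (1 - β) / β * exp ((1 - β) * x)) =
      (2 * β - 1) * exp x + (1 - β) * exp ((1 - β) * x) := by field_simp
    linarith
  have hm := monotone_of_deriv_nonneg (fun x => (hderiv x).differentiableAt)
    (fun x => (hderiv x).deriv ▸ hpos x)
  have := hm hw
  simp only [mul_zero, exp_zero] at this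
  linarith

theorem productKernel_zero_le (h : TwistedTheta g (-1)) (h0 : 1 / 2 < β) (h1 : β < 1)
    (hz : ∫ p, g p * exp (β / 2 * p) = 0)
    (hk : IntegrableOn (fun w => productKernel g w * exp w) (Ioi 0))
    (hkm : Measurable (productKernel g)) (hk0 : ∀ w, 0 ≤ productKernel g w) :
    productKernel g 0 ≤ β * (1 - β) * ∫ w in Ioi (0 : ℝ), productKernel g w * exp w := by
  have hA := h.productKernel_neg 0
  simp only [neg_zero, exp_zero] at hA
  have hI := h.integral_productKernel (by linarith) h1 hz hk hkm
  have hle : ∫ w in Ioi (0 : ℝ), productKernel g w * (exp (β * w) + -1 * exp ((1 - β) * w)) ≤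
      ∫ w in Ioi (0 : ℝ), (2 * β - 1) * (productKernel g w * exp w) := by
    refine integral_mono_of_nonneg ?_ (hk.const_mul _) ?_
    · filter_upwards [ae_restrict_mem measurableSet_Ioi] with w hw
      have hw' : 0 < w := hw
      have : exp ((1 - β) * w) ≤ exp (β * w) := exp_le_exp.2 (by nlinarith)
      exact mul_nonneg (hk0 w) (by linarith)
    · filter_upwards [ae_restrict_mem measurableSet_Ioi] with w hw
      have := mul_le_mul_of_nonneg_left (exp_sub_exp_le h0.le h1 (mem_Ioi.1 hw).le) (hk0 w)
      linarith
  rw [hI, integral_const_mul] at hle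
  have hb : 0 < β * (1 - β) := mul_pos (by linarith) (by linarith)
  have hA2 : (2 * β - 1) * residueConst g = β * (1 - β) *
      (residueConst g / (1 - β) + -1 * residueConst g / β) := by
    have : 1 - β ≠ 0 := by linarith
    have : β ≠ 0 := by linarith
    field_simp; ring
  have := mul_le_mul_of_nonneg_left hle hb.le
  rw [← hA2] at this
  have h3 : productKernel g 0 = residueConst g := by linarith
  rw [h3]
  refine le_of_mul_le_mul_left (a := 2 * β - 1) ?_ (by linarith)
  linarith

end TwistedTheta

end

section

open Real MeasureTheory Set

theorem hasDerivAt_two_sinh_half (u : ℝ) : HasDerivAt (fun u => 2 * sinh (u / 2)) (cosh (u / 2)) u := by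
  have h := (((hasDerivAt_id u).div_const 2).sinh).const_mul 2
  simp only [id] at h
  convert! h using 1
  ring

theorem two_sinh_half_bijective : Function.Bijective fun u : ℝ => 2 * sinh (u / 2) := by
  constructor
  · intro a b h
    have := sinh_injective (mul_left_cancel₀ two_ne_zero h)
    linarith
  · intro y
    obtain ⟨x, hx⟩ := sinh_surjective (y / 2)
    exact ⟨2 * x, by simp [hx]; ring⟩

theorem two_mul_cosh_eq (u : ℝ) : 2 * cosh u = 2 + (2 * sinh (u / 2)) ^ 2 := by
  have h := cosh_two_mul (u / 2)
  have h2 := cosh_sq (u / 2)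
  rw [show 2 * (u / 2) = u by ring] at h
  rw [h, h2]; ring

theorem integrable_exp_cosh_mul_cosh {b : ℝ} (hb : 0 < b) :
    Integrable (fun u => exp (-(2 * b) * cosh u) * cosh (u / 2)) ∧
    ∫ u, exp (-(2 * b) * cosh u) * cosh (u / 2) = √(π / b) * exp (-(2 * b)) := by
  have hd : ∀ u ∈ (univ : Set ℝ), HasDerivWithinAt (fun u => 2 * sinh (u / 2)) (cosh (u / 2)) univ u :=
    fun u _ => (hasDerivAt_two_sinh_half u).hasDerivWithinAt
  have hinj : InjOn (fun u : ℝ => 2 * sinh (u / 2)) univ := two_sinh_half_bijective.1.injOn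
  have himg : (fun u : ℝ => 2 * sinh (u / 2)) '' univ = univ :=
    image_univ_of_surjective two_sinh_half_bijective.2
  have h1 := integrableOn_image_iff_integrableOn_abs_deriv_smul MeasurableSet.univ hd hinj
    (fun s => exp (-(2 * b)) * exp (-b * s ^ 2))
  have h2 := integral_image_eq_integral_abs_deriv_smul MeasurableSet.univ hd hinj
    (fun s => exp (-(2 * b)) * exp (-b * s ^ 2))
  have hpt : ∀ u : ℝ, |cosh (u / 2)| • (exp (-(2 * b)) * exp (-b * (2 * sinh (u / 2)) ^ 2)) =
      exp (-(2 * b) * cosh u) * cosh (u / 2) := fun u => by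
    rw [abs_of_pos (cosh_pos _), smul_eq_mul, ← exp_add, mul_comm]
    congr 2
    linear_combination b * two_mul_cosh_eq u
  simp_rw [hpt] at h1 h2
  rw [himg, integrableOn_univ, integrableOn_univ] at h1
  rw [himg, setIntegral_univ, setIntegral_univ, integral_const_mul, integral_gaussian] at h2
  exact ⟨h1.1 ((integrable_exp_neg_mul_sq hb).const_mul _), by rw [← h2]; ring⟩

theorem integrable_exp_neg_cosh {x : ℝ} (hx : 0 < x) : Integrable fun u => exp (-x * cosh u) := by
  have h := (integrable_exp_cosh_mul_cosh (half_pos hx)).1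
  refine h.mono' (by fun_prop) (Filter.Eventually.of_forall fun u => ?_)
  rw [norm_of_nonneg (exp_pos _).le, show -(2 * (x / 2)) = -x by ring]
  exact le_mul_of_one_le_right (exp_pos _).le (one_le_cosh _)

theorem integrable_exp_cosh_mul_exp_half {b : ℝ} (hb : 0 < b) :
    Integrable (fun u => exp (-(2 * b) * cosh u) * exp (-u / 2)) := by
  have h := ((integrable_exp_cosh_mul_cosh hb).1).const_mul 2
  refine h.mono' (by fun_prop) (Filter.Eventually.of_forall fun u => ?_)
  rw [norm_of_nonneg (by positivity)]
  have : exp (-u / 2) ≤ 2 * cosh (u / 2) := by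
    rw [cosh_eq, neg_div]; linarith [exp_pos (u / 2)]
  nlinarith [exp_pos (-(2 * b) * cosh u)]

theorem integral_exp_cosh_mul_exp_half {b : ℝ} (hb : 0 < b) :
    ∫ u, exp (-(2 * b) * cosh u) * exp (-u / 2) = √(π / b) * exp (-(2 * b)) := by
  have h1 := integrable_exp_cosh_mul_exp_half hb
  have h2 := h1.comp_neg
  have h3 : ∫ u, exp (-(2 * b) * cosh (-u)) * exp (-(-u) / 2) =
      ∫ u, exp (-(2 * b) * cosh u) * exp (-u / 2) :=
    integral_neg_eq_self (fun u => exp (-(2 * b) * cosh u) * exp (-u / 2)) volume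
  have h4 := integral_add h1 h2
  rw [h3] at h4
  rw [← (integrable_exp_cosh_mul_cosh hb).2]
  have h5 : ∫ u, (exp (-(2 * b) * cosh u) * exp (-u / 2) +
      exp (-(2 * b) * cosh (-u)) * exp (-(-u) / 2)) =
      2 * ∫ u, exp (-(2 * b) * cosh u) * cosh (u / 2) := by
    rw [← integral_const_mul]
    refine integral_congr_ae (Filter.Eventually.of_forall fun u => ?_)
    simp only [cosh_neg, neg_neg]
    rw [cosh_eq (u / 2), neg_div]; ring
  linarith

/-- The measure along which the product kernel is averaged: Lebesgue measure in the even case,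
a point mass in the odd case. -/
noncomputable def averagingMeasure (κ : ℕ) (Q : ℝ) : Measure ℝ :=
  if κ = 0 then volume else ENNReal.ofReal Q • Measure.dirac 0

instance (κ : ℕ) (Q : ℝ) : SFinite (averagingMeasure κ Q) := by
  unfold averagingMeasure; split_ifs <;> infer_instance

theorem integrable_averagingMeasure (κ : ℕ) (Q : ℝ) {x : ℝ} (hx : 0 < x) :
    Integrable (fun u => exp (-x * cosh u)) (averagingMeasure κ Q) := by
  unfold averagingMeasure
  split_ifs
  · exact integrable_exp_neg_cosh hx
  · exact (integrable_dirac (by simp)).smul_measure ENNReal.ofReal_ne_top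

theorem averaging_identity {κ : ℕ} (hκ : κ = 0 ∨ κ = 1) {Q b : ℝ} (hQ : 0 < Q) (hb : 0 < b) :
    Integrable (fun u => exp (-(2 * b) * cosh u) * exp (-u / 2) ^ κ) ∧
    ∫ u, exp (-(2 * b) * cosh u) * exp (-u / 2) ^ κ =
      ((√(b * Q ^ 2 / π)) ^ κ)⁻¹ * ∫ u, exp (-(2 * b) * cosh u) ∂(averagingMeasure κ Q) := by
  rcases hκ with rfl | rfl
  · simpa [averagingMeasure] using integrable_exp_neg_cosh (by positivity : 0 < 2 * b)
  · simp only [pow_one]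
    refine ⟨integrable_exp_cosh_mul_exp_half hb, ?_⟩
    rw [integral_exp_cosh_mul_exp_half hb]
    simp only [averagingMeasure, one_ne_zero, if_false, integral_smul_measure, integral_dirac,
      ENNReal.toReal_ofReal hQ.le, cosh_zero, mul_one, smul_eq_mul]
    rw [show b * Q ^ 2 / π = (π / b)⁻¹ * Q ^ 2 by field_simp, sqrt_mul (by positivity),
      sqrt_sq hQ.le, sqrt_inv]
    field_simp

/-- The twisted theta series attached to `f`, in logarithmic coordinates. -/
noncomputable def twistedThetaSeries (f : ℕ → ℝ) (κ : ℕ) (Q p : ℝ) : ℝ :=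
  ∑' n : ℕ+, f n * (n * exp (p / 2)) ^ κ * exp (-π * exp p / Q ^ 2 * (n : ℝ) ^ 2)

/-- The Laplace-type transform of the averaging measure. -/
noncomputable def averagedExp (κ : ℕ) (Q x : ℝ) : ℝ :=
  ∫ u, exp (-x * cosh u) ∂(averagingMeasure κ Q)

theorem averagedExp_nonneg (κ : ℕ) (Q x : ℝ) : 0 ≤ averagedExp κ Q x :=
  integral_nonneg fun _ => (exp_pos _).le

theorem averagedExp_le {x₀ x : ℝ} (κ : ℕ) (Q : ℝ) (h0 : 0 < x₀) (hx : x₀ ≤ x) :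
    averagedExp κ Q x ≤ exp (-x / 2) * averagedExp κ Q (x₀ / 2) := by
  unfold averagedExp
  rw [← integral_const_mul]
  refine integral_mono (integrable_averagingMeasure κ Q (by linarith))
    ((integrable_averagingMeasure κ Q (by linarith)).const_mul _) fun u => ?_
  simp only
  rw [← exp_add]
  refine exp_le_exp.2 ?_
  nlinarith [one_le_cosh u]

theorem summable_averagedExp (κ : ℕ) (Q : ℝ) {y : ℝ} (hy : 0 < y) :
    Summable fun p : ℕ+ × ℕ+ => averagedExp κ Q (y * ((p.1 * p.2 : ℕ) : ℝ)) := by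
  have hs := (summable_exp_neg_mul_pnat (a := y / 4) (by positivity))
  have hprod := (hs.mul_of_nonneg hs (fun _ => (exp_pos _).le) (fun _ => (exp_pos _).le)).mul_right
    (averagedExp κ Q (y / 2))
  refine Summable.of_nonneg_of_le (fun _ => averagedExp_nonneg _ _ _) (fun p => ?_) hprod
  have h1 := one_le_pnat_cast p.1
  have h2 := one_le_pnat_cast p.2
  refine (averagedExp_le κ Q hy (x := y * ((p.1 * p.2 : ℕ) : ℝ)) ?_).trans ?_
  · push_cast; exact le_mul_of_one_le_right hy.le (by nlinarith)
  · rw [← exp_add]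
    refine mul_le_mul_of_nonneg_right (exp_le_exp.2 ?_) (averagedExp_nonneg _ _ _)
    push_cast
    nlinarith [mul_nonneg hy.le (mul_nonneg (sub_nonneg.2 h1) (sub_nonneg.2 h2)),
      mul_nonneg hy.le (mul_nonneg (sub_nonneg.2 h1) (zero_le_one.trans h2)),
      mul_nonneg hy.le (mul_nonneg (sub_nonneg.2 h2) (zero_le_one.trans h1))]

theorem kernel_term_identity {κ : ℕ} (hκ : κ = 0 ∨ κ = 1) {Q : ℝ} (hQ : 0 < Q) (m n : ℕ+) (w : ℝ) :
    Integrable (fun v => exp (-π * exp (w + v) * (m : ℝ) ^ 2) *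
      ((n * exp ((w - v) / 2)) ^ κ * exp (-π * exp (w - v) / Q ^ 2 * (n : ℝ) ^ 2))) ∧
    ∫ v, exp (-π * exp (w + v) * (m : ℝ) ^ 2) *
      ((n * exp ((w - v) / 2)) ^ κ * exp (-π * exp (w - v) / Q ^ 2 * (n : ℝ) ^ 2)) =
      averagedExp κ Q (2 * π / Q * exp w * ((m * n : ℕ) : ℝ)) := by
  have hm : (0 : ℝ) < m := by exact_mod_cast m.pos
  have hn : (0 : ℝ) < n := by exact_mod_cast n.pos
  set b := π * (m * n) * exp w / Q with hb
  have hb0 : 0 < b := by positivity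
  set l := log (n / (m * Q)) with hl
  have hel : exp l = n / (m * Q) := exp_log (by positivity)
  set C := √(b * Q ^ 2 / π) with hC
  have hC0 : 0 < C := sqrt_pos.2 (by positivity)
  have hCe : C = n * exp ((w - l) / 2) := by
    rw [hC, exp_half, ← sqrt_sq hn.le, ← sqrt_mul (by positivity)]
    congr 1
    rw [exp_sub, hel, hb]
    field_simp
  obtain ⟨hi, he⟩ := averaging_identity hκ hQ hb0
  have hpt : ∀ u, exp (-π * exp (w + (u + l)) * (m : ℝ) ^ 2) *
      ((n * exp ((w - (u + l)) / 2)) ^ κ * exp (-π * exp (w - (u + l)) / Q ^ 2 * (n : ℝ) ^ 2)) =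
      C ^ κ * (exp (-(2 * b) * cosh u) * exp (-u / 2) ^ κ) := by
    intro u
    have e1 : (n : ℝ) * exp ((w - (u + l)) / 2) = C * exp (-u / 2) := by
      rw [hCe, mul_assoc, ← exp_add]; ring_nf
    have e2 : -π * exp (w + (u + l)) * (m : ℝ) ^ 2 + -π * exp (w - (u + l)) / Q ^ 2 * (n : ℝ) ^ 2
        = -(2 * b) * cosh u := by
      rw [cosh_eq, exp_add, exp_add, exp_sub, exp_add, hel, exp_neg, hb]
      field_simp
      ring
    rw [e1, mul_pow, ← e2, exp_add (-π * exp (w + (u + l)) * (m : ℝ) ^ 2)]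
    ring
  constructor
  · have h := hi.const_mul (C ^ κ)
    simp_rw [← hpt] at h
    have h' := h.comp_sub_right l
    simpa using h'
  · rw [← integral_add_right_eq_self _ l]
    simp_rw [hpt]
    rw [integral_const_mul, he, ← mul_assoc, mul_inv_cancel₀ (by positivity), one_mul, averagedExp]
    refine integral_congr_ae (Filter.Eventually.of_forall fun u => ?_)
    simp only [hb]
    congr 2
    push_cast; ring

theorem summable_twistedThetaSeries {f : ℕ → ℝ} (hf : ∀ n, |f n| ≤ 1) {κ : ℕ}
    (hκ : κ = 0 ∨ κ = 1) {Q : ℝ} (hQ : 0 < Q) (p : ℝ) :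
    Summable fun n : ℕ+ =>
      ‖f n * (n * exp (p / 2)) ^ κ * exp (-π * exp p / Q ^ 2 * (n : ℝ) ^ 2)‖ := by
  set d := π * exp p / Q ^ 2 with hd
  have hd0 : 0 < d := by positivity
  have hs : Summable fun n : ℕ+ => (n : ℝ) ^ 1 * exp (-d * n) := by
    have := (Real.summable_pow_mul_exp_neg_nat_mul 1 hd0).comp_injective PNat.coe_injective
    exact this
  refine Summable.of_nonneg_of_le (fun _ => norm_nonneg _) (fun n => ?_)
    (hs.mul_left (exp (p / 2) ^ κ))
  have h1 := one_le_pnat_cast n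
  rw [norm_mul, norm_mul, norm_of_nonneg (exp_pos _).le, norm_eq_abs, norm_of_nonneg (by positivity),
    mul_pow]
  have h2 : (n : ℝ) ^ κ ≤ (n : ℝ) ^ 1 := pow_le_pow_right₀ h1 (by omega)
  have h3 : exp (-π * exp p / Q ^ 2 * (n : ℝ) ^ 2) ≤ exp (-d * n) := by
    refine exp_le_exp.2 ?_
    rw [show -π * exp p / Q ^ 2 = -d by rw [hd]; ring]
    nlinarith [pnat_cast_le_sq n]
  calc |f n| * ((n : ℝ) ^ κ * exp (p / 2) ^ κ) * exp (-π * exp p / Q ^ 2 * (n : ℝ) ^ 2)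
      ≤ 1 * ((n : ℝ) ^ 1 * exp (p / 2) ^ κ) * exp (-d * n) := by gcongr; exact hf n
    _ = _ := by ring

theorem productKernel_twistedThetaSeries {f : ℕ → ℝ} (hf : ∀ n, |f n| ≤ 1) {κ : ℕ}
    (hκ : κ = 0 ∨ κ = 1) {Q : ℝ} (hQ : 0 < Q) (w : ℝ) :
    productKernel (twistedThetaSeries f κ Q) w =
      ∑' p : ℕ+ × ℕ+, f p.2 * averagedExp κ Q (2 * π / Q * exp w * ((p.1 * p.2 : ℕ) : ℝ)) := by
  set F : ℕ+ × ℕ+ → ℝ → ℝ := fun p v => f p.2 * (exp (-π * exp (w + v) * (p.1 : ℝ) ^ 2) *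
      ((p.2 * exp ((w - v) / 2)) ^ κ * exp (-π * exp (w - v) / Q ^ 2 * (p.2 : ℝ) ^ 2))) with hF
  have hterm := fun p : ℕ+ × ℕ+ => kernel_term_identity hκ hQ p.1 p.2 w
  have hInt : ∀ p, Integrable (F p) := fun p => (hterm p).1.const_mul _
  have hnorm : ∀ p : ℕ+ × ℕ+, ∫ v, ‖F p v‖ =
      |f p.2| * averagedExp κ Q (2 * π / Q * exp w * ((p.1 * p.2 : ℕ) : ℝ)) := fun p => by
    rw [← (hterm p).2, ← integral_const_mul]
    refine integral_congr_ae (Filter.Eventually.of_forall fun v => ?_)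
    simp only [hF]
    rw [norm_mul, norm_eq_abs (f _), norm_of_nonneg (by positivity)]
  have hsum : Summable fun p => ∫ v, ‖F p v‖ := by
    simp_rw [hnorm]
    refine Summable.of_nonneg_of_le (fun p => mul_nonneg (abs_nonneg _) (averagedExp_nonneg _ _ _))
      (fun p => ?_) (summable_averagedExp κ Q (y := 2 * π / Q * exp w) (by positivity))
    exact mul_le_of_le_one_left (averagedExp_nonneg _ _ _) (hf _)
  have h := (hasSum_integral_of_summable_integral_norm hInt hsum).tsum_eq
  have hl : ∀ p, ∫ v, F p v =
      f p.2 * averagedExp κ Q (2 * π / Q * exp w * ((p.1 * p.2 : ℕ) : ℝ)) := fun p => by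
    rw [← (hterm p).2, ← integral_const_mul]
  simp_rw [hl] at h
  rw [h, productKernel]
  refine integral_congr_ae (Filter.Eventually.of_forall fun v => ?_)
  have hn1 : Summable fun m : ℕ+ => ‖exp (-π * exp (w + v) * (m : ℝ) ^ 2)‖ := by
    simpa only [norm_of_nonneg (exp_pos _).le] using summable_psi (exp_pos (w + v))
  simp only [psi, twistedThetaSeries]
  rw [tsum_mul_tsum_of_summable_norm hn1 (summable_twistedThetaSeries hf hκ hQ (w - v))]
  refine tsum_congr fun p => ?_
  simp only [hF]
  ring

theorem squareSumAverage_averagingMeasure (κ : ℕ) (Q : ℝ) (ρ : ℕ → ℝ) {c : ℝ} (hc : 0 < c) (w : ℝ) :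
    squareSumAverage (averagingMeasure κ Q) ρ c w =
      ∑' (a : ℕ+) (j : ℕ+), ENNReal.ofReal (ρ a) *
        ENNReal.ofReal (averagedExp κ Q (c * exp w * ((j ^ 2 * a : ℕ) : ℝ))) := by
  unfold squareSumAverage squareSum
  rw [lintegral_tsum fun a => (Measurable.tsum fun j => by fun_prop).aemeasurable]
  refine tsum_congr fun a => ?_
  rw [lintegral_tsum fun j => (by fun_prop)]
  refine tsum_congr fun j => ?_
  have hj : 0 < ((j ^ 2 * a : ℕ) : ℝ) := Nat.cast_pos.2 (Nat.mul_pos (pow_pos j.pos 2) a.pos)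
  generalize ((j ^ 2 * a : ℕ) : ℝ) = N at hj ⊢
  rw [lintegral_const_mul _ (by fun_prop), averagedExp, ofReal_integral_eq_lintegral_ofReal
    (integrable_averagingMeasure κ Q (by positivity))
    (Filter.Eventually.of_forall fun _ => (exp_pos _).le)]
  congr 1
  refine lintegral_congr fun u => ?_
  congr 2
  ring

theorem ofReal_productKernel {f : ArithmeticFunction ℝ} (hf1 : f 1 = 1)
    (hfm : ∀ m n, f (m * n) = f m * f n) (hfv : ∀ n, f n = 0 ∨ f n = 1 ∨ f n = -1) {κ : ℕ}
    (hκ : κ = 0 ∨ κ = 1) {Q : ℝ} (hQ : 0 < Q) (w : ℝ) :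
    0 ≤ productKernel (twistedThetaSeries f κ Q) w ∧
    ENNReal.ofReal (productKernel (twistedThetaSeries f κ Q) w) =
      squareSumAverage (averagingMeasure κ Q) (squarefreeIndicator * f : ArithmeticFunction ℝ)
        (2 * π / Q) w := by
  have habs : ∀ n, |f n| ≤ 1 := fun n => by rcases hfv n with h | h | h <;> simp [h]
  have hc : 0 < 2 * π / Q * exp w := by positivity
  rw [productKernel_twistedThetaSeries habs hκ hQ,
    squareSumAverage_averagingMeasure κ Q _ (by positivity)]
  exact ofReal_tsum_twisted hf1 hfm hfv
    (φ := fun N => averagedExp κ Q (2 * π / Q * exp w * (N : ℝ)))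
    (fun _ => averagedExp_nonneg _ _ _) (summable_averagedExp κ Q hc)

end

section

open Real MeasureTheory Set

theorem averagedExp_pos (κ : ℕ) {Q x : ℝ} (hQ : 0 < Q) (hx : 0 < x) : 0 < averagedExp κ Q x := by
  have : NeZero (averagingMeasure κ Q) := ⟨by
    unfold averagingMeasure
    split_ifs
    · exact NeZero.ne _
    · rw [Ne, ← Measure.measure_univ_eq_zero]
      simp [hQ]⟩
  exact integral_exp_pos (integrable_averagingMeasure κ Q hx)

theorem squareSumAverage_pos {ρ : ℕ → ℝ} (hρ : 0 < ρ 1) (κ : ℕ) {Q c : ℝ} (hQ : 0 < Q) (hc : 0 < c)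
    (w : ℝ) : 0 < squareSumAverage (averagingMeasure κ Q) ρ c w := by
  rw [squareSumAverage_averagingMeasure κ Q ρ hc]
  refine lt_of_lt_of_le ?_ ((ENNReal.le_tsum (1 : ℕ+)).trans (ENNReal.le_tsum (1 : ℕ+)))
  refine ENNReal.mul_pos ?_ ?_
  · simpa using hρ
  · simpa using averagedExp_pos κ hQ (by positivity)

theorem mul_log_sq_le {x y : ℝ} (hx : 1 < x) (hxy : x ≤ y) : x * log x ^ 2 ≤ y * log y ^ 2 := by
  have h0 := log_pos hx
  have h1 := log_le_log (by linarith) hxy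
  have : 0 ≤ y := by linarith
  gcongr

theorem sqrt_mul_log_sq (q : ℕ) : √q * log q ^ 2 = 4 * (√q * log √q ^ 2) := by
  rw [log_sqrt (Nat.cast_nonneg _)]; ring

theorem measurable_productKernel {f : ArithmeticFunction ℝ} (hf1 : f 1 = 1)
    (hfm : ∀ m n, f (m * n) = f m * f n) (hfv : ∀ n, f n = 0 ∨ f n = 1 ∨ f n = -1) {κ : ℕ}
    (hκ : κ = 0 ∨ κ = 1) {Q : ℝ} (hQ : 0 < Q) : Measurable (productKernel (twistedThetaSeries f κ Q)) := by
  have h : productKernel (twistedThetaSeries f κ Q) = fun w => (squareSumAverage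
      (averagingMeasure κ Q) (squarefreeIndicator * f : ArithmeticFunction ℝ)
        (2 * π / Q) w).toReal := by
    ext w
    obtain ⟨h0, h⟩ := ofReal_productKernel hf1 hfm hfv hκ hQ w
    rw [← h, ENNReal.toReal_ofReal h0]
  rw [h]
  exact (measurable_squareSumAverage _ _ _).ennreal_toReal

theorem lintegral_productKernel {f : ArithmeticFunction ℝ} (hf1 : f 1 = 1)
    (hfm : ∀ m n, f (m * n) = f m * f n) (hfv : ∀ n, f n = 0 ∨ f n = 1 ∨ f n = -1) {κ : ℕ}
    (hκ : κ = 0 ∨ κ = 1) {Q : ℝ} (hQ : 0 < Q) :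
    ∫⁻ w in Ioi (0 : ℝ), ENNReal.ofReal (productKernel (twistedThetaSeries f κ Q) w * exp w) =
      ∫⁻ w in Ioi (0 : ℝ), squareSumAverage (averagingMeasure κ Q)
        (squarefreeIndicator * f : ArithmeticFunction ℝ) (2 * π / Q) w * ENNReal.ofReal (exp w) := by
  refine lintegral_congr fun w => ?_
  obtain ⟨h0, h⟩ := ofReal_productKernel hf1 hfm hfv hκ hQ w
  rw [ENNReal.ofReal_mul h0, h]

theorem integrableOn_productKernel {f : ArithmeticFunction ℝ} (hf1 : f 1 = 1)
    (hfm : ∀ m n, f (m * n) = f m * f n) (hfv : ∀ n, f n = 0 ∨ f n = 1 ∨ f n = -1) {κ : ℕ}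
    (hκ : κ = 0 ∨ κ = 1) {Q : ℝ} (hQ : 0 < Q) {B : ℝ} (hB : 0 < B) {w₀ : ℝ}
    (h : ENNReal.ofReal B * ∫⁻ w in Ioi (0 : ℝ), squareSumAverage (averagingMeasure κ Q)
        (squarefreeIndicator * f : ArithmeticFunction ℝ) (2 * π / Q) w * ENNReal.ofReal (exp w) ≤
        squareSumAverage (averagingMeasure κ Q)
        (squarefreeIndicator * f : ArithmeticFunction ℝ) (2 * π / Q) w₀) :
    IntegrableOn (fun w => productKernel (twistedThetaSeries f κ Q) w * exp w) (Ioi 0) := by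
  have hm := measurable_productKernel hf1 hfm hfv hκ hQ
  refine ⟨(hm.mul (by fun_prop)).aestronglyMeasurable, ?_⟩
  rw [hasFiniteIntegral_iff_ofReal (Filter.Eventually.of_forall fun w =>
    mul_nonneg (ofReal_productKernel hf1 hfm hfv hκ hQ w).1 (exp_pos _).le),
    lintegral_productKernel hf1 hfm hfv hκ hQ]
  by_contra hcon
  rw [not_lt, top_le_iff] at hcon
  rw [hcon, ENNReal.mul_top (by simpa using hB), ← (ofReal_productKernel hf1 hfm hfv hκ hQ w₀).2] at h
  exact ENNReal.ofReal_ne_top (top_le_iff.1 h)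

theorem ofReal_integral_productKernel {f : ArithmeticFunction ℝ} (hf1 : f 1 = 1)
    (hfm : ∀ m n, f (m * n) = f m * f n) (hfv : ∀ n, f n = 0 ∨ f n = 1 ∨ f n = -1) {κ : ℕ}
    (hκ : κ = 0 ∨ κ = 1) {Q : ℝ} (hQ : 0 < Q)
    (h : IntegrableOn (fun w => productKernel (twistedThetaSeries f κ Q) w * exp w) (Ioi 0)) :
    ENNReal.ofReal (∫ w in Ioi 0, productKernel (twistedThetaSeries f κ Q) w * exp w) =
      ∫⁻ w in Ioi (0 : ℝ), squareSumAverage (averagingMeasure κ Q)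
        (squarefreeIndicator * f : ArithmeticFunction ℝ) (2 * π / Q) w * ENNReal.ofReal (exp w) := by
  rw [← lintegral_productKernel hf1 hfm hfv hκ hQ, ofReal_integral_eq_lintegral_ofReal h]
  exact Filter.Eventually.of_forall fun w =>
    mul_nonneg (ofReal_productKernel hf1 hfm hfv hκ hQ w).1 (exp_pos _).le

theorem integral_productKernel_pos {f : ArithmeticFunction ℝ} (hf1 : f 1 = 1)
    (hfm : ∀ m n, f (m * n) = f m * f n) (hfv : ∀ n, f n = 0 ∨ f n = 1 ∨ f n = -1) {κ : ℕ}
    (hκ : κ = 0 ∨ κ = 1) {Q : ℝ} (hQ : 0 < Q)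
    (h : IntegrableOn (fun w => productKernel (twistedThetaSeries f κ Q) w * exp w) (Ioi 0)) :
    0 < ∫ w in Ioi 0, productKernel (twistedThetaSeries f κ Q) w * exp w := by
  rw [← ENNReal.ofReal_pos, ofReal_integral_productKernel hf1 hfm hfv hκ hQ h]
  refine (setLIntegral_pos_iff ((measurable_squareSumAverage _ _ _).mul (by fun_prop))).2 ?_
  rw [show Function.support _ = univ from ?_]
  · simp
  · ext w
    have hρ : 0 < (squarefreeIndicator * f : ArithmeticFunction ℝ) 1 := by
      rw [ArithmeticFunction.mul_apply_one, hf1]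
      simp [squarefreeIndicator]
    simpa [exp_pos] using (squareSumAverage_pos hρ κ hQ (c := 2 * π / Q) (by positivity) w).ne'

theorem le_mul_one_sub_of_sign_one {f : ArithmeticFunction ℝ} (hf1 : f 1 = 1)
    (hfm : ∀ m n, f (m * n) = f m * f n) (hfv : ∀ n, f n = 0 ∨ f n = 1 ∨ f n = -1) {κ : ℕ}
    (hκ : κ = 0 ∨ κ = 1) {Q : ℝ} (hQ : 0 < Q) {β B : ℝ} (h : TwistedTheta (twistedThetaSeries f κ Q) 1)
    (hβ0 : 0 < β) (hβ1 : β < 1)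
    (hz : ∫ p, twistedThetaSeries f κ Q p * exp (β / 2 * p) = 0) (hB0 : 0 < B) (hB : B ≤ 0.26)
    (hB' : ∀ x, 2 / Q ≤ x → x ≤ 0.22 → B ≤ 5 * x / log (2 / x) ^ 2) : B ≤ β * (1 - β) := by
  have hc := squareSumAverage_comparison (averagingMeasure κ Q)
    (squarefreeIndicator * f : ArithmeticFunction ℝ) hQ hB0.le hB hB'
  have hk := integrableOn_productKernel hf1 hfm hfv hκ hQ (by positivity)
    (le_add_self.trans hc)
  have hX := integral_productKernel_pos hf1 hfm hfv hκ hQ hk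
  have hle := h.productKernel_sub_le hβ0 hβ1 hz hk (measurable_productKernel hf1 hfm hfv hκ hQ)
    (fun w => (ofReal_productKernel hf1 hfm hfv hκ hQ w).1)
  have hp := fun w => ofReal_productKernel hf1 hfm hfv hκ hQ w
  rw [← ofReal_integral_productKernel hf1 hfm hfv hκ hQ hk, ← (hp _).2, ← (hp _).2,
    ← ENNReal.ofReal_mul (by positivity), ← ENNReal.ofReal_ofNat, ← ENNReal.ofReal_mul (by positivity),
    ← ENNReal.ofReal_add (mul_nonneg (by positivity) (hp _).1) (by positivity),
    ENNReal.ofReal_le_ofReal_iff (hp _).1] at hc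
  refine le_of_mul_le_mul_right ?_ hX
  linarith

theorem le_mul_one_sub_of_sign_neg_one {f : ArithmeticFunction ℝ} (hf1 : f 1 = 1)
    (hfm : ∀ m n, f (m * n) = f m * f n) (hfv : ∀ n, f n = 0 ∨ f n = 1 ∨ f n = -1) {κ : ℕ}
    (hκ : κ = 0 ∨ κ = 1) {Q : ℝ} (hQ : 0 < Q) {β B : ℝ} (h : TwistedTheta (twistedThetaSeries f κ Q) (-1))
    (hβ0 : 1 / 2 < β) (hβ1 : β < 1)
    (hz : ∫ p, twistedThetaSeries f κ Q p * exp (β / 2 * p) = 0) (hB0 : 0 < B)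
    (hB : B ≤ 2 * π / Q) : B ≤ β * (1 - β) := by
  have hc := squareSumAverage_comparison_self (averagingMeasure κ Q)
    (squarefreeIndicator * f : ArithmeticFunction ℝ) (hB0.trans_le hB) hB0.le hB
  have hk := integrableOn_productKernel hf1 hfm hfv hκ hQ hB0 hc
  have hX := integral_productKernel_pos hf1 hfm hfv hκ hQ hk
  have hle := h.productKernel_zero_le hβ0 hβ1 hz hk (measurable_productKernel hf1 hfm hfv hκ hQ)
    (fun w => (ofReal_productKernel hf1 hfm hfv hκ hQ w).1)
  have hp := fun w => ofReal_productKernel hf1 hfm hfv hκ hQ w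
  rw [← ofReal_integral_productKernel hf1 hfm hfv hκ hQ hk, ← (hp _).2,
    ← ENNReal.ofReal_mul (by positivity), ENNReal.ofReal_le_ofReal_iff (hp _).1] at hc
  refine le_of_mul_le_mul_right ?_ hX
  linarith

theorem log_lower_bound_of_le {q : ℕ} (hq : 38 ≤ q) : 29 / 8 ≤ log q := by
  have hq' : (38 : ℝ) ≤ q := by exact_mod_cast hq
  refine le_trans ?_ (log_le_log (by norm_num) hq')
  have h : (29 : ℝ) ≤ log (38 ^ 8) := by
    rw [le_log_iff_exp_le (by positivity), show (29 : ℝ) = ((29 : ℕ) : ℝ) * 1 by norm_num, exp_nat_mul]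
    refine (pow_le_pow_left₀ (exp_pos _).le exp_one_lt_d9.le 29).trans ?_
    norm_num
  rw [log_pow] at h
  push_cast at h
  linarith

/-- The bound for an exceptional zero, in terms of the twisted theta series. -/
theorem TwistedTheta.zero_le {f : ArithmeticFunction ℝ} (hf1 : f 1 = 1)
    (hfm : ∀ m n, f (m * n) = f m * f n) (hfv : ∀ n, f n = 0 ∨ f n = 1 ∨ f n = -1) {κ : ℕ}
    (hκ : κ = 0 ∨ κ = 1) {q : ℕ} (hq : 3 ≤ q) {W β : ℝ}
    (h : TwistedTheta (twistedThetaSeries f κ √q) W) (hW : q < 38 → W = 1)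
    (hβ0 : 0 < β) (hβ1 : β < 1)
    (hz : ∫ p, twistedThetaSeries f κ √q p * exp (β / 2 * p) = 0) :
    β ≤ 1 - 40 / (√q * log q ^ 2) := by
  have hq' : (3 : ℝ) ≤ q := by exact_mod_cast hq
  have hQ1 : 1 < √q := lt_sqrt_of_sq_lt (by linarith)
  have hQ : 0 < √(q : ℝ) := by linarith
  have hlog : 0 < log q := log_pos (by linarith)
  set δ := 40 / (√q * log q ^ 2) with hδ
  have hδ0 : 0 < δ := by positivity
  by_contra! hcon
  have hlt : β * (1 - β) < δ := by nlinarith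
  rcases h.sign with rfl | rfl
  · have hmin : 0 < min 0.26 δ := lt_min (by norm_num) hδ0
    have := le_mul_one_sub_of_sign_one hf1 hfm hfv hκ hQ h hβ0 hβ1 hz hmin (min_le_left _ _) ?_
    · rcases min_choice 0.26 δ with h' | h'
      · rw [h'] at this
        nlinarith [sq_nonneg (β - 1 / 2)]
      · rw [h'] at this
        linarith
    · intro x hx1 hx2
      refine (min_le_right _ _).trans ?_
      have hx0 : 0 < x := lt_of_lt_of_le (by positivity) hx1
      have hy1 : 1 < 2 / x := by rw [lt_div_iff₀ hx0]; linarith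
      have hy2 : 2 / x ≤ √q := by rw [div_le_iff₀ hx0]; rwa [div_le_iff₀ hQ, mul_comm] at hx1
      have hm := mul_log_sq_le hy1 hy2
      rw [hδ, sqrt_mul_log_sq]
      have hl := log_pos hy1
      calc 40 / (4 * (√q * log √q ^ 2)) = 10 / (√q * log √q ^ 2) := by
            rw [show (40 : ℝ) = 4 * 10 by norm_num, mul_div_mul_left _ _ (by norm_num)]
        _ ≤ 10 / (2 / x * log (2 / x) ^ 2) := by gcongr
        _ = _ := by field_simp; norm_num
  · have hq38 : 38 ≤ q := by
      by_contra! hlt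
      exact absurd (hW hlt) (by norm_num)
    have hL := log_lower_bound_of_le hq38
    have hq'' : (38 : ℝ) ≤ q := by exact_mod_cast hq38
    have hQ' : 6.16 ≤ √(q : ℝ) := le_sqrt_of_sq_le (by linarith)
    have hL2 : 841 / 64 ≤ log q ^ 2 := by nlinarith
    have hδ2 : δ < 1 / 2 := by
      rw [hδ, div_lt_iff₀ (by positivity)]
      nlinarith
    have := le_mul_one_sub_of_sign_neg_one hf1 hfm hfv hκ hQ h (by linarith) hβ1 hz hδ0 ?_
    · linarith
    · rw [hδ, ← div_div, div_right_comm]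
      refine div_le_div_of_nonneg_right ?_ hQ.le
      rw [div_le_iff₀ (by positivity)]
      nlinarith [pi_gt_three]

end

section

open Real Complex

theorem exists_hasSum_kernel {κ : ℕ} (hκ : κ = 0 ∨ κ = 1) (a : ℝ) {x : ℝ} (hx : 0 < x) :
    ∃ A : ℂ, HasSum (fun n : ℤ => ((n : ℂ) + a) ^ κ * rexp (-π * (n + a) ^ 2 * x)) A ∧
      HasSum (fun n : ℤ => ((x ^ (κ + 1 / 2 : ℝ) : ℝ) : ℂ)⁻¹ *
        ((-I * n) ^ κ * cexp (2 * π * I * a * n) * rexp (-π * n ^ 2 / x))) A := by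
  have hx' : 0 < 1 / x := by positivity
  rcases hκ with rfl | rfl
  · refine ⟨HurwitzZeta.evenKernel a x, ?_, ?_⟩
    · simpa using (Complex.hasSum_ofReal.2 (HurwitzZeta.hasSum_int_evenKernel a hx))
    · rw [HurwitzZeta.evenKernel_functional_equation]
      have h := (HurwitzZeta.hasSum_int_cosKernel a hx').mul_left (((x ^ (1 / 2 : ℝ) : ℝ) : ℂ)⁻¹)
      simpa [div_eq_mul_inv] using h
  · refine ⟨HurwitzZeta.oddKernel a x, ?_, ?_⟩
    · simpa using (Complex.hasSum_ofReal.2 (HurwitzZeta.hasSum_int_oddKernel a hx))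
    · rw [HurwitzZeta.oddKernel_functional_equation]
      have h := (HurwitzZeta.hasSum_int_sinKernel a hx').mul_left (((x ^ (3 / 2 : ℝ) : ℝ) : ℂ)⁻¹)
      have e : ((1 : ℕ) : ℝ) + 1 / 2 = 3 / 2 := by norm_num
      rw [e]
      simpa [div_eq_mul_inv] using h

theorem summable_pow_mul_gaussian {κ : ℕ} (hκ : κ = 0 ∨ κ = 1) {x : ℝ} (hx : 0 < x) :
    Summable fun n : ℤ => ‖(n : ℂ) ^ κ * rexp (-π * n ^ 2 * x)‖ := by
  obtain ⟨A, hA, -⟩ := exists_hasSum_kernel hκ 0 hx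
  simpa using hA.summable.norm

namespace DirichletCharacter

variable {q : ℕ} [NeZero q] (χ : DirichletCharacter ℂ q)

/-- The two-sided theta series of a Dirichlet character. -/
noncomputable def thetaInt (κ : ℕ) (y : ℝ) : ℂ :=
  ∑' n : ℤ, χ n * ((n : ℂ) ^ κ * rexp (-π * n ^ 2 * (y / q)))

theorem summable_thetaInt {κ : ℕ} (hκ : κ = 0 ∨ κ = 1) {y : ℝ} (hy : 0 < y) :
    Summable fun n : ℤ => χ n * ((n : ℂ) ^ κ * rexp (-π * n ^ 2 * (y / q))) := by
  have hq : (0 : ℝ) < q := Nat.cast_pos.2 (NeZero.pos q)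
  refine Summable.of_norm_bounded (summable_pow_mul_gaussian hκ (div_pos hy hq)) fun n => ?_
  rw [norm_mul]
  exact mul_le_of_le_one_left (norm_nonneg _) (χ.norm_le_one _)

theorem bijective_fin_natCast : Function.Bijective fun b : Fin q => ((b : ℕ) : ZMod q) := by
  rw [Fintype.bijective_iff_injective_and_card]
  refine ⟨fun a b h => Fin.ext ?_, by simp [ZMod.card]⟩
  rwa [ZMod.natCast_eq_natCast_iff', Nat.mod_eq_of_lt a.2, Nat.mod_eq_of_lt b.2] at h

theorem sum_mul_cexp {χ : DirichletCharacter ℂ q} (hχ : χ.IsPrimitive) (n : ℤ) :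
    ∑ b : Fin q, χ (b : ℕ) * cexp (2 * π * I * ((b : ℕ) / q : ℝ) * n) =
      χ⁻¹ n * gaussSum χ ZMod.stdAddChar := by
  rw [← gaussSum_mulShift_of_isPrimitive _ hχ, gaussSum]
  refine Fintype.sum_bijective _ bijective_fin_natCast _ _ fun b => ?_
  rw [AddChar.mulShift_apply]
  have h := ZMod.stdAddChar_coe (N := q) (n * (b : ℕ))
  push_cast at h
  rw [h]
  congr 2
  push_cast
  ring

theorem thetaInt_functional_equation {χ : DirichletCharacter ℂ q} (hχ : χ.IsPrimitive) {κ : ℕ}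
    (hκ : κ = 0 ∨ κ = 1) {y : ℝ} (hy : 0 < y) :
    thetaInt χ κ y = ((-I) ^ κ * gaussSum χ ZMod.stdAddChar / √q) *
      ((y ^ (κ + 1 / 2 : ℝ) : ℝ) : ℂ)⁻¹ * thetaInt χ⁻¹ κ (1 / y) := by
  have hq : (0 : ℝ) < q := Nat.cast_pos.2 (NeZero.pos q)
  have hx : 0 < q * y := by positivity
  have hqc : (q : ℂ) ≠ 0 := Nat.cast_ne_zero.2 (NeZero.ne q)
  have hs := χ.summable_thetaInt hκ hy
  have hs' := (Int.divModEquiv q).symm.summable_iff.2 hs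
  choose A hA1 hA2 using fun b : Fin q => exists_hasSum_kernel hκ ((b : ℕ) / q : ℝ) hx
  have hterm : ∀ (b : Fin q) (k : ℤ),
      χ ((Int.divModEquiv q).symm (k, b) : ℤ) * ((((Int.divModEquiv q).symm (k, b) : ℤ) : ℂ) ^ κ *
        rexp (-π * ((Int.divModEquiv q).symm (k, b) : ℤ) ^ 2 * (y / q))) =
      χ (b : ℕ) * (q : ℂ) ^ κ * (((k : ℂ) + ((b : ℕ) / q : ℝ)) ^ κ *
        rexp (-π * (k + (b : ℕ) / q) ^ 2 * (q * y))) := by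
    intro b k
    rw [Int.divModEquiv_symm_apply]
    have e1 : (((k * q + (b : ℕ) : ℤ)) : ZMod q) = ((b : ℕ) : ZMod q) := by push_cast; simp
    have e2 : (((k * q + (b : ℕ) : ℤ)) : ℂ) = q * ((k : ℂ) + ((b : ℕ) / q : ℝ)) := by
      push_cast; field_simp
    have e3 : -π * (((k * q + (b : ℕ) : ℤ)) : ℝ) ^ 2 * (y / q) =
        -π * (k + (b : ℕ) / q) ^ 2 * (q * y) := by
      push_cast; field_simp
    rw [e1, e2, e3, mul_pow]
    ring
  have h1 : thetaInt χ κ y = ∑ b : Fin q, χ (b : ℕ) * (q : ℂ) ^ κ * A b := by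
    rw [thetaInt, ← (Int.divModEquiv q).symm.tsum_eq]
    refine hs'.tsum_prod.trans ?_
    rw [← Summable.tsum_comm (f := fun (k : ℤ) (b : Fin q) =>
      ((fun n : ℤ => χ n * ((n : ℂ) ^ κ * rexp (-π * n ^ 2 * (y / q)))) ∘ (Int.divModEquiv q).symm)
        (k, b)) hs', tsum_fintype]
    refine Finset.sum_congr rfl fun b _ => ?_
    simp_rw [Function.comp_apply, hterm]
    rw [tsum_mul_left, (hA1 b).tsum_eq]
  have h2 : HasSum (fun n : ℤ => ∑ b : Fin q, χ (b : ℕ) * (q : ℂ) ^ κ *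
      (((((q * y) ^ (κ + 1 / 2 : ℝ) : ℝ) : ℂ))⁻¹ * ((-I * n) ^ κ *
        cexp (2 * π * I * ((b : ℕ) / q : ℝ) * n) * rexp (-π * n ^ 2 / (q * y)))))
      (∑ b : Fin q, χ (b : ℕ) * (q : ℂ) ^ κ * A b) :=
    hasSum_sum fun b _ => (hA2 b).mul_left _
  rw [h1, ← h2.tsum_eq, thetaInt, ← tsum_mul_left]
  refine tsum_congr fun n => ?_
  have hpow : (((q * y) ^ (κ + 1 / 2 : ℝ) : ℝ) : ℂ) = (q : ℂ) ^ κ * √q * (y ^ (κ + 1 / 2 : ℝ) : ℝ) := by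
    rw [mul_rpow hq.le hy.le, rpow_add hq, rpow_natCast, ← sqrt_eq_rpow]
    push_cast; ring
  have hsq : ((√q : ℝ) : ℂ) ≠ 0 := by
    rw [Ne, Complex.ofReal_eq_zero]; exact (sqrt_pos.2 hq).ne'
  have e3 : -π * (n : ℝ) ^ 2 / (q * y) = -π * n ^ 2 * (1 / y / q) := by field_simp
  calc _ = (∑ b : Fin q, χ (b : ℕ) * cexp (2 * π * I * ((b : ℕ) / q : ℝ) * n)) *
        ((q : ℂ) ^ κ * (((((q * y) ^ (κ + 1 / 2 : ℝ) : ℝ) : ℂ))⁻¹ * ((-I * n) ^ κ *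
          rexp (-π * n ^ 2 / (q * y))))) := by
        rw [Finset.sum_mul]
        exact Finset.sum_congr rfl fun b _ => by ring
    _ = _ := by
        rw [sum_mul_cexp hχ, hpow, e3, mul_pow]
        field_simp

end DirichletCharacter

end

section

open Real Complex MeasureTheory Set

theorem integrable_exp_mul_exp_neg_exp {a : ℝ} (ha : 0 < a) {σ : ℝ} (hσ : 0 < σ) :
    Integrable (fun p : ℝ => rexp (σ * p) * rexp (-a * rexp p)) := by
  have himg : rexp '' univ = Ioi 0 := by rw [image_univ, Real.range_exp]
  have hd : ∀ x ∈ (univ : Set ℝ), HasDerivWithinAt rexp (rexp x) univ x := fun x _ =>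
    (Real.hasDerivAt_exp x).hasDerivWithinAt
  have hGi := integrableOn_rpow_mul_exp_neg_mul_rpow (p := 1) (s := σ - 1) (b := a) (by linarith)
    one_pos ha
  rw [← himg, integrableOn_image_iff_integrableOn_abs_deriv_smul MeasurableSet.univ hd
      Real.exp_injective.injOn, integrableOn_univ] at hGi
  refine hGi.congr (Filter.Eventually.of_forall fun p => ?_)
  simp only [Real.rpow_one, smul_eq_mul, abs_of_pos (Real.exp_pos p)]
  rw [← mul_assoc, ← Real.exp_mul, ← Real.exp_add]
  ring_nf

theorem integrable_cexp_mul_exp_neg_exp {a : ℝ} (ha : 0 < a) {z : ℂ} (hz : 0 < z.re) :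
    Integrable (fun p : ℝ => cexp (z * p) * rexp (-a * rexp p)) := by
  refine (integrable_exp_mul_exp_neg_exp ha hz).mono' (by fun_prop)
    (Filter.Eventually.of_forall fun p => le_of_eq ?_)
  rw [norm_mul, Complex.norm_exp, norm_real, Real.norm_of_nonneg (Real.exp_pos _).le]
  simp

theorem integral_cexp_mul_exp_neg_exp {a : ℝ} (ha : 0 < a) {z : ℂ} (hz : 0 < z.re) :
    ∫ p : ℝ, cexp (z * p) * rexp (-a * rexp p) = (1 / (a : ℂ)) ^ z * Complex.Gamma z := by
  have himg : rexp '' univ = Ioi 0 := by rw [image_univ, Real.range_exp]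
  have hd : ∀ x ∈ (univ : Set ℝ), HasDerivWithinAt rexp (rexp x) univ x := fun x _ =>
    (Real.hasDerivAt_exp x).hasDerivWithinAt
  set G : ℝ → ℂ := fun t => (t : ℂ) ^ (z - 1) * cexp (-(a * t)) with hG
  have hpt : ∀ p : ℝ, |rexp p| • G (rexp p) = cexp (z * p) * rexp (-a * rexp p) := fun p => by
    have hp : ((rexp p : ℝ) : ℂ) ≠ 0 := by exact_mod_cast (Real.exp_pos p).ne'
    rw [hG, abs_of_pos (Real.exp_pos p), real_smul]
    simp only
    rw [← mul_assoc, Complex.cpow_sub _ _ hp, cpow_one, mul_div_cancel₀ _ hp, cpow_def_of_ne_zero hp,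
      ← Complex.ofReal_log (Real.exp_pos p).le, Real.log_exp, mul_comm z]
    push_cast
    ring_nf
  have := integral_image_eq_integral_abs_deriv_smul MeasurableSet.univ hd
    Real.exp_injective.injOn G
  simp_rw [hpt, himg, setIntegral_univ] at this
  rw [← this, ← Complex.integral_cpow_mul_exp_neg_mul_Ioi hz (by simpa using ha)]

theorem integrable_tsum_of_summable_integral_norm {α ι E : Type*} [MeasurableSpace α]
    {μ : Measure α} [Countable ι] [NormedAddCommGroup E] [CompleteSpace E] {F : ι → α → E}
    (hF : ∀ i, Integrable (F i) μ) (hs : Summable fun i => ∫ a, ‖F i a‖ ∂μ) :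
    Integrable (fun a => ∑' i, F i a) μ := by
  refine ⟨AEStronglyMeasurable.tsum fun i => (hF i).1, ?_⟩
  refine lt_of_le_of_lt (lintegral_mono fun a => enorm_tsum_le_tsum_enorm) ?_
  rw [lintegral_tsum fun i => (hF i).1.enorm]
  simp_rw [← ofReal_integral_norm_eq_lintegral_enorm (hF _)]
  exact hs.tsum_ofReal_ne_top.lt_top

theorem integral_exp_mul_exp_neg_exp {a : ℝ} (ha : 0 < a) {σ : ℝ} (hσ : 0 < σ) :
    ∫ p : ℝ, rexp (σ * p) * rexp (-a * rexp p) = (1 / a) ^ σ * Real.Gamma σ := by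
  have h := integral_cexp_mul_exp_neg_exp ha (z := σ) (by simpa using hσ)
  rw [Complex.Gamma_ofReal, ← ofReal_one, ← ofReal_div, ← ofReal_cpow (by positivity)] at h
  rw [← ofReal_inj, ofReal_mul, ← h, ← integral_complex_ofReal]
  push_cast
  rfl

section Mellin

variable {f : ℕ → ℝ} {κ : ℕ} {Q : ℝ} {s : ℂ}

theorem one_div_pi_mul_sq_div_cpow (hQ : 0 < Q) (n : ℕ+) :
    (n : ℂ) ^ κ * (1 / ((π * (n : ℝ) ^ 2 / Q ^ 2 : ℝ) : ℂ)) ^ ((s + κ) / 2) =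
      ((Q ^ 2 / π : ℝ) : ℂ) ^ ((s + κ) / 2) * (n : ℂ) ^ (-s) := by
  have hn : (0 : ℝ) < n := by exact_mod_cast n.pos
  have hn' : ((n : ℝ) : ℂ) ≠ 0 := by exact_mod_cast hn.ne'
  rw [← ofReal_one, ← ofReal_div, show 1 / (π * (n : ℝ) ^ 2 / Q ^ 2) = Q ^ 2 / π * ((n : ℝ)⁻¹) ^ 2 by
    field_simp, ofReal_mul, mul_cpow_ofReal_nonneg (by positivity) (by positivity), mul_left_comm]
  congr 1
  rw [cpow_def_of_ne_zero (by simp), ← ofReal_log (by positivity), Real.log_pow, Real.log_inv,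
    show (n : ℂ) = ((n : ℝ) : ℂ) by simp, cpow_def_of_ne_zero hn', ← ofReal_log hn.le, ← cpow_natCast,
    cpow_def_of_ne_zero hn', ← ofReal_log hn.le, ← Complex.exp_add]
  congr 1
  push_cast
  ring

theorem mellin_term_eq (n : ℕ+) (p : ℝ) :
    ((f n * (n * rexp (p / 2)) ^ κ * rexp (-π * rexp p / Q ^ 2 * (n : ℝ) ^ 2) : ℝ) : ℂ) *
      cexp (s / 2 * p) = f n * (n : ℂ) ^ κ *
        (cexp ((s + κ) / 2 * p) * rexp (-(π * (n : ℝ) ^ 2 / Q ^ 2) * rexp p)) := by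
  have h1 : cexp ((s + κ) / 2 * p) = cexp (s / 2 * p) * cexp (p / 2) ^ κ := by
    rw [← Complex.exp_nat_mul, ← Complex.exp_add]
    ring_nf
  have h2 : -π * rexp p / Q ^ 2 * (n : ℝ) ^ 2 = -(π * (n : ℝ) ^ 2 / Q ^ 2) * rexp p := by ring
  rw [h1, h2]
  push_cast
  ring

theorem summable_integral_mellin_term (hf : ∀ n, |f n| ≤ 1) (hQ : 0 < Q) (hs : 1 < s.re) :
    Summable fun n : ℕ+ => ∫ p : ℝ, ‖(f n * (n : ℂ) ^ κ *
        (cexp ((s + κ) / 2 * p) * rexp (-(π * (n : ℝ) ^ 2 / Q ^ 2) * rexp p)))‖ := by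
  have hz : 0 < ((s + κ) / 2).re := by simp; positivity
  set σ := ((s + κ) / 2).re with hσ
  have hσs : 2 * σ = s.re + κ := by simp [hσ]; ring
  have hc : Summable fun n : ℕ+ => (Q ^ 2 / π) ^ σ * Real.Gamma σ * (n : ℝ) ^ (-s.re) := by
    refine Summable.mul_left _ ?_
    exact (Real.summable_nat_rpow.2 (by linarith)).comp_injective PNat.coe_injective
  refine Summable.of_nonneg_of_le (fun n => integral_nonneg fun _ => norm_nonneg _) (fun n => ?_) hc
  have hn : (0 : ℝ) < n := by exact_mod_cast n.pos
  have ha : 0 < π * (n : ℝ) ^ 2 / Q ^ 2 := by positivity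
  have e : ∀ p : ℝ, ‖(f n * (n : ℂ) ^ κ *
        (cexp ((s + κ) / 2 * p) * rexp (-(π * (n : ℝ) ^ 2 / Q ^ 2) * rexp p)))‖ =
      |f n| * (n : ℝ) ^ κ * (rexp (σ * p) * rexp (-(π * (n : ℝ) ^ 2 / Q ^ 2) * rexp p)) := fun p => by
    rw [norm_mul, norm_mul, norm_mul, norm_pow, norm_real, Complex.norm_natCast, Complex.norm_exp, norm_real,
      Real.norm_of_nonneg (Real.exp_pos _).le, re_mul_ofReal]
    rfl
  simp_rw [e]
  rw [integral_const_mul, integral_exp_mul_exp_neg_exp ha hz,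
    show 1 / (π * (n : ℝ) ^ 2 / Q ^ 2) = Q ^ 2 / π * ((n : ℝ)⁻¹) ^ 2 by field_simp,
    Real.mul_rpow (by positivity) (by positivity)]
  have hpow : (n : ℝ) ^ κ * (((n : ℝ)⁻¹) ^ 2) ^ σ = (n : ℝ) ^ (-s.re) := by
    rw [← Real.rpow_natCast, ← Real.rpow_natCast, ← Real.rpow_mul (by positivity), Real.inv_rpow hn.le,
      ← Real.rpow_neg hn.le, ← Real.rpow_add hn]
    congr 1
    push_cast
    linarith
  have hG := Real.Gamma_pos_of_pos hz
  calc _ = |f n| * ((Q ^ 2 / π) ^ σ * Real.Gamma σ * ((n : ℝ) ^ κ * (((n : ℝ)⁻¹) ^ 2) ^ σ)) := by ring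
    _ ≤ _ := by
      rw [hpow]
      exact mul_le_of_le_one_left (by positivity) (hf n)

theorem ofReal_twistedThetaSeries_mul (p : ℝ) :
    (twistedThetaSeries f κ Q p : ℂ) * cexp (s / 2 * p) = ∑' n : ℕ+, f n * (n : ℂ) ^ κ *
        (cexp ((s + κ) / 2 * p) * rexp (-(π * (n : ℝ) ^ 2 / Q ^ 2) * rexp p)) := by
  simp_rw [← mellin_term_eq]
  rw [tsum_mul_right, ← ofReal_tsum]
  rfl

theorem integrable_twistedThetaSeries_mul_cexp (hf : ∀ n, |f n| ≤ 1)
    (hQ : 0 < Q) (hs : 1 < s.re) :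
    Integrable fun p : ℝ => (twistedThetaSeries f κ Q p : ℂ) * cexp (s / 2 * p) := by
  simp_rw [ofReal_twistedThetaSeries_mul]
  refine integrable_tsum_of_summable_integral_norm (fun n => ?_)
    (summable_integral_mellin_term hf hQ hs)
  have hn : (0 : ℝ) < n := by exact_mod_cast n.pos
  exact (integrable_cexp_mul_exp_neg_exp (by positivity) (by simp; positivity)).const_mul _

theorem integral_twistedThetaSeries_mul_cexp (hf : ∀ n, |f n| ≤ 1)
    (hQ : 0 < Q) (hs : 1 < s.re) :
    ∫ p : ℝ, (twistedThetaSeries f κ Q p : ℂ) * cexp (s / 2 * p) =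
      ((Q ^ 2 / π : ℝ) : ℂ) ^ ((s + κ) / 2) * Complex.Gamma ((s + κ) / 2) *
        ∑' n : ℕ+, f n * (n : ℂ) ^ (-s) := by
  simp_rw [ofReal_twistedThetaSeries_mul]
  have hn : ∀ n : ℕ+, (0 : ℝ) < π * (n : ℝ) ^ 2 / Q ^ 2 := fun n => by
    have : (0 : ℝ) < n := by exact_mod_cast n.pos
    positivity
  have hz : 0 < ((s + κ) / 2).re := by simp; positivity
  rw [← integral_tsum_of_summable_integral_norm
    (fun n => (integrable_cexp_mul_exp_neg_exp (hn n) hz).const_mul _)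
    (summable_integral_mellin_term hf hQ hs), ← tsum_mul_left]
  refine tsum_congr fun n => ?_
  rw [integral_const_mul, integral_cexp_mul_exp_neg_exp (hn n) hz]
  linear_combination (f n : ℂ) * Complex.Gamma ((s + κ) / 2) * one_div_pi_mul_sq_div_cpow (κ := κ) (s := s) hQ n

end Mellin

end

section

open Real Complex MeasureTheory Set

theorem differentiable_integral_mul_cexp {g : ℝ → ℝ}
    (hg : ∀ σ : ℝ, Integrable fun p => g p * rexp (σ * p)) :
    Differentiable ℂ fun s : ℂ => ∫ p : ℝ, (g p : ℂ) * cexp (s / 2 * p) := by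
  intro s₀
  have hgm : AEStronglyMeasurable g := by simpa using (hg 0).1
  have hgc : AEStronglyMeasurable (fun p => (g p : ℂ)) := continuous_ofReal.comp_aestronglyMeasurable hgm
  have hnorm : ∀ (s : ℂ) (p : ℝ), ‖cexp (s / 2 * p)‖ = rexp (s.re / 2 * p) := fun s p => by
    rw [Complex.norm_exp]
    simp
  refine (hasDerivAt_integral_of_dominated_loc_of_deriv_le (Metric.ball_mem_nhds s₀ one_pos)
    (F' := fun s p => (g p : ℂ) * (cexp (s / 2 * p) * (1 / 2 * p)))
    (bound := fun p => |g p * rexp ((s₀.re / 2 + 1) * p)| + |g p * rexp ((s₀.re / 2 - 1) * p)|)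
    (Filter.Eventually.of_forall fun s => hgc.mul (by fun_prop)) ?_ (hgc.mul (by fun_prop)) ?_
    ((hg _).abs.add (hg _).abs) ?_).2.differentiableAt
  · refine (hg (s₀.re / 2)).mono (hgc.mul (by fun_prop)) (Filter.Eventually.of_forall fun p => le_of_eq ?_)
    simp only [Pi.mul_apply]
    rw [norm_mul, norm_mul, hnorm, norm_real, Real.norm_of_nonneg (Real.exp_pos _).le]
  · refine Filter.Eventually.of_forall fun p s hs => ?_
    rw [norm_mul, norm_mul, hnorm, norm_real, Real.norm_eq_abs, abs_mul, abs_mul, ← mul_add]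
    refine mul_le_mul_of_nonneg_left ?_ (abs_nonneg _)
    have h1 : |s.re - s₀.re| ≤ 1 := by
      rw [← sub_re]
      exact (abs_re_le_norm _).trans (mem_ball_iff_norm.1 hs).le
    have h2 : ‖(1 / 2 : ℂ) * p‖ ≤ rexp (|p| / 2) := by
      rw [norm_mul, norm_real, Real.norm_eq_abs]
      have := Real.add_one_le_exp (|p| / 2)
      norm_num
      linarith
    rw [abs_of_pos (Real.exp_pos _), abs_of_pos (Real.exp_pos _)]
    have h3 : s.re / 2 * p + |p| / 2 ≤ s₀.re / 2 * p + |p| := by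
      have := (le_abs_self ((s.re - s₀.re) * p)).trans_eq (abs_mul _ _)
      nlinarith [abs_nonneg p]
    calc rexp (s.re / 2 * p) * ‖(1 / 2 : ℂ) * p‖ ≤ rexp (s.re / 2 * p) * rexp (|p| / 2) := by gcongr
      _ = rexp (s.re / 2 * p + |p| / 2) := (Real.exp_add _ _).symm
      _ ≤ rexp (s₀.re / 2 * p + |p|) := Real.exp_le_exp.2 h3
      _ ≤ _ := by
        rcases abs_choice p with h | h <;> rw [h]
        · rw [show s₀.re / 2 * p + p = (s₀.re / 2 + 1) * p by ring]
          linarith [Real.exp_pos ((s₀.re / 2 - 1) * p)]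
        · rw [show s₀.re / 2 * p + -p = (s₀.re / 2 - 1) * p by ring]
          linarith [Real.exp_pos ((s₀.re / 2 + 1) * p)]
  · refine Filter.Eventually.of_forall fun p s _ => HasDerivAt.const_mul _ ?_
    exact (((hasDerivAt_id s).div_const 2).mul_const (p : ℂ)).cexp

namespace DirichletCharacter

variable {q : ℕ} (χ : DirichletCharacter ℂ q)

/-- The real parts of the values of a Dirichlet character, as an arithmetic function. -/
noncomputable def realCoeff : ArithmeticFunction ℝ :=
  ⟨fun n => if n = 0 then 0 else (χ n).re, by simp⟩

variable {χ}

theorem ofReal_realCoeff (hquad : χ.IsQuadratic) {n : ℕ} (hn : n ≠ 0) : (realCoeff χ n : ℂ) = χ n := by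
  change (((if n = 0 then 0 else (χ n).re) : ℝ) : ℂ) = _
  rw [if_neg hn]
  rcases hquad n with h | h | h <;> simp [h]

theorem realCoeff_values (hquad : χ.IsQuadratic) (n : ℕ) :
    realCoeff χ n = 0 ∨ realCoeff χ n = 1 ∨ realCoeff χ n = -1 := by
  change (if n = 0 then 0 else (χ n).re) = 0 ∨ (if n = 0 then 0 else (χ n).re) = 1 ∨
    (if n = 0 then 0 else (χ n).re) = -1
  split_ifs
  · simp
  · rcases hquad n with h | h | h <;> simp [h]

theorem abs_realCoeff_le (hquad : χ.IsQuadratic) (n : ℕ) : |realCoeff χ n| ≤ 1 := by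
  rcases realCoeff_values hquad n with h | h | h <;> simp [h]

theorem realCoeff_one : realCoeff χ 1 = 1 := by
  change (if 1 = 0 then 0 else (χ (1 : ℕ)).re) = 1
  simp

theorem realCoeff_mul (hquad : χ.IsQuadratic) (m n : ℕ) :
    realCoeff χ (m * n) = realCoeff χ m * realCoeff χ n := by
  rcases eq_or_ne m 0 with rfl | hm
  · simp
  rcases eq_or_ne n 0 with rfl | hn
  · simp
  rw [← ofReal_inj, ofReal_mul, ofReal_realCoeff hquad hm, ofReal_realCoeff hquad hn,
    ofReal_realCoeff hquad (mul_ne_zero hm hn), Nat.cast_mul, map_mul]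

variable [NeZero q]

theorem thetaInt_eq_two_mul_tsum (hq : 1 < q) {κ : ℕ} (hκ : κ = 0 ∨ κ = 1)
    (hpar : χ (-1) = (-1) ^ κ) {y : ℝ} (hy : 0 < y) :
    thetaInt χ κ y = 2 * ∑' n : ℕ+, χ (n : ℕ) * ((n : ℂ) ^ κ * rexp (-π * (n : ℝ) ^ 2 * (y / q))) := by
  have hs := χ.summable_thetaInt hκ hy
  rw [thetaInt, tsum_int_eq_zero_add_two_mul_tsum_pnat ?_ hs]
  · have : Fact (1 < q) := ⟨hq⟩
    simp [MulChar.map_zero]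
  · intro n
    have h : χ ((-n : ℤ) : ZMod q) = (-1) ^ κ * χ n := by
      rw [← hpar, ← map_mul]
      simp
    simp only
    rw [h]
    have h2 : ((-1 : ℂ) ^ κ) * (-1) ^ κ = 1 := by rw [← mul_pow]; simp
    push_cast
    rw [neg_pow (n : ℂ), neg_sq]
    linear_combination (χ n * ((n : ℂ) ^ κ * cexp (-π * n ^ 2 * (y / q)))) * h2

theorem ofReal_twistedThetaSeries_realCoeff (hquad : χ.IsQuadratic) (hq : 1 < q) {κ : ℕ}
    (hκ : κ = 0 ∨ κ = 1) (hpar : χ (-1) = (-1) ^ κ) (p : ℝ) :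
    (twistedThetaSeries (realCoeff χ) κ √q p : ℂ) = cexp (p / 2) ^ κ * thetaInt χ κ (rexp p) / 2 := by
  rw [thetaInt_eq_two_mul_tsum hq hκ hpar (Real.exp_pos p), twistedThetaSeries, ofReal_tsum,
    show ∀ a b : ℂ, a * (2 * b) / 2 = a * b from fun a b => by ring, ← tsum_mul_left]
  refine tsum_congr fun n => ?_
  rw [Real.sq_sqrt (Nat.cast_nonneg q), show -π * rexp p / q * (n : ℝ) ^ 2 = -π * (n : ℝ) ^ 2 * (rexp p / q) by ring]
  push_cast
  rw [ofReal_realCoeff hquad n.ne_zero]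
  ring

theorem twistedThetaSeries_realCoeff_neg (hquad : χ.IsQuadratic) (hprim : χ.IsPrimitive) (hq : 1 < q)
    {κ : ℕ} (hκ : κ = 0 ∨ κ = 1) (hpar : χ (-1) = (-1) ^ κ) (p : ℝ) :
    (twistedThetaSeries (realCoeff χ) κ √q (-p) : ℂ) =
      ((-I) ^ κ * gaussSum χ ZMod.stdAddChar / √q) * rexp (p / 2) *
        twistedThetaSeries (realCoeff χ) κ √q p := by
  have hF := thetaInt_functional_equation hprim hκ (Real.exp_pos (-p))
  rw [hquad.inv, one_div (rexp _), ← Real.exp_neg, neg_neg, ← Real.exp_mul, ← ofReal_inv, ← Real.exp_neg] at hF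
  rw [ofReal_twistedThetaSeries_realCoeff hquad hq hκ hpar, hF,
    ofReal_twistedThetaSeries_realCoeff hquad hq hκ hpar]
  have h : cexp ((-p : ℝ) / 2) ^ κ * (rexp (-(-p * (κ + 1 / 2))) : ℝ) = rexp (p / 2) * cexp (p / 2) ^ κ := by
    push_cast
    rw [← Complex.exp_nat_mul, ← Complex.exp_nat_mul, ← Complex.exp_add, ← Complex.exp_add]
    congr 1
    ring
  linear_combination ((-I) ^ κ * gaussSum χ ZMod.stdAddChar / √q) * thetaInt χ κ (rexp p) / 2 * h

theorem productKernel_realCoeff_pos (hquad : χ.IsQuadratic) {κ : ℕ} (hκ : κ = 0 ∨ κ = 1) (w : ℝ) :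
    0 < productKernel (twistedThetaSeries (realCoeff χ) κ √q) w := by
  have hQ : 0 < √(q : ℝ) := Real.sqrt_pos.2 (Nat.cast_pos.2 (NeZero.pos q))
  obtain ⟨-, h⟩ := ofReal_productKernel realCoeff_one (realCoeff_mul hquad) (realCoeff_values hquad) hκ
    hQ w
  rw [← ENNReal.ofReal_pos, h]
  refine squareSumAverage_pos ?_ κ hQ (by positivity) w
  rw [ArithmeticFunction.mul_apply_one, realCoeff_one]
  simp [squarefreeIndicator]

theorem exists_twistedThetaSeries_ne_zero (hquad : χ.IsQuadratic) {κ : ℕ} (hκ : κ = 0 ∨ κ = 1) :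
    ∃ p, twistedThetaSeries (realCoeff χ) κ √q p ≠ 0 := by
  by_contra! h
  have := productKernel_realCoeff_pos hquad hκ 0
  simp [productKernel, h] at this

theorem exists_twistedTheta (hquad : χ.IsQuadratic) (hprim : χ.IsPrimitive) (hq : 1 < q)
    {κ : ℕ} (hκ : κ = 0 ∨ κ = 1) (hpar : χ (-1) = (-1) ^ κ) :
    ∃ W, TwistedTheta (twistedThetaSeries (realCoeff χ) κ √q) W := by
  set g := twistedThetaSeries (realCoeff χ) κ √q with hg
  have hQ : 0 < √(q : ℝ) := Real.sqrt_pos.2 (Nat.cast_pos.2 (NeZero.pos q))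
  have hFE := twistedThetaSeries_realCoeff_neg hquad hprim hq hκ hpar
  rw [← hg] at hFE
  set Wc := (-I) ^ κ * gaussSum χ ZMod.stdAddChar / √q
  obtain ⟨p, hp⟩ := exists_twistedThetaSeries_ne_zero hquad hκ
  have hWc : Wc = 1 ∨ Wc = -1 := by
    rw [← sq_eq_one_iff]
    have h1 := hFE p
    have h2 := hFE (-p)
    rw [neg_neg, h1] at h2
    have hp' : (g p : ℂ) ≠ 0 := ofReal_ne_zero.2 hp
    have h3 : (rexp (p / 2) : ℂ) * rexp (-p / 2) = 1 := by
      rw [← ofReal_mul, ← Real.exp_add]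
      simp [neg_div]
    refine mul_right_cancel₀ hp' ?_
    linear_combination -h2 - Wc ^ 2 * g p * h3
  obtain ⟨W, hW, hWW⟩ : ∃ W : ℝ, (W = 1 ∨ W = -1) ∧ Wc = W := by
    rcases hWc with h | h
    · exact ⟨1, .inl rfl, by simp [h]⟩
    · exact ⟨-1, .inr rfl, by simp [h]⟩
  have hsymm : ∀ p, g (-p) = W * rexp (p / 2) * g p := fun p => by
    have := hFE p
    rw [hWW] at this
    exact_mod_cast this
  have hpos : ∀ σ : ℝ, 1 / 2 < σ → Integrable fun p => g p * rexp (σ * p) := fun σ hσ => by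
    have := integrable_twistedThetaSeries_mul_cexp (f := realCoeff χ) (κ := κ) (abs_realCoeff_le hquad) hQ
      (s := ((2 * σ : ℝ) : ℂ)) (by rw [ofReal_re]; linarith)
    refine this.re.congr (Filter.Eventually.of_forall fun p => ?_)
    have e : ((2 * σ : ℝ) : ℂ) / 2 * p = ((σ * p : ℝ) : ℂ) := by push_cast; ring
    change (((g p : ℂ)) * cexp (((2 * σ : ℝ) : ℂ) / 2 * p)).re = _
    rw [e, ← ofReal_exp, ← ofReal_mul, ofReal_re]
  have hneg : ∀ σ : ℝ, σ < 0 → Integrable fun p => g p * rexp (σ * p) := fun σ hσ => by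
    have := ((hpos (1 / 2 - σ) (by linarith)).const_mul W).comp_neg
    refine this.congr (Filter.Eventually.of_forall fun p => ?_)
    simp only
    have hs := hsymm (-p)
    rw [neg_neg] at hs
    rw [hs, show (1 / 2 - σ) * -p = -p / 2 + σ * p by ring, Real.exp_add]
    ring
  refine ⟨W, hW, fun σ => ?_, hsymm⟩
  have h1 := hpos (|σ| + 1) (by linarith [abs_nonneg σ])
  have h2 := hneg (-|σ| - 1) (by linarith [abs_nonneg σ])
  have hgm : AEStronglyMeasurable g := by
    have := h1.1.mul (show AEStronglyMeasurable (fun p => rexp (-(|σ| + 1) * p)) volume by fun_prop)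
    refine this.congr (Filter.Eventually.of_forall fun p => ?_)
    simp only [Pi.mul_apply]
    rw [mul_assoc, ← Real.exp_add, ← add_mul, add_neg_cancel, zero_mul, Real.exp_zero, mul_one]
  refine (h1.abs.add h2.abs).mono' (hgm.mul (by fun_prop)) (Filter.Eventually.of_forall fun p => ?_)
  simp only [Pi.add_apply]
  rw [Real.norm_eq_abs, abs_mul, abs_mul, abs_mul, ← mul_add]
  refine mul_le_mul_of_nonneg_left ?_ (abs_nonneg _)
  simp only [Real.abs_exp]
  rcases le_total 0 p with h | h
  · have : σ * p ≤ (|σ| + 1) * p := by nlinarith [le_abs_self σ]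
    linarith [Real.exp_le_exp.2 this, Real.exp_pos ((-|σ| - 1) * p)]
  · have : σ * p ≤ (-|σ| - 1) * p := by nlinarith [neg_abs_le σ]
    linarith [Real.exp_le_exp.2 this, Real.exp_pos ((|σ| + 1) * p)]

theorem LFunction_eq_integral (hquad : χ.IsQuadratic) (hχ : χ ≠ 1) {κ : ℕ} {W : ℝ}
    (h : TwistedTheta (twistedThetaSeries (realCoeff χ) κ √q) W) (s : ℂ) :
    (∫ p : ℝ, (twistedThetaSeries (realCoeff χ) κ √q p : ℂ) * cexp (s / 2 * p)) *
      (((q / π : ℝ) : ℂ) ^ (-((s + κ) / 2)) * (Complex.Gamma ((s + κ) / 2))⁻¹) = χ.LFunction s := by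
  have hq0 : (0 : ℝ) < q := Nat.cast_pos.2 (NeZero.pos q)
  have hQ : 0 < √(q : ℝ) := Real.sqrt_pos.2 hq0
  have hqp : ((q / π : ℝ) : ℂ) ≠ 0 := ofReal_ne_zero.2 (by positivity)
  have hlin : Differentiable ℂ fun s : ℂ => (s + κ) / 2 := by fun_prop
  have hd : Differentiable ℂ fun s : ℂ =>
      (∫ p : ℝ, (twistedThetaSeries (realCoeff χ) κ √q p : ℂ) * cexp (s / 2 * p)) *
      (((q / π : ℝ) : ℂ) ^ (-((s + κ) / 2)) * (Complex.Gamma ((s + κ) / 2))⁻¹) := by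
    refine (differentiable_integral_mul_cexp h.integrable_mul_exp).mul (Differentiable.mul ?_ ?_)
    · exact hlin.neg.const_cpow (.inl hqp)
    · exact Complex.differentiable_one_div_Gamma.comp hlin
  refine congrFun (AnalyticOnNhd.eq_of_eventuallyEq (z₀ := 2) (fun z _ => hd.analyticAt z)
    (fun z _ => (differentiable_LFunction hχ).analyticAt z) ?_) s
  filter_upwards [(isOpen_lt continuous_const Complex.continuous_re).mem_nhds
    (show (1 : ℝ) < (2 : ℂ).re by norm_num)] with z hz
  have hz' : 0 < ((z + κ) / 2).re := by
    have : (1 : ℝ) < z.re := hz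
    simp
    positivity
  rw [integral_twistedThetaSeries_mul_cexp (abs_realCoeff_le hquad) hQ hz, LFunction_eq_LSeries χ hz,
    Real.sq_sqrt hq0.le]
  have hG := Complex.Gamma_ne_zero_of_re_pos hz'
  rw [cpow_neg]
  have hc : ((q / π : ℝ) : ℂ) ^ ((z + κ) / 2) ≠ 0 := fun h => hqp ((cpow_eq_zero_iff _ _).1 h).1
  field_simp
  rw [LSeries, ← PNat.coe_injective.tsum_eq (f := LSeries.term _ z) ?_]
  · refine tsum_congr fun n => ?_
    rw [LSeries.term_of_ne_zero n.ne_zero, ofReal_realCoeff hquad n.ne_zero, cpow_neg, div_eq_mul_inv]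
  · intro n hn
    have : n ≠ 0 := by rintro rfl; simp at hn
    exact ⟨⟨n, Nat.pos_of_ne_zero this⟩, rfl⟩

end DirichletCharacter

end

section

/-- All `(m, s)` where `m` is a product modulo `q` of a sublist of the first components, and `s` is
the corresponding product of the second components. -/
def signedProducts (q : ℕ) : List (ℕ × ℤ) → List (ℕ × ℤ)
  | [] => [(1, 1)]
  | (g, e) :: l => signedProducts q l ++ (signedProducts q l).map fun m => (g * m.1 % q, e * m.2)

/-- The sign of `a` modulo `q` determined by the first `m` in the list for which `a` is a square
times `m`, and `0` if there is none or if `a` is not a unit. -/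
def signOf (q : ℕ) (l : List (ℕ × ℤ)) (a : ℕ) : ℤ :=
  if a.gcd q = 1 then
    match l.find? (fun m => (List.range q).any fun x => x * x * m.1 % q == a) with
    | some m => m.2
    | none => 0
  else 0

/-- Generators of the units modulo `q` up to squares. -/
def unitGenerators (q : ℕ) : List ℕ :=
  (List.range q).foldl (fun gs a =>
    if a.gcd q = 1 ∧ signOf q (signedProducts q (gs.map fun g => (g, 1))) a = 0 then a :: gs else gs) []

/-- All lists of signs of a given length. -/
def signLists : ℕ → List (List ℤ)
  | 0 => [[]]
  | n + 1 => (signLists n).map (1 :: ·) ++ (signLists n).map (-1 :: ·)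

/-- The sum of the values of `P` weighted by `c` over the residues modulo `q`. -/
def weightedSum (q : ℕ) (c : ℕ → ℤ) (P : ℤ → ℤ) : ℤ := ((List.range q).map fun a => c a * P a).sum

/-- Either `c` is trivial on the residues that are `1` modulo a proper divisor of `q`, or the
Bernoulli sum of `c` of the relevant parity is positive. -/
def SignCondition (q : ℕ) (c : ℕ → ℤ) : Prop :=
  (∃ d ∈ List.range q, d ∣ q ∧ ∀ a ∈ List.range q, a.gcd q = 1 → a % d = 1 % d → c a = 1) ∨
  (c (q - 1) = 1 ∧ 0 < weightedSum q c fun a => 6 * a ^ 2 - 6 * a * q + q ^ 2) ∨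
  (c (q - 1) = -1 ∧ 0 < weightedSum q c fun a => 2 * a ^ 3 - 3 * a ^ 2 * q + a * q ^ 2)

instance (q : ℕ) (c : ℕ → ℤ) : Decidable (SignCondition q c) := by
  unfold SignCondition
  infer_instance

theorem signCondition_of_lt : ∀ q ∈ List.range' 3 35, (∀ g ∈ unitGenerators q, g.gcd q = 1) ∧
    ∀ ε ∈ signLists (unitGenerators q).length,
      (∀ a ∈ List.range q, a.gcd q = 1 → signOf q (signedProducts q ((unitGenerators q).zip ε)) a ≠ 0) ∧
      SignCondition q (signOf q (signedProducts q ((unitGenerators q).zip ε))) := by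
  decide +kernel

theorem mem_signLists {l : List ℤ} (hl : ∀ e ∈ l, e = 1 ∨ e = -1) : l ∈ signLists l.length := by
  induction l with
  | nil => simp [signLists]
  | cons e l ih =>
    have := ih fun x hx => hl x (List.mem_cons_of_mem _ hx)
    rcases hl e (by simp) with rfl | rfl <;> simp [signLists, this]

section

variable {q : ℕ} {c : ℕ → ℤ}

theorem signedProducts_snd_eq (hc1 : c 1 = 1) (hmul : ∀ a b, c (a * b) = c a * c b)
    (hmod : ∀ a, c (a % q) = c a) {l : List ℕ} :
    ∀ m ∈ signedProducts q (l.zip (l.map c)), c m.1 = m.2 := by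
  induction l with
  | nil => simp [signedProducts, hc1]
  | cons g l ih =>
    intro m hm
    simp only [List.map_cons, List.zip_cons_cons, signedProducts, List.mem_append, List.mem_map] at hm
    rcases hm with hm | ⟨n, hn, rfl⟩
    · exact ih m hm
    · simp only [hmod, hmul, ih n hn]

theorem signOf_eq (hc1 : c 1 = 1) (hmul : ∀ a b, c (a * b) = c a * c b)
    (hmod : ∀ a, c (a % q) = c a) (hunit : ∀ a, a.gcd q = 1 → c a = 1 ∨ c a = -1)
    (hnon : ∀ a, a.gcd q ≠ 1 → c a = 0) (hval : ∀ a, c a = 0 ∨ c a = 1 ∨ c a = -1) {l : List ℕ} {a : ℕ}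
    (ha : a.gcd q = 1 → signOf q (signedProducts q (l.zip (l.map c))) a ≠ 0) :
    signOf q (signedProducts q (l.zip (l.map c))) a = c a := by
  by_cases h : a.gcd q = 1
  · have ha := ha h
    rw [signOf, if_pos h] at ha ⊢
    split at ha
    · rename_i m hm
      have h1 := List.mem_of_find?_eq_some hm
      have h2 := List.find?_some hm
      rw [List.any_eq_true] at h2
      obtain ⟨x, -, hx⟩ := h2
      have hx' : x * x * m.1 % q = a := by simpa using hx
      have hc : c a = c x * c x * c m.1 := by rw [← hx', hmod, hmul, hmul]
      rw [← signedProducts_snd_eq hc1 hmul hmod m h1]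
      rcases hval x with h' | h' | h'
      · rw [h'] at hc
        rcases hunit a h with h'' | h'' <;> simp [h''] at hc
      · simp [hc, h']
      · simp [hc, h']
    · exact absurd rfl ha
  · rw [signOf, if_neg h, hnon a h]

theorem signCondition (hc1 : c 1 = 1) (hmul : ∀ a b, c (a * b) = c a * c b)
    (hmod : ∀ a, c (a % q) = c a) (hunit : ∀ a, a.gcd q = 1 → c a = 1 ∨ c a = -1)
    (hnon : ∀ a, a.gcd q ≠ 1 → c a = 0) (hq : 3 ≤ q) (hq' : q < 38) : SignCondition q c := by
  have hval : ∀ a, c a = 0 ∨ c a = 1 ∨ c a = -1 := fun a => by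
    by_cases h : a.gcd q = 1
    · exact .inr (hunit a h)
    · exact .inl (hnon a h)
  obtain ⟨h1, h2⟩ := signCondition_of_lt q (by rw [List.mem_range'_1]; omega)
  obtain ⟨h3, h4⟩ := h2 ((unitGenerators q).map c) (by
    rw [← List.length_map c]
    refine mem_signLists fun e he => ?_
    obtain ⟨g, hg, rfl⟩ := List.mem_map.1 he
    exact hunit g (h1 g hg))
  have key : ∀ a < q, signOf q (signedProducts q ((unitGenerators q).zip ((unitGenerators q).map c))) a =
      c a := fun a ha => signOf_eq hc1 hmul hmod hunit hnon hval (h3 a (List.mem_range.2 ha))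
  have hsum : ∀ P, weightedSum q
      (signOf q (signedProducts q ((unitGenerators q).zip ((unitGenerators q).map c)))) P =
        weightedSum q c P := fun P => by
    rw [weightedSum, weightedSum]
    congr 1
    exact List.map_congr_left fun a ha => by rw [key a (List.mem_range.1 ha)]
  rw [SignCondition, hsum, hsum, key (q - 1) (by omega)] at h4
  refine h4.imp_left fun ⟨d, hd, hdq, h⟩ => ⟨d, hd, hdq, fun a ha hag had => ?_⟩
  rw [← key a (List.mem_range.1 ha)]
  exact h a ha hag had

end

end

section

open Real Complex MeasureTheory Set

namespace DirichletCharacter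

variable {q : ℕ} [NeZero q] {χ : DirichletCharacter ℂ q}

theorem IsPrimitive.exists_ne_one (hprim : χ.IsPrimitive) {d : ℕ} (hd : d < q) (hdq : d ∣ q) :
    ∃ a < q, a.gcd q = 1 ∧ a % d = 1 % d ∧ χ a ≠ 1 := by
  by_contra! h
  have hf : χ.FactorsThrough d := by
    rw [factorsThrough_iff_ker_unitsMap hdq]
    intro u hu
    rw [MonoidHom.mem_ker] at hu ⊢
    have hv : ((u : ZMod q).val : ZMod q) = u := ZMod.natCast_zmod_val _
    have hcop : (u : ZMod q).val.gcd q = 1 := ZMod.val_coe_unit_coprime u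
    have hmod : (u : ZMod q).val % d = 1 % d := by
      change _ ≡ _ [MOD d]
      rw [← ZMod.natCast_eq_natCast_iff]
      have := congrArg Units.val hu
      rw [ZMod.unitsMap_val, ← ZMod.natCast_val] at this
      simpa using this
    have := h _ (ZMod.val_lt _) hcop hmod
    rw [hv] at this
    ext
    simpa using this
  have : χ.conductor ≤ d := Nat.sInf_le hf
  rw [hprim] at this
  omega

theorem LFunction_neg_nat {k : ℕ} (hk : k ≠ 0) :
    χ.LFunction (-k) = -((q : ℂ) ^ k / (k + 1)) * ∑ a ∈ Finset.range q,
      χ a * ((Polynomial.bernoulli (k + 1)).map (algebraMap ℚ ℂ)).eval ((a / q : ℝ) : ℂ) := by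
  have hq : (0 : ℝ) < q := Nat.cast_pos.2 (NeZero.pos q)
  rw [LFunction, ZMod.LFunction, neg_neg, cpow_natCast, ← Fin.sum_univ_eq_sum_range
    (fun a => χ a * ((Polynomial.bernoulli (k + 1)).map (algebraMap ℚ ℂ)).eval ((a / q : ℝ) : ℂ)),
    ← Fintype.sum_bijective _ (bijective_fin_natCast (q := q)) (fun a : Fin q => χ (a : ℕ) *
      HurwitzZeta.hurwitzZeta (ZMod.toAddCircle ((a : ℕ) : ZMod q)) (-k)) _ fun _ => rfl,
    Finset.mul_sum, Finset.mul_sum]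
  refine Finset.sum_congr rfl fun a _ => ?_
  rw [ZMod.toAddCircle_natCast, HurwitzZeta.hurwitzZeta_neg_nat hk]
  · ring
  · have : ((a : ℕ) : ℝ) ≤ q := by exact_mod_cast a.2.le
    exact ⟨by positivity, (div_le_one hq).2 this⟩

end DirichletCharacter

theorem Complex.Gamma_neg_half : Complex.Gamma (-1 / 2) = ((-2 * √π : ℝ) : ℂ) := by
  have h := Complex.Gamma_add_one (-1 / 2) (by norm_num)
  rw [show (-1 / 2 + 1 : ℂ) = ((1 / 2 : ℝ) : ℂ) by push_cast; norm_num, Complex.Gamma_ofReal,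
    Real.Gamma_one_half_eq] at h
  push_cast
  linear_combination 2 * h

theorem eval_bernoulli_two (x : ℂ) :
    ((Polynomial.bernoulli 2).map (algebraMap ℚ ℂ)).eval x = x ^ 2 - x + 1 / 6 := by
  simp [Polynomial.bernoulli, Finset.sum_range_succ, bernoulli_two]
  ring

theorem eval_bernoulli_three (x : ℂ) :
    ((Polynomial.bernoulli 3).map (algebraMap ℚ ℂ)).eval x = x ^ 3 - 3 / 2 * x ^ 2 + 1 / 2 * x := by
  have h3 : bernoulli 3 = 0 := bernoulli_eq_zero_of_odd (by decide) (by norm_num)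
  simp [Polynomial.bernoulli, Finset.sum_range_succ, bernoulli_two, Nat.choose, h3]
  ring

theorem tsum_pnat_cpow_pos {f : ℕ → ℝ} (hf1 : f 1 = 1) (hf : ∀ n, |f n| ≤ 1) {k : ℕ} (hk : 2 ≤ k) :
    ∃ r : ℝ, 0 < r ∧ ∑' n : ℕ+, (f n : ℂ) * (n : ℂ) ^ (-(k : ℂ)) = r := by
  refine ⟨∑' n : ℕ+, f n * ((n : ℝ) ^ k)⁻¹, ?_, ?_⟩
  · have h2 : HasSum (fun n : ℕ+ => 1 / ((n : ℕ) : ℝ) ^ 2) (π ^ 2 / 6) := by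
      refine (PNat.coe_injective.hasSum_iff (f := fun n : ℕ => 1 / (n : ℝ) ^ 2) ?_).2 hasSum_zeta_two
      · intro n hn
        have : n = 0 := by
          by_contra h
          exact hn ⟨⟨n, Nat.pos_of_ne_zero h⟩, rfl⟩
        simp [this]
    have hle : ∀ n : ℕ+, ((n : ℝ) ^ k)⁻¹ ≤ 1 / ((n : ℕ) : ℝ) ^ 2 := fun n => by
      have : (1 : ℝ) ≤ n := by exact_mod_cast n.pos
      rw [one_div]
      gcongr
    have hs : Summable fun n : ℕ+ => f n * ((n : ℝ) ^ k)⁻¹ := by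
      refine Summable.of_norm_bounded h2.summable fun n => ?_
      rw [norm_mul, Real.norm_eq_abs, Real.norm_of_nonneg (by positivity)]
      exact (mul_le_of_le_one_left (by positivity) (hf n)).trans (hle n)
    have hadd := hs.hasSum.add h2
    have h1 := hadd.summable.le_tsum (1 : ℕ+) fun n _ => by
      have := abs_le.1 (hf n)
      have hn : 0 ≤ ((n : ℝ) ^ k)⁻¹ := by positivity
      nlinarith [hle n]
    rw [hadd.tsum_eq] at h1
    simp [hf1] at h1
    nlinarith [pi_lt_d2, pi_pos]
  · rw [ofReal_tsum]
    refine tsum_congr fun n => ?_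
    rw [cpow_neg, cpow_natCast]
    push_cast
    rfl

end

section

open Real Complex MeasureTheory Set

theorem TwistedTheta.integral_mul_exp_neg {g : ℝ → ℝ} {W : ℝ} (h : TwistedTheta g W) (σ : ℝ) :
    ∫ p, g p * rexp (-σ * p) = W * ∫ p, g p * rexp ((σ + 1 / 2) * p) := by
  rw [← integral_const_mul, ← integral_neg_eq_self]
  refine integral_congr_ae (Filter.Eventually.of_forall fun p => ?_)
  simp only
  rw [h.symm, show (σ + 1 / 2) * p = p / 2 + -σ * -p by ring, Real.exp_add]
  ring

theorem ofReal_integral_mul_exp (g : ℝ → ℝ) (σ : ℝ) :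
    ((∫ p, g p * rexp (σ / 2 * p) : ℝ) : ℂ) = ∫ p : ℝ, (g p : ℂ) * cexp (σ / 2 * p) := by
  rw [← integral_complex_ofReal]
  push_cast
  rfl

namespace DirichletCharacter

variable {q : ℕ} {χ : DirichletCharacter ℂ q}

theorem exists_signCondition (hquad : χ.IsQuadratic) (hq : 3 ≤ q) (hq' : q < 38) :
    ∃ c : ℕ → ℤ, (∀ a, (c a : ℂ) = χ a) ∧ SignCondition q c := by
  have hex : ∀ a : ℕ, ∃ z : ℤ, (z : ℂ) = χ a := fun a => by
    rcases hquad a with h | h | h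
    · exact ⟨0, by simp [h]⟩
    · exact ⟨1, by simp [h]⟩
    · exact ⟨-1, by simp [h]⟩
  choose c hc using hex
  have hinj : Function.Injective ((↑) : ℤ → ℂ) := Int.cast_injective
  refine ⟨c, hc, signCondition (hinj ?_) (fun a b => hinj ?_) (fun a => hinj ?_) (fun a ha => ?_)
    (fun a ha => hinj ?_) hq hq'⟩
  · simp [hc]
  · simp [hc]
  · simp [hc]
  · have hu : IsUnit (a : ZMod q) := (ZMod.isUnit_iff_coprime a q).2 ha
    rcases hquad a with h | h | h
    · exact absurd h (hu.map χ).ne_zero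
    · exact .inl (hinj (by simp [hc, h]))
    · exact .inr (hinj (by simp [hc, h]))
  · rw [hc, Int.cast_zero]
    exact χ.map_nonunit fun hu => ha ((ZMod.isUnit_iff_coprime a q).1 hu)

variable [NeZero q]

theorem exists_sum_bernoulli_pos (hquad : χ.IsQuadratic) (hprim : χ.IsPrimitive) (hq : 3 ≤ q)
    (hq' : q < 38) {κ : ℕ} (hκ : κ = 0 ∨ κ = 1) (hpar : χ (-1) = (-1) ^ κ) :
    ∃ S : ℝ, 0 < S ∧ ∑ a ∈ Finset.range q,
      χ a * ((Polynomial.bernoulli (κ + 2)).map (algebraMap ℚ ℂ)).eval ((a / q : ℝ) : ℂ) = S := by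
  obtain ⟨c, hc, hS⟩ := exists_signCondition hquad hq hq'
  have hq0 : (0 : ℝ) < q := Nat.cast_pos.2 (NeZero.pos q)
  have hqc : (q : ℂ) ≠ 0 := Nat.cast_ne_zero.2 (NeZero.ne q)
  have hcpar : (c (q - 1) : ℂ) = (-1) ^ κ := by
    rw [hc, ← hpar, Nat.cast_sub (by omega)]
    simp
  have hsum : ∀ P, weightedSum q c P = ∑ a ∈ Finset.range q, c a * P a := fun P => rfl
  rcases hS with ⟨d, hd, hdq, h⟩ | ⟨h1, h⟩ | ⟨h1, h⟩
  · obtain ⟨a, ha, hg, hm, hne⟩ := hprim.exists_ne_one (List.mem_range.1 hd) hdq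
    exact absurd (by rw [← hc, h a (List.mem_range.2 ha) hg hm]; simp) hne
  · rcases hκ with rfl | rfl
    · refine ⟨weightedSum q c (fun a => 6 * a ^ 2 - 6 * a * q + q ^ 2) / (6 * q ^ 2),
        div_pos (by exact_mod_cast h) (by positivity), ?_⟩
      rw [hsum]
      push_cast
      rw [Finset.sum_div]
      refine Finset.sum_congr rfl fun a _ => ?_
      rw [eval_bernoulli_two, hc]
      field_simp
    · rw [h1] at hcpar
      norm_num at hcpar
  · rcases hκ with rfl | rfl
    · rw [h1] at hcpar
      norm_num at hcpar
    · refine ⟨weightedSum q c (fun a => 2 * a ^ 3 - 3 * a ^ 2 * q + a * q ^ 2) / (2 * q ^ 3),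
        div_pos (by exact_mod_cast h) (by positivity), ?_⟩
      rw [hsum]
      push_cast
      rw [Finset.sum_div]
      refine Finset.sum_congr rfl fun a _ => ?_
      rw [eval_bernoulli_three, hc]
      field_simp

/-- The root number of a real primitive character of small conductor is `1`. -/
theorem sign_eq_one (hquad : χ.IsQuadratic) (hprim : χ.IsPrimitive) (hχ : χ ≠ 1) (hq : 3 ≤ q)
    (hq' : q < 38) {κ : ℕ} (hκ : κ = 0 ∨ κ = 1) (hpar : χ (-1) = (-1) ^ κ) {W : ℝ}
    (h : TwistedTheta (twistedThetaSeries (realCoeff χ) κ √q) W) : W = 1 := by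
  have hq0 : (0 : ℝ) < q := Nat.cast_pos.2 (NeZero.pos q)
  have hQ : 0 < √(q : ℝ) := Real.sqrt_pos.2 hq0
  set g := twistedThetaSeries (realCoeff χ) κ √q with hg
  obtain ⟨r, hr, hrs⟩ := tsum_pnat_cpow_pos (f := realCoeff χ) realCoeff_one (abs_realCoeff_le hquad)
    (k := κ + 2) (by omega)
  obtain ⟨S, hS, hSs⟩ := exists_sum_bernoulli_pos hquad hprim hq hq' hκ hpar
  have hM1 : 0 < ∫ p, g p * rexp (((κ + 2 : ℕ) : ℝ) / 2 * p) := by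
    have := integral_twistedThetaSeries_mul_cexp (f := realCoeff χ) (κ := κ) (abs_realCoeff_le hquad) hQ
      (s := (κ + 2 : ℕ)) (by
        rw [natCast_re]
        push_cast
        linarith [Nat.cast_nonneg (α := ℝ) κ])
    rw [hrs, show (((κ + 2 : ℕ) : ℂ) + κ) / 2 = ((κ + 1 : ℕ) : ℂ) by push_cast; ring, cpow_natCast,
      Nat.cast_succ κ, Complex.Gamma_nat_eq_factorial] at this
    have h2 := ofReal_integral_mul_exp g ((κ + 2 : ℕ) : ℝ)
    rw [ofReal_natCast, this, Real.sq_sqrt hq0.le] at h2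
    have h3 : ∫ p, g p * rexp (((κ + 2 : ℕ) : ℝ) / 2 * p) = (q / π) ^ (κ + 1) * κ.factorial * r := by
      exact_mod_cast h2
    rw [h3]
    have := pi_pos
    positivity
  have hM2 : 0 < ∫ p, g p * rexp (-((κ + 1 : ℕ) : ℝ) / 2 * p) := by
    have := LFunction_eq_integral hquad hχ h (-((κ + 1 : ℕ) : ℂ))
    rw [LFunction_neg_nat (by omega), hSs, ← hg] at this
    have h2 := ofReal_integral_mul_exp g (-((κ + 1 : ℕ) : ℝ))
    rw [ofReal_neg, ofReal_natCast] at h2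
    rw [← h2, show (-((κ + 1 : ℕ) : ℂ) + κ) / 2 = -1 / 2 by push_cast; ring, Complex.Gamma_neg_half,
      show (-(-1 / 2) : ℂ) = ((1 / 2 : ℝ) : ℂ) by push_cast; ring, ← ofReal_cpow (by positivity)] at this
    have h3 : (∫ p, g p * rexp (-((κ + 1 : ℕ) : ℝ) / 2 * p)) * ((q / π) ^ (1 / 2 : ℝ) * (-2 * √π)⁻¹) =
        -((q : ℝ) ^ (κ + 1) / ((κ + 1 : ℕ) + 1)) * S := by
      generalize (∫ p, g p * rexp (-((κ + 1 : ℕ) : ℝ) / 2 * p)) = M at this ⊢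
      generalize ((q / π : ℝ) ^ (1 / 2 : ℝ)) = P at this ⊢
      rw [← ofReal_inj]
      push_cast at this ⊢
      exact this
    have hpi := Real.sqrt_pos.2 pi_pos
    have hneg : (q / π) ^ (1 / 2 : ℝ) * (-2 * √π)⁻¹ < 0 := by
      refine mul_neg_of_pos_of_neg (by positivity) (inv_lt_zero.2 (by linarith))
    by_contra! hle
    have h4 := mul_nonneg_of_nonpos_of_nonpos hle hneg.le
    rw [h3] at h4
    have : 0 < (q : ℝ) ^ (κ + 1) / ((κ + 1 : ℕ) + 1) * S := by positivity
    linarith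
  have hrel := h.integral_mul_exp_neg (((κ + 1 : ℕ) : ℝ) / 2)
  rw [show ((κ + 1 : ℕ) : ℝ) / 2 + 1 / 2 = ((κ + 2 : ℕ) : ℝ) / 2 by push_cast; ring, ← neg_div] at hrel
  rcases h.sign with h1 | h1
  · exact h1
  · rw [h1] at hrel
    linarith

/-- The bound for zeros of the L-function of a real primitive character. -/
theorem zero_le_of_isPrimitive (hquad : χ.IsQuadratic) (hprim : χ.IsPrimitive) (hχ : χ ≠ 1)
    (hq : 3 ≤ q) {β : ℝ} (hβ0 : 0 < β) (hβ1 : β < 1) (hz : χ.LFunction (β : ℂ) = 0) :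
    β ≤ 1 - 40 / (√q * Real.log q ^ 2) := by
  have hq0 : (0 : ℝ) < q := Nat.cast_pos.2 (NeZero.pos q)
  obtain ⟨κ, hκ, hpar⟩ : ∃ κ : ℕ, (κ = 0 ∨ κ = 1) ∧ χ (-1) = (-1) ^ κ := by
    rcases χ.even_or_odd with h | h
    · exact ⟨0, .inl rfl, by simpa [DirichletCharacter.Even] using h⟩
    · exact ⟨1, .inr rfl, by simpa [DirichletCharacter.Odd] using h⟩
  obtain ⟨W, hW⟩ := exists_twistedTheta hquad hprim (by omega) hκ hpar
  refine hW.zero_le realCoeff_one (realCoeff_mul hquad) (realCoeff_values hquad) hκ hq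
    (fun hlt => sign_eq_one hquad hprim hχ hq hlt hκ hpar hW) hβ0 hβ1 ?_
  have hI := LFunction_eq_integral hquad hχ hW β
  have hqp : ((q / π : ℝ) : ℂ) ≠ 0 := ofReal_ne_zero.2 (div_pos hq0 pi_pos).ne'
  have hG : Complex.Gamma ((β + κ) / 2) ≠ 0 := by
    refine Complex.Gamma_ne_zero_of_re_pos ?_
    simp
    positivity
  rw [hz, ← ofReal_integral_mul_exp, mul_eq_zero, or_iff_left] at hI
  · exact_mod_cast hI
  · exact mul_ne_zero (fun h => hqp ((cpow_eq_zero_iff _ _).1 h).1) (inv_ne_zero hG)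

end DirichletCharacter

end

section

open Real Complex

namespace DirichletCharacter

variable {q : ℕ}

theorem three_le_of_ne_one [NeZero q] {χ : DirichletCharacter ℂ q} (hχ : χ ≠ 1) : 3 ≤ q := by
  by_contra! h
  refine hχ (MulChar.ext fun a => ?_)
  have hsub : Subsingleton (ZMod q)ˣ := by
    have := NeZero.pos q
    interval_cases q <;> exact ⟨by decide⟩
  rw [Subsingleton.elim a 1]
  simp

theorem isQuadratic_primitiveCharacter [NeZero q] {χ : DirichletCharacter ℂ q} (hquad : χ.IsQuadratic) :
    χ.primitiveCharacter.IsQuadratic := by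
  rw [MulChar.isQuadratic_iff_sq_eq_one] at hquad ⊢
  apply changeLevel_injective χ.conductor_dvd_level
  rw [map_pow, changeLevel_primitiveCharacter, hquad, map_one]

theorem primitiveCharacter_ne_one {χ : DirichletCharacter ℂ q} (hχ : χ ≠ 1) :
    χ.primitiveCharacter ≠ 1 := by
  intro h
  rw [← changeLevel_primitiveCharacter χ, h, map_one] at hχ
  exact hχ rfl

/-- The L-function of a nontrivial character and that of the primitive character inducing it have
the same zeros in the right half plane. -/
theorem LFunction_primitiveCharacter_eq_zero [NeZero q] {χ : DirichletCharacter ℂ q}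
    [NeZero χ.conductor] (hχ : χ ≠ 1) {s : ℂ} (hs : 0 < s.re) (hz : χ.LFunction s = 0) :
    χ.primitiveCharacter.LFunction s = 0 := by
  rw [← changeLevel_primitiveCharacter χ, LFunction_changeLevel χ.conductor_dvd_level _
    (.inl (primitiveCharacter_ne_one hχ)), mul_eq_zero] at hz
  refine hz.resolve_right (Finset.prod_ne_zero_iff.2 fun p hp h => ?_)
  have hp' := Nat.prime_of_mem_primeFactors hp
  have h1 : ‖χ.primitiveCharacter p * (p : ℂ) ^ (-s)‖ < 1 := by
    rw [norm_mul, norm_natCast_cpow_of_pos hp'.pos]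
    have h2 : (p : ℝ) ^ (-s).re < 1 :=
      Real.rpow_lt_one_of_one_lt_of_neg (by exact_mod_cast hp'.one_lt) (by simpa using hs)
    have h3 := norm_le_one χ.primitiveCharacter p
    have h4 : 0 ≤ (p : ℝ) ^ (-s).re := by positivity
    nlinarith
  rw [← sub_eq_zero.1 h] at h1
  simp at h1

end DirichletCharacter

end

/-- **Proposition 1.11.** If `χ` is a nontrivial quadratic Dirichlet character modulo `q ≥ 3`
and `β > 0` is a real zero of `L(s,χ)`, then `β ≤ 1 − 40/(√q·(log q)²)`. -/
theorem exceptional_zero_bound (q : ℕ) [NeZero q] (hq : 3 ≤ q)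
    (χ : DirichletCharacter ℂ q) (hχ : χ ≠ 1) (hquad : χ.IsQuadratic)
    (β : ℝ) (hβ : 0 < β) (hzero : χ.LFunction (β : ℂ) = 0) :
    β ≤ 1 - 40 / (Real.sqrt q * Real.log q ^ 2) := by
  have : NeZero χ.conductor := ⟨χ.conductor_ne_zero⟩
  have hχ' := DirichletCharacter.primitiveCharacter_ne_one hχ
  have hd := DirichletCharacter.three_le_of_ne_one hχ'
  have hβ1 : β < 1 := by
    by_contra! h
    exact χ.LFunction_ne_zero_of_one_le_re (.inl hχ) (by simpa using h) hzero
  have hle := DirichletCharacter.zero_le_of_isPrimitive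
    (DirichletCharacter.isQuadratic_primitiveCharacter hquad)
    χ.primitiveCharacter_isPrimitive hχ' hd hβ hβ1
    (DirichletCharacter.LFunction_primitiveCharacter_eq_zero hχ (by simpa using hβ) hzero)
  refine hle.trans (sub_le_sub_left ?_ _)
  have h3 : (3 : ℝ) ≤ χ.conductor := by exact_mod_cast hd
  have hdq : (χ.conductor : ℝ) ≤ q :=
    Nat.cast_le.2 (Nat.le_of_dvd (NeZero.pos q) χ.conductor_dvd_level)
  have hlog : 0 < Real.log χ.conductor := Real.log_pos (by linarith)
  gcongr
end

section
/- For every real number x ≥ 190, one has Li(x) > x/log x + x/(log x)² + 2x/(log x)³ + 6x/(log x)⁴. -/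
open Real Set MeasureTheory Finset

theorem sub_le_integral_one_div_log {g g' : ℝ → ℝ} {a b : ℝ} (ha : 1 < a) (hab : a ≤ b)
    (hderiv : ∀ t, 1 < t → HasDerivAt g (g' t) t) (hle : ∀ t, 1 < t → g' t ≤ 1 / log t) :
    g b - g a ≤ ∫ t in a..b, 1 / log t := by
  refine intervalIntegral.sub_le_integral_of_hasDeriv_right_of_le hab (g' := g')
    (fun t ht => (hderiv t (ha.trans_le ht.1)).continuousAt.continuousWithinAt)
    (fun t ht => (hderiv t (ha.trans ht.1)).hasDerivWithinAt) ?_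
    (fun t ht => hle t (ha.trans ht.1))
  refine ContinuousOn.integrableOn_Icc fun t ht => ContinuousAt.continuousWithinAt ?_
  have h1 : 1 < t := ha.trans_le ht.1
  exact continuousAt_const.div (continuousAt_log (by linarith)) (log_pos h1).ne'

theorem intervalIntegrable_one_div_log {a b : ℝ} (ha : 1 < a) (hb : 1 < b) :
    IntervalIntegrable (fun t => 1 / log t) volume a b := by
  refine ContinuousOn.intervalIntegrable fun t ht => ContinuousAt.continuousWithinAt ?_
  have h1 : 1 < t := (lt_min ha hb).trans_le ht.1
  exact continuousAt_const.div (continuousAt_log (by linarith)) (log_pos h1).ne'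

theorem hasDerivAt_Li_asymptotic {t : ℝ} (ht : 1 < t) :
    HasDerivAt (fun x => x / log x + x / log x ^ 2 + 2 * x / log x ^ 3 + 6 * x / log x ^ 4)
      (1 / log t - 24 / log t ^ 5) t := by
  have h0 : t ≠ 0 := by linarith
  have hl : log t ≠ 0 := (log_pos ht).ne'
  have hd := hasDerivAt_log h0
  have hi := hasDerivAt_id' t
  convert! (((hi.div hd hl).add (hi.div (hd.fun_pow 2) (pow_ne_zero 2 hl))).add
    ((hi.const_mul 2).div (hd.fun_pow 3) (pow_ne_zero 3 hl))).add
    ((hi.const_mul 6).div (hd.fun_pow 4) (pow_ne_zero 4 hl)) using 1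
  field_simp
  ring

/-- Truncation at order `n` of the power series expansion
`∫ exp u / u = log u + ∑ uᵏ / (k * k!)`. -/
noncomputable def expIntegralPartialSum (n : ℕ) (u : ℝ) : ℝ :=
  log u + ∑ k ∈ range n, u ^ (k + 1) / ((k + 1) * (k + 1).factorial)

theorem hasDerivAt_expIntegralPartialSum_log (n : ℕ) {t : ℝ} (ht : 1 < t) :
    HasDerivAt (fun x => expIntegralPartialSum n (log x))
      ((∑ k ∈ range (n + 1), log t ^ k / k.factorial) / (t * log t)) t := by
  have h0 : t ≠ 0 := by linarith
  have hl : log t ≠ 0 := (log_pos ht).ne'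
  have hd := hasDerivAt_log h0
  have hs := HasDerivAt.fun_sum (u := range n) fun k _ =>
    (hd.fun_pow (k + 1)).div_const (((k : ℝ) + 1) * (k + 1).factorial)
  convert! (hd.log hl).add hs using 1
  rw [sum_range_succ', add_div, sum_div, add_comm]
  congr 1
  · simp
    field_simp
  · refine sum_congr rfl fun k _ => ?_
    have : ((k : ℝ) + 1) ≠ 0 := by positivity
    push_cast
    field_simp
    simp [pow_succ, mul_comm]

theorem expIntegralPartialSum_sub_le (n : ℕ) {a b : ℝ} (ha : 1 < a) (hab : a ≤ b) :
    expIntegralPartialSum n (log b) - expIntegralPartialSum n (log a)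
      ≤ ∫ t in a..b, 1 / log t := by
  refine sub_le_integral_one_div_log (g := fun x => expIntegralPartialSum n (log x)) ha hab
    (fun t ht => hasDerivAt_expIntegralPartialSum_log n ht) fun t ht => ?_
  have hl : 0 < log t := log_pos ht
  have h0 : 0 < t := by linarith
  have h := sum_le_exp_of_nonneg hl.le (n + 1)
  rw [exp_log h0] at h
  rw [div_le_div_iff₀ (by positivity) hl, one_mul]
  exact mul_le_mul_of_nonneg_right h hl.le

theorem log_190_gt : 5.24702 < log 190 := by
  have h := sum_range_le_log_div (x := 1 / 37) (by norm_num) (by norm_num) 2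
  norm_num [sum_range_succ] at h
  have e : log 190 = 2 * log 2 + 2 * log 3 + log 5 + log (19 / 18) := by
    rw [show (190 : ℝ) = 2 ^ 2 * 3 ^ 2 * 5 * (19 / 18) by norm_num,
      log_mul (by norm_num) (by norm_num), log_mul (by norm_num) (by norm_num),
      log_mul (by norm_num) (by norm_num), log_pow, log_pow]
    norm_num
  linarith [log_two_gt_d9, log_three_gt_d9, log_five_gt_d9]

theorem log_log_190_sub_log_log_two_gt : 2.024 < log (log 190) - log (log 2) := by
  have h2 : 0 < log 2 := log_pos (by norm_num)
  have hL := log_190_gt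
  rw [← log_div (by linarith) h2.ne']
  have hq : 3 * 5 / 2 * 1.0093 ≤ log 190 / log 2 := by
    rw [le_div_iff₀ h2]
    linarith [log_two_lt_d9]
  have hm := log_le_log (by norm_num) hq
  rw [log_mul (by norm_num) (by norm_num), log_div (by norm_num) (by norm_num),
    log_mul (by norm_num) (by norm_num)] at hm
  have h1 := one_sub_inv_le_log_of_pos (x := 1.0093) (by norm_num)
  norm_num at h1 hm
  linarith [log_two_lt_d9, log_three_gt_d9, log_five_gt_d9]

theorem Li_asymptotic_190_lt :
    190 / log 190 + 190 / log 190 ^ 2 + 2 * 190 / log 190 ^ 3 + 6 * 190 / log 190 ^ 4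
      < expIntegralPartialSum 18 (log 190) - expIntegralPartialSum 18 (log 2) := by
  have hL := log_190_gt
  have h2 : 0 < log 2 := log_pos (by norm_num)
  have hG : 190 / log 190 + 190 / log 190 ^ 2 + 2 * 190 / log 190 ^ 3 + 6 * 190 / log 190 ^ 4
      ≤ 190 / 5.24702 + 190 / 5.24702 ^ 2 + 2 * 190 / 5.24702 ^ 3 + 6 * 190 / 5.24702 ^ 4 := by
    gcongr
  have hF : ∑ k ∈ range 18, (5.24702 : ℝ) ^ (k + 1) / ((k + 1) * (k + 1).factorial)
      ≤ ∑ k ∈ range 18, log 190 ^ (k + 1) / ((k + 1) * (k + 1).factorial) := by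
    gcongr
  have hf : ∑ k ∈ range 18, log 2 ^ (k + 1) / ((k + 1) * (k + 1).factorial)
      ≤ ∑ k ∈ range 18, (0.6931471808 : ℝ) ^ (k + 1) / ((k + 1) * (k + 1).factorial) := by
    gcongr
    exact log_two_lt_d9.le
  have hnum : (190 / 5.24702 + 190 / 5.24702 ^ 2 + 2 * 190 / 5.24702 ^ 3
        + 6 * 190 / 5.24702 ^ 4 : ℝ)
      < 2.024 + ∑ k ∈ range 18, (5.24702 : ℝ) ^ (k + 1) / ((k + 1) * (k + 1).factorial)
        - ∑ k ∈ range 18, (0.6931471808 : ℝ) ^ (k + 1) / ((k + 1) * (k + 1).factorial) := by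
    norm_num [sum_range_succ, Nat.factorial]
  unfold expIntegralPartialSum
  linarith [log_log_190_sub_log_log_two_gt]

theorem Li_lower_bound (x : ℝ) (hx : 190 ≤ x) :
    x / Real.log x + x / Real.log x ^ 2 + 2 * x / Real.log x ^ 3 + 6 * x / Real.log x ^ 4
      < Li x := by
  have hsplit : Li x = (∫ t in (2 : ℝ)..190, 1 / log t) + ∫ t in (190 : ℝ)..x, 1 / log t :=
    (intervalIntegral.integral_add_adjacent_intervals
      (intervalIntegrable_one_div_log (by norm_num) (by norm_num))
      (intervalIntegrable_one_div_log (by norm_num) (by linarith))).symm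
  have hbase := expIntegralPartialSum_sub_le 18 (a := 2) (b := 190) (by norm_num) (by norm_num)
  have htail := sub_le_integral_one_div_log (by norm_num) hx
    (fun t ht => hasDerivAt_Li_asymptotic ht) fun t ht =>
      sub_le_self _ (div_nonneg (by norm_num) (pow_nonneg (log_pos ht).le 5))
  have hnum := Li_asymptotic_190_lt
  linarith
end
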